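/- arXiv:2001.02945 — 3 statements merged into one kernel-verified Lean document; each statement's English description precedes it below -/
import Mathlib

section
/- For every positive integer m, let G_m be the presented group on generators ρ0, ρ1, ρ2 with relation set {ρ0^2, ρ1^2, ρ2^2, (ρ0ρ1)^6, (ρ1ρ2)^6, (ρ0ρ2)^2, (ρ2ρ1ρ0ρ1)^3, ρ1(ρ0ρ2ρ1)^{4m}ρ1, (ρ2ρ1ρ0)^{4m}, ρ1(ρ2ρ1ρ0)^{4m}ρ1}. Then G_m has order 192·m^3, G_m is solvable, in G_m the images of ρ0, ρ1, ρ2 and ρ0ρ2 have order exactly 2, the images of ρ0ρ1 and ρ1ρ2 have order exactly 6, and the triple of images of (ρ0, ρ1, ρ2) satisfies the intersection property in G_m. -/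
namespace Stmt12

def r0 : FreeGroup (Fin 3) := FreeGroup.of 0
def r1 : FreeGroup (Fin 3) := FreeGroup.of 1
def r2 : FreeGroup (Fin 3) := FreeGroup.of 2

/-- The relations of the presented group `G_m` of Theorem 5.1. -/
def rels (m : ℕ) : Set (FreeGroup (Fin 3)) :=
  {r0 ^ 2, r1 ^ 2, r2 ^ 2, (r0 * r1) ^ 6, (r1 * r2) ^ 6, (r0 * r2) ^ 2,
   (r2 * r1 * r0 * r1) ^ 3,
   r1 * (r0 * r2 * r1) ^ (4 * m) * r1,
   (r2 * r1 * r0) ^ (4 * m),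
   r1 * (r2 * r1 * r0) ^ (4 * m) * r1}

/-- The image of the `i`-th generator in `G_m`. -/
def g (m : ℕ) (i : Fin 3) : PresentedGroup (rels m) := PresentedGroup.of i

/-- The intersection property for a triple of elements. -/
def InterProp {G : Type*} [Group G] (ρ : Fin 3 → G) : Prop :=
  ∀ I J : Set (Fin 3),
    Subgroup.closure (ρ '' I) ⊓ Subgroup.closure (ρ '' J) =
      Subgroup.closure (ρ '' (I ∩ J))

/-!
The elements `ρ₀`, `ρ₁ρ₀ρ₁`, `ρ₂`, `ρ₁ρ₂ρ₁` satisfy the relations of the affine Coxeter group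
`Ã₃ = ℤ³ ⋊ S₄`, and `ρ₁` acts on them as an automorphism of the diagram. The square of the Petrie
word `ρ₁ρ₀ρ₂` lies in this subgroup, and its fourth power is a translation. Together with its
conjugates, the relation that this translation has order dividing `m` cuts the translation lattice
down to a quotient of order dividing `4 * m ^ 3`. Hence `G_m` is solvable of order dividing
`4 * m ^ 3 * 24 * 2`.

This bound is attained because `G_m` maps onto `S₄ × {±1}` and acts by affine maps on
`(ℤ / 8m)³`, where the translations in the kernel move the origin to `4 * m ^ 3` different points.
Already modulo `8` this action has three points behaving like the vertices of a fundamental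
simplex, and these detect both the orders of the products `ρᵢρⱼ` and the intersection property.
-/

section Polycyclic

variable {G : Type*} [Group G]

theorem semiconjBy_symm_of_involution {x s t : G} (hx : x * x = 1) (h : SemiconjBy x s t) :
    SemiconjBy x t s := by
  simpa only [inv_eq_of_mul_eq_one_left hx] using h.inv_symm_left

theorem semiconjBy_right_unique {x s t t' : G} (h : SemiconjBy x s t) (h' : SemiconjBy x s t') :
    t = t' :=
  mul_right_cancel (h.eq.symm.trans h'.eq)

theorem commute_of_semiconjBy {x s t s' t' : G} (hs : SemiconjBy x s s') (ht : SemiconjBy x t t')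
    (h : Commute s t) : Commute s' t' :=
  semiconjBy_right_unique (hs.mul_right ht) (h.eq ▸ ht.mul_right hs)

theorem mem_normalizer_closure_of_involution {x : G} {S : Set G} (hx : x * x = 1)
    (hS : ∀ s ∈ S, ∃ t ∈ Subgroup.closure S, SemiconjBy x s t) :
    x ∈ Subgroup.normalizer (Subgroup.closure S : Set G) := by
  have hconj : Subgroup.closure S ≤ (Subgroup.closure S).comap (MulAut.conj x).toMonoidHom := by
    rw [Subgroup.closure_le]
    intro s hs
    obtain ⟨t, ht, hst⟩ := hS s hs
    rw [← mul_inv_eq_of_eq_mul hst.eq] at ht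
    exact ht
  refine Subgroup.mem_normalizer_iff.mpr fun s ↦ ⟨fun hs ↦ hconj hs, fun hs ↦ ?_⟩
  have hinv : x * (x * s * x⁻¹) * x⁻¹ = s := by
    calc x * (x * s * x⁻¹) * x⁻¹ = x * x * s * (x * x)⁻¹ := by group
      _ = s := by simp [hx]
  exact hinv ▸ hconj hs

theorem mem_normalizer_closure_of_commute {x : G} {S : Set G} (h : ∀ s ∈ S, Commute s x) :
    x ∈ Subgroup.normalizer (Subgroup.closure S : Set G) :=
  Subgroup.normalizer_le_normalizer_closure S <|
    Subgroup.centralizer_le_normalizer S <| Subgroup.mem_centralizer_iff.mpr h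

/-- The subgroup `H` is solvable and its cardinality, which is `0` if `H` is infinite, divides `n`:
the bound that is inherited by extensions and by subgroups. -/
structure SolvableOfCardDvd (H : Subgroup G) (n : ℕ) : Prop where
  solvable : Group.IsSolvable H
  card_dvd : Nat.card H ∣ n

namespace SolvableOfCardDvd

variable {H K : Subgroup G} {n k : ℕ}

theorem closure_singleton {x : G} (hx : x ^ k = 1) :
    SolvableOfCardDvd (Subgroup.closure {x}) k := by
  rw [← Subgroup.zpowers_eq_closure]
  exact ⟨Group.isSolvable_of_comm IsMulCommutative.is_comm.comm,
    Nat.card_zpowers x ▸ orderOf_dvd_of_pow_eq_one hx⟩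

theorem mono (hK : SolvableOfCardDvd K n) (hle : H ≤ K) : SolvableOfCardDvd H n :=
  have := hK.solvable
  ⟨Group.isSolvable_of_isSolvable_injective (Subgroup.inclusion_injective hle),
    (Subgroup.card_dvd_of_le hle).trans hK.card_dvd⟩

theorem sup (hH : SolvableOfCardDvd H n) (hK : SolvableOfCardDvd K k)
    (hnorm : K ≤ Subgroup.normalizer (H : Set G)) : SolvableOfCardDvd (K ⊔ H) (n * k) := by
  have := hH.solvable
  have := hK.solvable
  have := Subgroup.normal_subgroupOf_of_le_normalizer hnorm
  have := Subgroup.normal_subgroupOf_sup_of_le_normalizer hnorm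
  let e : (H.subgroupOf (K ⊔ H)) ≃* H := Subgroup.subgroupOfEquivOfLe le_sup_right
  let e' := QuotientGroup.quotientInfEquivProdNormalizerQuotient K H hnorm
  constructor
  · exact (Group.isSolvable_iff_subgroup_quotient (H.subgroupOf (K ⊔ H))).mpr
      ⟨Group.isSolvable_of_isSolvable_injective (f := e.toMonoidHom) e.injective,
        Group.isSolvable_of_surjective (f := e'.toMonoidHom) e'.surjective⟩
  · rw [← Subgroup.card_mul_index (H.subgroupOf (K ⊔ H)), Nat.card_congr e.toEquiv,
      Subgroup.index, ← Nat.card_congr e'.toEquiv]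
    exact mul_dvd_mul hH.card_dvd ((Subgroup.card_quotient_dvd_card _).trans hK.card_dvd)

theorem closure_insert {S : Set G} {x : G} (hS : SolvableOfCardDvd (Subgroup.closure S) n)
    (hx : x ∈ Subgroup.normalizer (Subgroup.closure S : Set G)) (hk : x ^ k = 1) :
    SolvableOfCardDvd (Subgroup.closure (insert x S)) (n * k) := by
  rw [← Set.singleton_union, Subgroup.closure_union]
  refine hS.sup (closure_singleton hk) ((Subgroup.closure_le _).mpr ?_)
  exact Set.singleton_subset_iff.mpr hx

-- The dihedral group `⟨x, y⟩` is `⟨xy⟩` extended by `x`.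
theorem closure_pair_of_involutions {x y : G} (hx : x * x = 1) (hy : y * y = 1)
    (hk : (x * y) ^ k = 1) : SolvableOfCardDvd (Subgroup.closure {x, y}) (k * 2) := by
  have hnorm : x ∈ Subgroup.normalizer (Subgroup.closure {x * y} : Set G) := by
    refine mem_normalizer_closure_of_involution hx ?_
    rintro _ rfl
    refine ⟨(x * y)⁻¹, inv_mem (Subgroup.mem_closure_of_mem rfl), ?_⟩
    rw [SemiconjBy, mul_inv_rev, inv_eq_of_mul_eq_one_left hx, inv_eq_of_mul_eq_one_left hy,
      ← mul_assoc, hx, one_mul, mul_assoc, hx, mul_one]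
  refine ((closure_singleton hk).closure_insert hnorm (k := 2) (by rw [sq, hx])).mono
    ((Subgroup.closure_le _).mpr ?_)
  have hmem : x ∈ Subgroup.closure {x, x * y} := Subgroup.mem_closure_of_mem (by simp)
  rintro _ (rfl | rfl)
  · exact hmem
  · exact (Subgroup.mul_mem_cancel_left _ hmem).mp (Subgroup.mem_closure_of_mem (by simp))

-- All three generators have order dividing `2 * m`, but `v * w * u⁻¹` has order dividing `m`, which
-- saves a factor of `2`.
theorem closure_triple_of_pow_relations {u v w : G} {m : ℕ} (huv : Commute u v)
    (huw : Commute u w) (hvw : Commute v w) (h₁₃ : u ^ m * w ^ m = v ^ m)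
    (h₂₃ : v ^ m * w ^ m = u ^ m) (h₁₂ : u ^ m * v ^ m = w ^ m) :
    SolvableOfCardDvd (Subgroup.closure {u, v, w}) (2 * m * (2 * m) * m) := by
  have hu : u ^ (2 * m) = 1 := by
    rwa [← h₁₂, ← mul_assoc, mul_eq_right, ← pow_add, ← two_mul] at h₁₃
  have hv : v ^ (2 * m) = 1 := by
    rwa [← h₁₂, (huv.pow_pow m m).eq, ← mul_assoc, mul_eq_right, ← pow_add, ← two_mul] at h₂₃
  have hx : (v * w * u⁻¹) ^ m = 1 := by
    rw [(huv.symm.mul_left huw.symm).inv_right.mul_pow, hvw.mul_pow, h₂₃, inv_pow, mul_inv_cancel]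
  have hx' : Commute u (v * w * u⁻¹) :=
    (huv.mul_right huw).mul_right (Commute.refl u).inv_right
  have hx'' : Commute v (v * w * u⁻¹) :=
    ((Commute.refl v).mul_right hvw).mul_right huv.symm.inv_right
  have hbound := ((SolvableOfCardDvd.closure_singleton hu).closure_insert (x := v)
    (mem_normalizer_closure_of_commute (by rintro _ rfl; exact huv)) hv).closure_insert
    (mem_normalizer_closure_of_commute (by rintro _ (rfl | rfl); exacts [hx'', hx'])) hx
  have mem_u : u ∈ Subgroup.closure {v * w * u⁻¹, v, u} := Subgroup.mem_closure_of_mem (by simp)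
  have mem_v : v ∈ Subgroup.closure {v * w * u⁻¹, v, u} := Subgroup.mem_closure_of_mem (by simp)
  have mem_w : w ∈ Subgroup.closure {v * w * u⁻¹, v, u} := by
    have hw : v⁻¹ * (v * w * u⁻¹) * u = w := by group
    have mem_x := Subgroup.mem_closure_of_mem (Set.mem_insert (v * w * u⁻¹) {v, u})
    have hmem := mul_mem (mul_mem (inv_mem mem_v) mem_x) mem_u
    rwa [hw] at hmem
  refine hbound.mono ((Subgroup.closure_le _).mpr ?_)
  rintro _ (rfl | rfl | rfl)
  exacts [mem_u, mem_v, mem_w]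

end SolvableOfCardDvd

end Polycyclic

section AffineCoxeter

variable {G : Type*} [Group G] {a b c d : G}

/-- The relations of the finite Coxeter group of type `A₃` (the symmetric group `S₄` generated by
adjacent transpositions `a`, `b`, `c`). -/
structure CoxeterA3 (a b c : G) : Prop where
  a_sq : a * a = 1
  b_sq : b * b = 1
  c_sq : c * c = 1
  ac : a * c = c * a
  aba : a * b * a = b * a * b
  bcb : b * c * b = c * b * c

namespace CoxeterA3

theorem reflection_eq (h : CoxeterA3 a b c) : a * b * c * b * a = c * b * a * b * c := by
  obtain ⟨_, _, _, _, _, _⟩ := h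
  grind

theorem commute_reflection (h : CoxeterA3 a b c) : Commute b (a * b * c * b * a) := by
  obtain ⟨_, _, _, _, _, _⟩ := h
  unfold Commute SemiconjBy
  grind

-- `S₄` is the product of the Klein four-group generated by `ac` and `bacb` and the symmetric group
-- `S₃` generated by `a` and `b`.
theorem solvableOfCardDvd (h : CoxeterA3 a b c) :
    SolvableOfCardDvd (Subgroup.closure {a, b, c}) 24 := by
  obtain ⟨ha, hb, hc, hac, haba, hbcb⟩ := h
  let V : Subgroup G := Subgroup.closure {a * c, b * a * c * b}
  have hV : SolvableOfCardDvd V 4 :=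
    .closure_pair_of_involutions (k := 2) (by grind) (by grind) (by rw [sq]; grind)
  have hS : SolvableOfCardDvd (Subgroup.closure {a, b}) 6 :=
    .closure_pair_of_involutions (k := 3) ha hb (by rw [pow_three]; grind)
  have hp : a * c ∈ V := Subgroup.mem_closure_of_mem (by simp)
  have hq : b * a * c * b ∈ V := Subgroup.mem_closure_of_mem (by simp)
  have haV : a ∈ Subgroup.normalizer (V : Set G) := by
    refine mem_normalizer_closure_of_involution ha ?_
    rintro _ (rfl | rfl)
    · exact ⟨_, hp, by unfold SemiconjBy; grind⟩
    · exact ⟨_, mul_mem hq hp, by unfold SemiconjBy; grind⟩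
  have hbV : b ∈ Subgroup.normalizer (V : Set G) := by
    refine mem_normalizer_closure_of_involution hb ?_
    rintro _ (rfl | rfl)
    · exact ⟨_, hq, by unfold SemiconjBy; grind⟩
    · exact ⟨_, hp, by unfold SemiconjBy; grind⟩
  have hnorm : Subgroup.closure {a, b} ≤ Subgroup.normalizer (V : Set G) := by
    rw [Subgroup.closure_le]
    rintro _ (rfl | rfl)
    exacts [haV, hbV]
  refine (hV.sup hS hnorm).mono ((Subgroup.closure_le _).mpr ?_)
  have ha' : a ∈ Subgroup.closure {a, b} ⊔ V :=
    Subgroup.mem_sup_left (Subgroup.mem_closure_of_mem (by simp))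
  rintro _ (rfl | rfl | rfl)
  · exact ha'
  · exact Subgroup.mem_sup_left (Subgroup.mem_closure_of_mem (by simp))
  · exact (Subgroup.mul_mem_cancel_left _ ha').mp (Subgroup.mem_sup_right hp)

end CoxeterA3

/-- The relations of the affine Coxeter group of type `Ã₃`, whose diagram is the cycle
`a - b - c - d - a`. -/
structure AffineCoxeterA3 (a b c d : G) : Prop extends CoxeterA3 a b c where
  d_sq : d * d = 1
  bd : b * d = d * b
  cdc : c * d * c = d * c * d
  dad : d * a * d = a * d * a

section Translations

variable (a b c d)

/-- The translation along the coroot `e₁ - e₄` of the affine Coxeter group of type `Ã₃`: the product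
of the reflections in two parallel hyperplanes orthogonal to it, one affine and one linear. -/
def transl₁ : G := d * (a * b * c * b * a)

/-- The translation along the coroot `e₂ - e₄`. -/
def transl₂ : G := (a * d * a) * (b * c * b)

/-- The translation along the coroot `e₃ - e₄`. -/
def transl₃ : G := (b * a * d * a * b) * c

/-- The translation lattice of the affine Coxeter group of type `Ã₃`. -/
def translLattice : Subgroup G :=
  Subgroup.closure {transl₁ a b c d, transl₂ a b c d, transl₃ a b c d}

end Translations

namespace AffineCoxeterA3

theorem rotate (h : AffineCoxeterA3 a b c d) : AffineCoxeterA3 d a b c :=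
  ⟨⟨h.d_sq, h.a_sq, h.b_sq, h.bd.symm, h.dad, h.aba⟩, h.c_sq, h.ac, h.bcb, h.cdc⟩

theorem a_transl₁ (h : AffineCoxeterA3 a b c d) :
    SemiconjBy a (transl₁ a b c d) (transl₂ a b c d) := by
  have := h.a_sq
  unfold SemiconjBy transl₁ transl₂
  grind

theorem a_transl₂ (h : AffineCoxeterA3 a b c d) :
    SemiconjBy a (transl₂ a b c d) (transl₁ a b c d) :=
  semiconjBy_symm_of_involution h.a_sq h.a_transl₁

theorem a_transl₃ (h : AffineCoxeterA3 a b c d) : Commute a (transl₃ a b c d) :=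
  Commute.mul_right (h.rotate.reflection_eq ▸ h.rotate.commute_reflection) h.ac

theorem b_transl₁ (h : AffineCoxeterA3 a b c d) : Commute b (transl₁ a b c d) :=
  Commute.mul_right h.bd h.commute_reflection

theorem b_transl₂ (h : AffineCoxeterA3 a b c d) :
    SemiconjBy b (transl₂ a b c d) (transl₃ a b c d) := by
  have := h.b_sq
  unfold SemiconjBy transl₂ transl₃
  grind

theorem b_transl₃ (h : AffineCoxeterA3 a b c d) :
    SemiconjBy b (transl₃ a b c d) (transl₂ a b c d) :=
  semiconjBy_symm_of_involution h.b_sq h.b_transl₂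

theorem c_transl₃ (h : AffineCoxeterA3 a b c d) :
    SemiconjBy c (transl₃ a b c d) (transl₃ a b c d)⁻¹ := by
  have := h.a_sq
  have := h.b_sq
  have := h.c_sq
  have := h.d_sq
  unfold SemiconjBy transl₃
  rw [eq_inv_mul_iff_mul_eq]
  grind

theorem conj_c_transl₁_mul_transl₃ (h : AffineCoxeterA3 a b c d) :
    c * transl₁ a b c d * c * transl₃ a b c d = transl₁ a b c d := by
  have := h.c_sq
  calc c * transl₁ a b c d * c * transl₃ a b c d
      = c * d * c * (b * a * b) * (c * c) * (b * a * d * a * b) * c := by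
        rw [transl₁, h.reflection_eq, transl₃]
        simp only [mul_assoc]
    _ = c * d * c * d * (b * a * b) * c := by
        obtain ⟨_, _, _, _, _, _⟩ := h.rotate.toCoxeterA3
        grind
    _ = d * (c * b * a * b * c) := by
        have := h.cdc
        have := h.d_sq
        grind
    _ = transl₁ a b c d := by rw [transl₁, h.reflection_eq]

theorem transl₃_mul_conj_c_transl₁ (h : AffineCoxeterA3 a b c d) :
    transl₃ a b c d * (c * transl₁ a b c d * c) = transl₁ a b c d := by
  have := h.c_sq
  calc transl₃ a b c d * (c * transl₁ a b c d * c)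
      = (b * a * d * a * b) * (c * c) * d * c * (b * a * b) * (c * c) := by
        rw [transl₁, h.reflection_eq, transl₃]
        simp only [mul_assoc]
    _ = d * (b * a * b * c * b * a * b) := by
        obtain ⟨_, _, _, _, _, _⟩ := h.rotate.toCoxeterA3
        grind
    _ = transl₁ a b c d := by
        obtain ⟨_, _, _, _, _, _⟩ := h.toCoxeterA3
        unfold transl₁
        grind

theorem commute_transl₁_transl₃ (h : AffineCoxeterA3 a b c d) :
    Commute (transl₁ a b c d) (transl₃ a b c d) := by
  have hcomm := h.conj_c_transl₁_mul_transl₃.trans h.transl₃_mul_conj_c_transl₁.symm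
  rw [← h.conj_c_transl₁_mul_transl₃]
  exact Commute.mul_left hcomm (Commute.refl _)

theorem commute_transl₂_transl₃ (h : AffineCoxeterA3 a b c d) :
    Commute (transl₂ a b c d) (transl₃ a b c d) :=
  commute_of_semiconjBy h.a_transl₁ h.a_transl₃ h.commute_transl₁_transl₃

theorem commute_transl₁_transl₂ (h : AffineCoxeterA3 a b c d) :
    Commute (transl₁ a b c d) (transl₂ a b c d) :=
  commute_of_semiconjBy h.b_transl₁ h.b_transl₃ h.commute_transl₁_transl₃

theorem c_transl₁ (h : AffineCoxeterA3 a b c d) :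
    SemiconjBy c (transl₁ a b c d) (transl₁ a b c d * (transl₃ a b c d)⁻¹) := by
  rw [SemiconjBy, ← mul_inv_eq_iff_eq_mul, inv_eq_of_mul_eq_one_left h.c_sq, eq_mul_inv_iff_mul_eq,
    h.conj_c_transl₁_mul_transl₃]

theorem c_transl₂ (h : AffineCoxeterA3 a b c d) :
    SemiconjBy c (transl₂ a b c d) (transl₂ a b c d * (transl₃ a b c d)⁻¹) := by
  have hc : c = a * (c * a) := by rw [← h.ac, ← mul_assoc, h.a_sq, one_mul]
  have ha := h.a_transl₁.mul_right h.a_transl₃.inv_right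
  have hconj := ha.mul_left (h.c_transl₁.mul_left h.a_transl₂)
  rwa [← hc] at hconj

theorem b_mul_d_mul_a_mul_c_sq (h : AffineCoxeterA3 a b c d) :
    (b * d * a * c) ^ 2 = transl₁ a b c d * transl₃ a b c d * (transl₂ a b c d)⁻¹ := by
  have hq : b * a * c * b * (b * a * c * b) = 1 := by
    obtain ⟨_, _, _, _, _, _⟩ := h.toCoxeterA3
    grind
  have hconj : SemiconjBy (b * a * c * b) (transl₁ a b c d)
      (transl₃ a b c d * (transl₂ a b c d)⁻¹) :=
    ((h.b_transl₂.mul_right h.b_transl₃.inv_right).mul_left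
      (h.a_transl₁.mul_right h.a_transl₃.inv_right)).mul_left h.c_transl₁ |>.mul_left h.b_transl₁
  have hfactor : b * d * a * c = transl₁ a b c d * (b * a * c * b) := by
    have hbac : b * a * c = a * b * c * b * a * (b * a * c * b) := by
      obtain ⟨_, _, _, _, _, _⟩ := h.toCoxeterA3
      grind
    rw [transl₁, h.bd, mul_assoc d (a * b * c * b * a), ← hbac]
    simp only [mul_assoc]
  calc (b * d * a * c) ^ 2
      = transl₁ a b c d * (b * a * c * b * transl₁ a b c d) * (b * a * c * b) := by
        rw [sq, hfactor]
        simp only [mul_assoc]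
    _ = transl₁ a b c d * transl₃ a b c d * (transl₂ a b c d)⁻¹ *
          (b * a * c * b * (b * a * c * b)) := by
        rw [hconj.eq]
        simp only [mul_assoc]
    _ = _ := by rw [hq, mul_one]

theorem pow_relations {m : ℕ} (h : AffineCoxeterA3 a b c d) (hm : (b * d * a * c) ^ (2 * m) = 1) :
    transl₁ a b c d ^ m * transl₃ a b c d ^ m = transl₂ a b c d ^ m ∧
    transl₂ a b c d ^ m * transl₃ a b c d ^ m = transl₁ a b c d ^ m ∧
    transl₁ a b c d ^ m * transl₂ a b c d ^ m = transl₃ a b c d ^ m := by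
  have h₁₃ : transl₁ a b c d ^ m * transl₃ a b c d ^ m = transl₂ a b c d ^ m := by
    have hcomm := h.commute_transl₁_transl₂.mul_left h.commute_transl₂_transl₃.symm
    rwa [pow_mul, h.b_mul_d_mul_a_mul_c_sq, hcomm.inv_right.mul_pow,
      h.commute_transl₁_transl₃.mul_pow, inv_pow, mul_inv_eq_one] at hm
  refine ⟨h₁₃, ?_, ?_⟩
  · have ha := (h.a_transl₁.pow_right m).mul_right (h.a_transl₃.pow_right m)
    exact semiconjBy_right_unique (h₁₃ ▸ ha) (h.a_transl₂.pow_right m)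
  · have hb := SemiconjBy.mul_right (h.b_transl₁.pow_right m) (h.b_transl₃.pow_right m)
    exact semiconjBy_right_unique (h₁₃ ▸ hb) (h.b_transl₂.pow_right m)

theorem solvableOfCardDvd_translLattice {m : ℕ} (h : AffineCoxeterA3 a b c d)
    (hm : (b * d * a * c) ^ (2 * m) = 1) :
    SolvableOfCardDvd (translLattice a b c d) (2 * m * (2 * m) * m) := by
  obtain ⟨h₁₃, h₂₃, h₁₂⟩ := h.pow_relations hm
  exact .closure_triple_of_pow_relations h.commute_transl₁_transl₂
    h.commute_transl₁_transl₃ h.commute_transl₂_transl₃ h₁₃ h₂₃ h₁₂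

theorem closure_le_normalizer_translLattice (h : AffineCoxeterA3 a b c d) :
    Subgroup.closure {a, b, c} ≤ Subgroup.normalizer (translLattice a b c d : Set G) := by
  have mem₁ : transl₁ a b c d ∈ translLattice a b c d := Subgroup.mem_closure_of_mem (by simp)
  have mem₂ : transl₂ a b c d ∈ translLattice a b c d := Subgroup.mem_closure_of_mem (by simp)
  have mem₃ : transl₃ a b c d ∈ translLattice a b c d := Subgroup.mem_closure_of_mem (by simp)
  rw [Subgroup.closure_le]
  rintro _ (rfl | rfl | rfl)
  · refine mem_normalizer_closure_of_involution h.a_sq ?_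
    rintro _ (rfl | rfl | rfl)
    exacts [⟨_, mem₂, h.a_transl₁⟩, ⟨_, mem₁, h.a_transl₂⟩, ⟨_, mem₃, h.a_transl₃⟩]
  · refine mem_normalizer_closure_of_involution h.b_sq ?_
    rintro _ (rfl | rfl | rfl)
    exacts [⟨_, mem₁, h.b_transl₁⟩, ⟨_, mem₃, h.b_transl₂⟩, ⟨_, mem₂, h.b_transl₃⟩]
  · refine mem_normalizer_closure_of_involution h.c_sq ?_
    rintro _ (rfl | rfl | rfl)
    exacts [⟨_, mul_mem mem₁ (inv_mem mem₃), h.c_transl₁⟩,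
      ⟨_, mul_mem mem₂ (inv_mem mem₃), h.c_transl₂⟩, ⟨_, inv_mem mem₃, h.c_transl₃⟩]

-- The affine reflection `d` is a translation times a linear reflection.
theorem closure_le_sup_translLattice (a b c d : G) :
    Subgroup.closure {a, b, c, d} ≤ Subgroup.closure {a, b, c} ⊔ translLattice a b c d := by
  have ha : a ∈ Subgroup.closure {a, b, c} := Subgroup.mem_closure_of_mem (by simp)
  have hb : b ∈ Subgroup.closure {a, b, c} := Subgroup.mem_closure_of_mem (by simp)
  have hc : c ∈ Subgroup.closure {a, b, c} := Subgroup.mem_closure_of_mem (by simp)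
  have hrefl : a * b * c * b * a ∈ Subgroup.closure {a, b, c} ⊔ translLattice a b c d :=
    Subgroup.mem_sup_left (mul_mem (mul_mem (mul_mem (mul_mem ha hb) hc) hb) ha)
  have htransl : transl₁ a b c d ∈ Subgroup.closure {a, b, c} ⊔ translLattice a b c d :=
    Subgroup.mem_sup_right (Subgroup.mem_closure_of_mem (by simp))
  rw [Subgroup.closure_le]
  rintro _ (rfl | rfl | rfl | rfl)
  exacts [Subgroup.mem_sup_left ha, Subgroup.mem_sup_left hb, Subgroup.mem_sup_left hc,
    (Subgroup.mul_mem_cancel_right _ hrefl).mp htransl]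

theorem solvableOfCardDvd_closure {m : ℕ} (h : AffineCoxeterA3 a b c d)
    (hm : (b * d * a * c) ^ (2 * m) = 1) :
    SolvableOfCardDvd (Subgroup.closure {a, b, c, d}) (96 * m ^ 3) := by
  have hbound := ((h.solvableOfCardDvd_translLattice hm).sup h.solvableOfCardDvd
    h.closure_le_normalizer_translLattice).mono (closure_le_sup_translLattice a b c d)
  rwa [show 2 * m * (2 * m) * m * 24 = 96 * m ^ 3 by ring] at hbound

end AffineCoxeterA3

end AffineCoxeter

section SkewPolyhedra

variable {G : Type*} [Group G] {m : ℕ} {ρ : Fin 3 → G}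

theorem braid_of_involutions {x y : G} (hx : x * x = 1) (hy : y * y = 1) (h : (x * y) ^ 3 = 1) :
    x * y * x = y * x * y := by
  rw [pow_three] at h
  grind

theorem mul_pow_eq_one_comm {x y : G} {n : ℕ} : (x * y) ^ n = 1 ↔ (y * x) ^ n = 1 := by
  rw [← mul_left_inj x, mul_pow_mul, one_mul, mul_eq_left]

/-- The Coxeter matrix of the Schläfli type `{6, 6}`. -/
def schlafliMatrix : Fin 3 → Fin 3 → ℕ := ![![1, 6, 2], ![6, 1, 6], ![2, 6, 1]]

/-- The defining relations of the group of the regular skew polyhedron `{6, 6 | 3}`, whose holes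
are triangles, together with a relation making the length of its Petrie polygons divide `4 * m`. -/
structure IsSkewTriple (m : ℕ) (ρ : Fin 3 → G) : Prop where
  mul_pow : ∀ i j, (ρ i * ρ j) ^ schlafliMatrix i j = 1
  hole_pow : (ρ 2 * ρ 1 * ρ 0 * ρ 1) ^ 3 = 1
  petrie_pow : (ρ 1 * ρ 0 * ρ 2) ^ (4 * m) = 1

namespace IsSkewTriple

theorem mul_self (h : IsSkewTriple m ρ) (i : Fin 3) : ρ i * ρ i = 1 := by
  have := h.mul_pow i i
  fin_cases i <;> exact (pow_one _).symm.trans this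

theorem affineCoxeterA3 (h : IsSkewTriple m ρ) :
    AffineCoxeterA3 (ρ 0) (ρ 1 * ρ 0 * ρ 1) (ρ 2) (ρ 1 * ρ 2 * ρ 1) := by
  have h₀ := h.mul_self 0
  have h₁ := h.mul_self 1
  have h₂ := h.mul_self 2
  have hconj {x : G} (hx : x * x = 1) : ρ 1 * x * ρ 1 * (ρ 1 * x * ρ 1) = 1 := by grind
  have h₀₂ : ρ 0 * ρ 2 = ρ 2 * ρ 0 := by
    have : (ρ 0 * ρ 2) ^ 2 = 1 := h.mul_pow 0 2
    rw [sq] at this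
    grind
  have h₀₁ : (ρ 0 * (ρ 1 * ρ 0 * ρ 1)) ^ 3 = 1 := by
    have : (ρ 0 * ρ 1) ^ 6 = 1 := h.mul_pow 0 1
    rwa [pow_mul _ 2 3, sq, mul_assoc (ρ 0), ← mul_assoc (ρ 1)] at this
  have h₂₁ : (ρ 2 * (ρ 1 * ρ 2 * ρ 1)) ^ 3 = 1 := by
    have : (ρ 2 * ρ 1) ^ 6 = 1 := h.mul_pow 2 1
    rwa [pow_mul _ 2 3, sq, mul_assoc (ρ 2), ← mul_assoc (ρ 1)] at this
  have hhole : ρ 2 * (ρ 1 * ρ 0 * ρ 1) * ρ 2 = ρ 1 * ρ 0 * ρ 1 * ρ 2 * (ρ 1 * ρ 0 * ρ 1) :=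
    braid_of_involutions h₂ (hconj h₀) (by simpa only [mul_assoc] using h.hole_pow)
  exact {
    a_sq := h₀
    b_sq := hconj h₀
    c_sq := h₂
    ac := h₀₂
    aba := braid_of_involutions h₀ (hconj h₀) h₀₁
    bcb := hhole.symm
    d_sq := hconj h₂
    bd := by grind
    cdc := braid_of_involutions h₂ (hconj h₂) h₂₁
    dad := by grind }

theorem solvableOfCardDvd_closure_range (h : IsSkewTriple m ρ) :
    SolvableOfCardDvd (Subgroup.closure (Set.range ρ)) (192 * m ^ 3) := by
  have h₁ := h.mul_self 1
  have hpetrie : (ρ 1 * ρ 0 * ρ 1 * (ρ 1 * ρ 2 * ρ 1) * ρ 0 * ρ 2) ^ (2 * m) = 1 := by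
    have hsq : (ρ 1 * ρ 0 * ρ 2) ^ 2 =
        ρ 1 * ρ 0 * ρ 1 * (ρ 1 * ρ 2 * ρ 1) * ρ 0 * ρ 2 := by
      rw [sq]
      grind
    rw [← hsq, ← pow_mul, ← mul_assoc]
    exact h.petrie_pow
  have hnorm : ρ 1 ∈ Subgroup.normalizer
      (Subgroup.closure {ρ 0, ρ 1 * ρ 0 * ρ 1, ρ 2, ρ 1 * ρ 2 * ρ 1} : Set G) := by
    have hconj (x : G) : SemiconjBy (ρ 1) x (ρ 1 * x * ρ 1) := by
      simp only [SemiconjBy, mul_assoc, h₁, mul_one]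
    refine mem_normalizer_closure_of_involution h₁ ?_
    rintro _ (rfl | rfl | rfl | rfl)
    exacts [⟨_, Subgroup.mem_closure_of_mem (by simp), hconj _⟩,
      ⟨_, Subgroup.mem_closure_of_mem (by simp), semiconjBy_symm_of_involution h₁ (hconj _)⟩,
      ⟨_, Subgroup.mem_closure_of_mem (by simp), hconj _⟩,
      ⟨_, Subgroup.mem_closure_of_mem (by simp), semiconjBy_symm_of_involution h₁ (hconj _)⟩]
  have hbound := (h.affineCoxeterA3.solvableOfCardDvd_closure hpetrie).closure_insert hnorm
    ((sq _).trans h₁)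
  rw [show 96 * m ^ 3 * 2 = 192 * m ^ 3 by ring] at hbound
  refine hbound.mono (Subgroup.closure_mono ?_)
  rintro _ ⟨i, rfl⟩
  fin_cases i <;> simp

end IsSkewTriple

theorem isSkewTriple_iff_forall_rels :
    IsSkewTriple m ρ ↔ ∀ x ∈ rels m, FreeGroup.lift ρ x = 1 := by
  simp only [rels, Set.mem_insert_iff, Set.mem_singleton_iff, forall_eq_or_imp, forall_eq, r0, r1,
    r2, map_mul, map_pow, FreeGroup.lift_apply_of, sq]
  have hcycle {x y z : G} : (x * y * z) ^ (4 * m) = 1 ↔ (y * z * x) ^ (4 * m) = 1 := by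
    rw [mul_assoc, mul_pow_eq_one_comm]
  constructor
  · intro h
    have h₁ := h.mul_self 1
    have hpetrie₁ : (ρ 0 * ρ 2 * ρ 1) ^ (4 * m) = 1 := hcycle.mp h.petrie_pow
    have hpetrie₂ : (ρ 2 * ρ 1 * ρ 0) ^ (4 * m) = 1 := hcycle.mpr h.petrie_pow
    simp only [hpetrie₁, hpetrie₂, mul_one]
    exact ⟨h.mul_self 0, h₁, h.mul_self 2, h.mul_pow 0 1, h.mul_pow 1 2,
      (sq _).symm.trans (h.mul_pow 0 2), h.hole_pow, h₁, trivial, h₁⟩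
  · rintro ⟨h₀, h₁, h₂, h₀₁, h₁₂, h₀₂, hhole, -, hpetrie, -⟩
    refine ⟨fun i j ↦ ?_, hhole, hcycle.mp hpetrie⟩
    rw [← sq] at h₀₂
    fin_cases i <;> fin_cases j
    exacts [(pow_one _).trans h₀, h₀₁, h₀₂, mul_pow_eq_one_comm.mp h₀₁, (pow_one _).trans h₁, h₁₂,
      mul_pow_eq_one_comm.mp h₀₂, mul_pow_eq_one_comm.mp h₁₂, (pow_one _).trans h₂]

theorem isSkewTriple_g (m : ℕ) : IsSkewTriple m (g m) := by
  refine isSkewTriple_iff_forall_rels.mpr fun x hx ↦ ?_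
  have hlift : FreeGroup.lift (g m) = PresentedGroup.mk (rels m) :=
    FreeGroup.ext_hom _ _ fun _ ↦ FreeGroup.lift_apply_of
  exact hlift ▸ PresentedGroup.one_of_mem hx

theorem solvableOfCardDvd_top (m : ℕ) :
    SolvableOfCardDvd (⊤ : Subgroup (PresentedGroup (rels m))) (192 * m ^ 3) :=
  PresentedGroup.closure_range_of (rels m) ▸ (isSkewTriple_g m).solvableOfCardDvd_closure_range

end SkewPolyhedra

section IntersectionProperty

variable {G α : Type*} [Group G] [MulAction G α]

theorem mem_closure_pair_of_involutions {x y z : G} (hx : x * x = 1) (hy : y * y = 1)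
    (hz : z ∈ Subgroup.closure {x, y}) : ∃ k : ℤ, z = (x * y) ^ k ∨ z = (x * y) ^ k * x := by
  have hstep (t : G) {s : G} (hs : s ∈ ({x, y} : Set G))
      (ht : ∃ k : ℤ, t = (x * y) ^ k ∨ t = (x * y) ^ k * x) :
      ∃ k : ℤ, t * s = (x * y) ^ k ∨ t * s = (x * y) ^ k * x := by
    obtain ⟨k, rfl | rfl⟩ := ht <;> rcases hs with rfl | rfl
    · exact ⟨k, .inr rfl⟩
    · refine ⟨k - 1, .inr ?_⟩
      rw [zpow_sub_one, mul_inv_rev, inv_eq_of_mul_eq_one_left hx, inv_eq_of_mul_eq_one_left hy,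
        mul_assoc, mul_assoc, hx, mul_one]
    · exact ⟨k, .inl (by rw [mul_assoc, hx, mul_one])⟩
    · exact ⟨k + 1, .inl (by rw [zpow_add_one, mul_assoc])⟩
  induction hz using Subgroup.closure_induction_right with
  | one => exact ⟨0, .inl (zpow_zero _).symm⟩
  | mul_right t _ s hs ih => exact hstep t hs ih
  | mul_inv_cancel t _ s hs ih =>
    have hinv : s⁻¹ = s := by
      rcases hs with rfl | rfl
      exacts [inv_eq_of_mul_eq_one_left hx, inv_eq_of_mul_eq_one_left hy]
    exact hinv.symm ▸ hstep t hs ih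

theorem eq_one_or_eq_of_mem_closure_pair {x y z : G} {p : α} (hx : x * x = 1) (hy : y * y = 1)
    (hxp : x • p = p) (hper : MulAction.period (x * y) p = orderOf (x * y))
    (hz : z ∈ Subgroup.closure {x, y}) (hzp : z • p = p) : z = 1 ∨ z = x := by
  obtain ⟨k, hk⟩ := mem_closure_pair_of_involutions hx hy hz
  have hkp : (x * y) ^ k • p = p := by
    rcases hk with rfl | rfl
    · exact hzp
    · rwa [mul_smul, hxp] at hzp
  rw [MulAction.zpow_smul_eq_iff_period_dvd, hper, orderOf_dvd_iff_zpow_eq_one] at hkp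
  simpa only [hkp, one_mul] using hk

theorem smul_eq_of_mem_closure {S : Set G} {z : G} {p : α} (hS : ∀ s ∈ S, s • p = p)
    (hz : z ∈ Subgroup.closure S) : z • p = p :=
  (Subgroup.closure_le (MulAction.stabilizer G p)).mpr hS hz

-- The points `P i` play the role of the vertices of a fundamental simplex: the stabiliser of `P i`
-- in the dihedral group `⟨ρ i, ρ k⟩` is only `⟨ρ k⟩`.
theorem interProp_of_smul_eq {ρ : Fin 3 → G} {P : Fin 3 → α} (hsq : ∀ i, ρ i * ρ i = 1)
    (hfix : ∀ i j, i ≠ j → ρ i • P j = P j) (hmove : ∀ i, ρ i • P i ≠ P i)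
    (hper : ∀ i j, MulAction.period (ρ i * ρ j) (P j) = orderOf (ρ i * ρ j)) : InterProp ρ := by
  have hstab {K : Set (Fin 3)} {z : G} {i : Fin 3} (hz : z ∈ Subgroup.closure (ρ '' K))
      (hi : i ∉ K) : z • P i = P i := by
    refine smul_eq_of_mem_closure ?_ hz
    rintro _ ⟨j, hj, rfl⟩
    exact hfix j i (ne_of_mem_of_not_mem hj hi)
  intro I J
  refine le_antisymm ?_ (le_inf (Subgroup.closure_mono (Set.image_mono Set.inter_subset_left))
    (Subgroup.closure_mono (Set.image_mono Set.inter_subset_right)))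
  rintro z ⟨hzI, hzJ⟩
  by_cases hIJ : I ⊆ J
  · rwa [Set.inter_eq_left.mpr hIJ]
  by_cases hJI : J ⊆ I
  · rwa [Set.inter_eq_right.mpr hJI]
  obtain ⟨i, hiI, hiJ⟩ := Set.not_subset.mp hIJ
  obtain ⟨j, -, hjI⟩ := Set.not_subset.mp hJI
  obtain ⟨k, hki, hI⟩ : ∃ k ≠ i, I ⊆ {k, i} := by
    have hthird : ∀ i j : Fin 3, i ≠ j → ∃ k ≠ i, ∀ l ≠ j, l = k ∨ l = i := by decide
    obtain ⟨k, hki, hk⟩ := hthird i j (ne_of_mem_of_not_mem hiI hjI)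
    exact ⟨k, hki, fun l hl ↦ hk l (ne_of_mem_of_not_mem hl hjI)⟩
  have hzki : z ∈ Subgroup.closure {ρ k, ρ i} :=
    Set.image_pair ρ k i ▸ Subgroup.closure_mono (Set.image_mono hI) hzI
  rcases eq_one_or_eq_of_mem_closure_pair (hsq k) (hsq i) (hfix k i hki) (hper k i) hzki
    (hstab hzJ hiJ) with rfl | rfl
  · exact one_mem _
  · have hkI : k ∈ I := by_contra fun hk ↦ hmove k (hstab hzI hk)
    have hkJ : k ∈ J := by_contra fun hk ↦ hmove k (hstab hzJ hk)
    exact Subgroup.mem_closure_of_mem ⟨k, ⟨hkI, hkJ⟩, rfl⟩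

end IntersectionProperty

section Models

variable {m : ℕ}

/-- The homomorphism from `G_m` with values `ρ` on the generators. -/
def IsSkewTriple.hom {H : Type*} [Group H] {ρ : Fin 3 → H} (h : IsSkewTriple m ρ) :
    PresentedGroup (rels m) →* H :=
  PresentedGroup.toGroup (isSkewTriple_iff_forall_rels.mp h)

theorem IsSkewTriple.hom_g {H : Type*} [Group H] {ρ : Fin 3 → H} (h : IsSkewTriple m ρ)
    (i : Fin 3) : h.hom (g m i) = ρ i :=
  PresentedGroup.toGroup.of _

/-- The three affine involutions of `R³` generating, over `ℝ`, the symmetry group of the regular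
skew polyhedron `{6, 6 | 3}`. -/
def affGen (R : Type*) [CommRing R] : Fin 3 → Equiv.Perm (R × R × R) :=
  ![Function.Involutive.toPerm (fun p ↦ (p.1, p.2.2, p.2.1)) fun _ ↦ rfl,
    Function.Involutive.toPerm (fun p ↦ (2 - p.2.2, 2 - p.2.1, 2 - p.1)) fun p ↦ by simp,
    Function.Involutive.toPerm (fun p ↦ (p.1, -p.2.2, -p.2.1)) fun p ↦ by simp]

section affGen

variable {R : Type*} [CommRing R]

theorem affGen_zero_apply (p : R × R × R) : affGen R 0 p = (p.1, p.2.2, p.2.1) := rfl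

theorem affGen_one_apply (p : R × R × R) : affGen R 1 p = (2 - p.2.2, 2 - p.2.1, 2 - p.1) := rfl

theorem affGen_two_apply (p : R × R × R) : affGen R 2 p = (p.1, -p.2.2, -p.2.1) := rfl

theorem isSkewTriple_affGen (h : (8 * m : R) = 0) : IsSkewTriple m (affGen R) := by
  refine ⟨fun i j ↦ ?_, ?_, ?_⟩
  · fin_cases i <;> fin_cases j <;> ext p <;>
      simp [schlafliMatrix, pow_succ, affGen_zero_apply, affGen_one_apply, affGen_two_apply]
  · ext p <;> simp [pow_succ, affGen_zero_apply, affGen_one_apply, affGen_two_apply]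
  · have hglide : (affGen R 1 * affGen R 0 * affGen R 2) ^ 4 = Equiv.addRight (0, 8, 0) := by
      ext p <;> simp [pow_succ, affGen_zero_apply, affGen_one_apply, affGen_two_apply]
      ring
    have hzero : (m * 8 : R) = 0 := by linear_combination h
    rw [pow_mul, hglide, Equiv.nsmul_addRight]
    ext <;> simp [hzero]

end affGen

/-- Three points of the affine model modulo `8` such that `affGen` fixes the `j`-th one for every
index other than `j`, like the vertices of a fundamental simplex. -/
def flagPoint : Fin 3 → ZMod 8 × ZMod 8 × ZMod 8 := ![(3, 1, -1), (2, 0, 0), (1, 1, 1)]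

theorem affGen_flagPoint_of_ne : ∀ i j, i ≠ j → affGen (ZMod 8) i (flagPoint j) = flagPoint j := by
  decide

theorem affGen_flagPoint_ne : ∀ i, affGen (ZMod 8) i (flagPoint i) ≠ flagPoint i := by
  decide

theorem period_affGen_mul_affGen (i j : Fin 3) :
    MulAction.period (affGen (ZMod 8) i * affGen (ZMod 8) j) (flagPoint j) =
      schlafliMatrix i j := by
  have hpos : ∀ i j, 0 < schlafliMatrix i j := by decide
  have hfixed : ∀ i j, (affGen (ZMod 8) i * affGen (ZMod 8) j) ^ schlafliMatrix i j • flagPoint j =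
      flagPoint j := by decide
  have hmoved : ∀ i j, ∀ k < schlafliMatrix i j, 0 < k →
      (affGen (ZMod 8) i * affGen (ZMod 8) j) ^ k • flagPoint j ≠ flagPoint j := by decide
  exact le_antisymm (MulAction.period_le_of_fixed (hpos i j) (hfixed i j))
    (MulAction.le_period (MulAction.period_pos_of_fixed (hpos i j) (hfixed i j))
      fun k hk hlt ↦ hmoved i j k hlt hk)

/-- The linear parts of the affine involutions, as elements of `S₄ × {±1}`. -/
def linGen : Fin 3 → Equiv.Perm (Fin 4) × ℤˣ :=
  ![(Equiv.swap 0 1, 1), (Equiv.swap 0 2, -1), (Equiv.swap 2 3, 1)]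

theorem isSkewTriple_linGen (m : ℕ) : IsSkewTriple m linGen := by
  refine ⟨by decide, by decide, ?_⟩
  rw [pow_mul, show (linGen 1 * linGen 0 * linGen 2) ^ 4 = 1 by decide, one_pow]

/-- The basis `e₁ - e₄`, `e₂ - e₄`, `e₂ + e₃ - e₁ - e₄` of the translation lattice of a skew
triple. In `G_m` its members have orders `2 * m`, `2 * m` and `m`. -/
def latticeBasis {G : Type*} [Group G] (ρ : Fin 3 → G) : Fin 3 → G :=
  let u := transl₁ (ρ 0) (ρ 1 * ρ 0 * ρ 1) (ρ 2) (ρ 1 * ρ 2 * ρ 1)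
  let v := transl₂ (ρ 0) (ρ 1 * ρ 0 * ρ 1) (ρ 2) (ρ 1 * ρ 2 * ρ 1)
  let w := transl₃ (ρ 0) (ρ 1 * ρ 0 * ρ 1) (ρ 2) (ρ 1 * ρ 2 * ρ 1)
  ![u, v, v * w * u⁻¹]

theorem map_latticeBasis {G H : Type*} [Group G] [Group H] (f : G →* H) (ρ : Fin 3 → G)
    (i : Fin 3) : f (latticeBasis ρ i) = latticeBasis (f ∘ ρ) i := by
  fin_cases i <;> simp [latticeBasis, transl₁, transl₂, transl₃]

theorem latticeBasis_linGen : ∀ i, latticeBasis linGen i = 1 := by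
  decide +kernel

theorem latticeBasis_affGen (R : Type*) [CommRing R] (i : Fin 3) :
    latticeBasis (affGen R) i =
      Equiv.addRight ((![(4, 4, 0), (4, 0, 4), (0, 0, 8)] : Fin 3 → R × R × R) i) := by
  have hinv (j : Fin 3) : (affGen R j)⁻¹ = affGen R j := by fin_cases j <;> rfl
  fin_cases i <;> ext p <;>
    simp [latticeBasis, transl₁, transl₂, transl₃, hinv, affGen_zero_apply, affGen_one_apply,
      affGen_two_apply] <;> ring

/-- The element of the translation lattice with coordinates `i`, `j`, `k` in `latticeBasis`. -/
def latticeWord {G : Type*} [Group G] (ρ : Fin 3 → G) (i j k : ℕ) : G :=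
  latticeBasis ρ 0 ^ i * latticeBasis ρ 1 ^ j * latticeBasis ρ 2 ^ k

theorem map_latticeWord {G H : Type*} [Group G] [Group H] (f : G →* H) (ρ : Fin 3 → G)
    (i j k : ℕ) : f (latticeWord ρ i j k) = latticeWord (f ∘ ρ) i j k := by
  simp only [latticeWord, map_mul, map_pow, map_latticeBasis]

theorem latticeWord_affGen_zero (R : Type*) [CommRing R] (i j k : ℕ) :
    latticeWord (affGen R) i j k 0 =
      (((4 * (i + j) : ℕ) : R), ((4 * i : ℕ) : R), ((4 * j + 8 * k : ℕ) : R)) := by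
  simp only [latticeWord, latticeBasis_affGen, Equiv.nsmul_addRight, Equiv.Perm.mul_apply]
  ext <;> simp <;> ring

theorem eq_of_natCast_mul_eq {c n N i i' : ℕ} (hN : N = c * n) (hc : c ≠ 0) (hi : i < n)
    (hi' : i' < n) (h : ((c * i : ℕ) : ZMod N) = (c * i' : ℕ)) : i = i' := by
  rw [hN, ZMod.natCast_eq_natCast_iff] at h
  exact (Nat.ModEq.mul_left_cancel' hc h).eq_of_lt_of_lt hi hi'

theorem latticeWord_g_injective (m : ℕ) : Function.Injective
    fun t : Fin (2 * m) × Fin (2 * m) × Fin m ↦ latticeWord (g m) t.1 t.2.1 t.2.2 := by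
  rintro ⟨i, j, k⟩ ⟨i', j', k'⟩ heq
  have hzero : (8 * m : ZMod (8 * m)) = 0 := by exact_mod_cast ZMod.natCast_self (8 * m)
  let f := (isSkewTriple_affGen hzero).hom
  have hf : f ∘ g m = affGen (ZMod (8 * m)) := funext (isSkewTriple_affGen hzero).hom_g
  have happly := DFunLike.congr_fun (congrArg f heq) 0
  simp only [map_latticeWord, hf, latticeWord_affGen_zero, Prod.mk.injEq] at happly
  obtain ⟨h₁, h₂, h₃⟩ := happly
  have hi : (i : ℕ) = i' := eq_of_natCast_mul_eq (by ring) four_ne_zero i.2 i'.2 h₂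
  have hj : (j : ℕ) = j' := by
    rw [hi, mul_add, mul_add, Nat.cast_add, Nat.cast_add, add_right_inj] at h₁
    exact eq_of_natCast_mul_eq (by ring) four_ne_zero j.2 j'.2 h₁
  have hk : (k : ℕ) = k' := by
    rw [hj, Nat.cast_add, Nat.cast_add, add_right_inj] at h₃
    exact eq_of_natCast_mul_eq rfl (by decide) k.2 k'.2 h₃
  simp only [Prod.mk.injEq, Fin.ext_iff, hi, hj, hk, and_self]

theorem hom_linGen_surjective (m : ℕ) : Function.Surjective (isSkewTriple_linGen m).hom := by
  let f := (isSkewTriple_linGen m).hom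
  have hgen (i : Fin 3) : linGen i ∈ f.range := ⟨g m i, (isSkewTriple_linGen m).hom_g i⟩
  have hswap : Set.range (fun i : Fin 3 ↦ Equiv.swap i.castSucc i.succ) ⊆
      f.range.comap (MonoidHom.inl (Equiv.Perm (Fin 4)) ℤˣ) := by
    have hconj : (Equiv.swap 1 2, 1) = linGen 1 * linGen 0 * linGen 1 := by decide
    have hmid : (Equiv.swap 1 2, 1) ∈ f.range :=
      hconj ▸ mul_mem (mul_mem (hgen 1) (hgen 0)) (hgen 1)
    rintro _ ⟨i, rfl⟩
    fin_cases i
    exacts [hgen 0, hmid, hgen 2]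
  have hperm (σ : Equiv.Perm (Fin 4)) : (σ, 1) ∈ f.range := by
    have hle := Submonoid.closure_le.mpr hswap
    rw [Equiv.Perm.mclosure_swap_castSucc_succ] at hle
    exact hle (Submonoid.mem_top σ)
  rintro ⟨σ, ε⟩
  rcases Int.units_eq_one_or ε with rfl | rfl
  · exact hperm σ
  · have hσ : (σ, -1) = (σ * Equiv.swap 0 2, 1) * linGen 1 := by simp [linGen]
    exact hσ ▸ mul_mem (hperm _) (hgen 1)

theorem card_presentedGroup_ge (m : ℕ) [Finite (PresentedGroup (rels m))] :
    192 * m ^ 3 ≤ Nat.card (PresentedGroup (rels m)) := by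
  let f := (isSkewTriple_linGen m).hom
  have hker : 2 * m * (2 * m * m) ≤ Nat.card f.ker := by
    have hmem (i j k : ℕ) : latticeWord (g m) i j k ∈ f.ker := by
      have hf : f ∘ g m = linGen := funext (isSkewTriple_linGen m).hom_g
      rw [MonoidHom.mem_ker, map_latticeWord, hf]
      simp only [latticeWord, latticeBasis_linGen, one_pow, mul_one]
    have hcard := Nat.card_le_card_of_injective
      (fun t : Fin (2 * m) × Fin (2 * m) × Fin m ↦
        (⟨latticeWord (g m) t.1 t.2.1 t.2.2, hmem _ _ _⟩ : f.ker))
      fun t t' h ↦ latticeWord_g_injective m (congrArg Subtype.val h)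
    simpa only [Nat.card_prod, Nat.card_fin] using hcard
  have hindex : f.ker.index = 48 := by
    rw [Subgroup.index_ker, MonoidHom.range_eq_top.mpr (hom_linGen_surjective m),
      Subgroup.card_top, Nat.card_prod, Nat.card_perm, Nat.card_eq_fintype_card,
      Nat.card_eq_fintype_card]
    rfl
  calc 192 * m ^ 3 = 2 * m * (2 * m * m) * 48 := by ring
    _ ≤ Nat.card f.ker * 48 := Nat.mul_le_mul_right 48 hker
    _ = Nat.card (PresentedGroup (rels m)) := hindex ▸ f.ker.card_mul_index

theorem card_presentedGroup {m : ℕ} (hm : 0 < m) :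
    Nat.card (PresentedGroup (rels m)) = 192 * m ^ 3 := by
  have hdvd : Nat.card (PresentedGroup (rels m)) ∣ 192 * m ^ 3 :=
    Subgroup.card_top (G := PresentedGroup (rels m)) ▸ (solvableOfCardDvd_top m).card_dvd
  have hpos : 0 < 192 * m ^ 3 := by positivity
  have := Nat.finite_of_card_ne_zero (ne_zero_of_dvd_ne_zero hpos.ne' hdvd)
  exact le_antisymm (Nat.le_of_dvd hpos hdvd) (card_presentedGroup_ge m)

theorem isSolvable_presentedGroup (m : ℕ) : Group.IsSolvable (PresentedGroup (rels m)) :=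
  have := (solvableOfCardDvd_top m).solvable
  Group.isSolvable_of_surjective (f := (⊤ : Subgroup (PresentedGroup (rels m))).subtype)
    fun x ↦ ⟨⟨x, Subgroup.mem_top x⟩, rfl⟩

/-- The affine action of `G_m` modulo `8`, available for every `m`. -/
def affHom (m : ℕ) : PresentedGroup (rels m) →* Equiv.Perm (ZMod 8 × ZMod 8 × ZMod 8) :=
  (isSkewTriple_affGen (by rw [show (8 : ZMod 8) = 0 from rfl, zero_mul])).hom

theorem affHom_g (m : ℕ) (i : Fin 3) : affHom m (g m i) = affGen (ZMod 8) i :=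
  IsSkewTriple.hom_g _ i

theorem orderOf_g_mul_g (m : ℕ) (i j : Fin 3) : orderOf (g m i * g m j) = schlafliMatrix i j := by
  refine Nat.dvd_antisymm (orderOf_dvd_of_pow_eq_one ((isSkewTriple_g m).mul_pow i j)) ?_
  rw [← period_affGen_mul_affGen, ← affHom_g m, ← affHom_g m, ← map_mul]
  exact (MulAction.period_dvd_orderOf _ _).trans (orderOf_map_dvd (affHom m) _)

theorem orderOf_g (m : ℕ) (i : Fin 3) : orderOf (g m i) = 2 := by
  refine orderOf_eq_prime ((sq _).trans ((isSkewTriple_g m).mul_self i)) fun h ↦ ?_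
  have hfix : affHom m (g m i) (flagPoint i) = flagPoint i := by rw [h, map_one]; rfl
  exact affGen_flagPoint_ne i (affHom_g m i ▸ hfix)

theorem interProp_g (m : ℕ) : InterProp (g m) := by
  let := MulAction.compHom (ZMod 8 × ZMod 8 × ZMod 8) (affHom m)
  have hsmul (i : Fin 3) (p : ZMod 8 × ZMod 8 × ZMod 8) : g m i • p = affGen (ZMod 8) i p :=
    DFunLike.congr_fun (affHom_g m i) p
  refine interProp_of_smul_eq (P := flagPoint) (isSkewTriple_g m).mul_self ?_ ?_ ?_
  · exact fun i j hij ↦ (hsmul i _).trans (affGen_flagPoint_of_ne i j hij)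
  · exact fun i ↦ hsmul i _ ▸ affGen_flagPoint_ne i
  · intro i j
    rw [orderOf_g_mul_g, ← period_affGen_mul_affGen, ← affHom_g m, ← affHom_g m, ← map_mul]
    rfl

end Models

/-- Theorem 5.1, family `G_m`: a solvable string C-group of type `{6,6}`
of order `192 m^3`. -/
theorem stmt_12 (m : ℕ) (hm : 0 < m) :
    Nat.card (PresentedGroup (rels m)) = 192 * m ^ 3 ∧
    IsSolvable (PresentedGroup (rels m)) ∧
    orderOf (g m 0) = 2 ∧ orderOf (g m 1) = 2 ∧ orderOf (g m 2) = 2 ∧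
    orderOf (g m 0 * g m 2) = 2 ∧
    orderOf (g m 0 * g m 1) = 6 ∧ orderOf (g m 1 * g m 2) = 6 ∧
    InterProp ![g m 0, g m 1, g m 2] := by
  have htriple : ![g m 0, g m 1, g m 2] = g m := by
    ext i
    fin_cases i <;> rfl
  exact ⟨card_presentedGroup hm, isSolvable_presentedGroup m, orderOf_g m 0, orderOf_g m 1,
    orderOf_g m 2, orderOf_g_mul_g m 0 2, orderOf_g_mul_g m 0 1, orderOf_g_mul_g m 1 2,
    htriple ▸ interProp_g m⟩

end Stmt12
end

section
/- For every positive integer m, let H_m be the presented group on generators ρ0, ρ1, ρ2 with relation set {ρ0^2, ρ1^2, ρ2^2, (ρ0ρ1)^6, (ρ1ρ2)^6, (ρ0ρ2)^2, (ρ2ρ1ρ0ρ1)^3, (ρ1ρ0)((ρ1ρ2)^3(ρ0ρ1)^3)^{2m}(ρ0ρ1), ρ2((ρ1ρ2)^3(ρ0ρ1)^3)^{2m}ρ2, (ρ1ρ2)((ρ1ρ2)^3(ρ0ρ1)^3)^{2m}(ρ2ρ1)}. Then H_m has order 384·m^3, H_m is solvable, in H_m the images of ρ0, ρ1, ρ2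 and ρ0ρ2 have order exactly 2, the images of ρ0ρ1 and ρ1ρ2 have order exactly 6, and the triple of images of (ρ0, ρ1, ρ2) satisfies the intersection property in H_m. -/
namespace Stmt13

def r0 : FreeGroup (Fin 3) := FreeGroup.of 0
def r1 : FreeGroup (Fin 3) := FreeGroup.of 1
def r2 : FreeGroup (Fin 3) := FreeGroup.of 2

/-- The relations of the presented group `H_m` of Theorem 5.1. -/
def rels (m : ℕ) : Set (FreeGroup (Fin 3)) :=
  {r0 ^ 2, r1 ^ 2, r2 ^ 2, (r0 * r1) ^ 6, (r1 * r2) ^ 6, (r0 * r2) ^ 2,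
   (r2 * r1 * r0 * r1) ^ 3,
   (r1 * r0) * ((r1 * r2) ^ 3 * (r0 * r1) ^ 3) ^ (2 * m) * (r0 * r1),
   r2 * ((r1 * r2) ^ 3 * (r0 * r1) ^ 3) ^ (2 * m) * r2,
   (r1 * r2) * ((r1 * r2) ^ 3 * (r0 * r1) ^ 3) ^ (2 * m) * (r2 * r1)}

/-- The image of the `i`-th generator in `H_m`. -/
def g (m : ℕ) (i : Fin 3) : PresentedGroup (rels m) := PresentedGroup.of i

/-- The intersection property for a triple of elements. -/
def InterProp {G : Type*} [Group G] (ρ : Fin 3 → G) : Prop :=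
  ∀ I J : Set (Fin 3),
    Subgroup.closure (ρ '' I) ⊓ Subgroup.closure (ρ '' J) =
      Subgroup.closure (ρ '' (I ∩ J))

/-!
Write `a`, `r`, `b` for the three generators. The first seven relations define the symmetry group of
the Petrie–Coxeter skew polyhedron `{6,6|3}`, a crystallographic group in dimension three. In it
`(r * b) ^ 3` and `(a * r) ^ 3` are point reflections, so `u = (r * b) ^ 3 * (a * r) ^ 3` is a
translation. The elements `u`, `b * u * b`, `a * u * a` form a basis of the translation lattice,
which is the root lattice of type `A₃`, and the remaining relations kill `2 * m` times this lattice.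
Hence there is an exact sequence `1 → (ℤ/2m)³ → H_m → S₄ × {±1} → 1`. The quotient by the lattice
has at most 48 elements because it is generated by `r * b * r`, `b`, `r * a * r`, which satisfy the
Coxeter relations of type `A₃`, and a central involution. The lattice embeds because `H_m` acts by
affine maps on `(ℤ/2m)⁴`. The same action modulo 2 already separates the generators enough to read
off their orders and the intersection property.
-/

section Group

variable {G : Type*} [Group G]

theorem mul_pow_eq_one_comm {a b : G} {n : ℕ} : (a * b) ^ n = 1 ↔ (b * a) ^ n = 1 := by
  rw [← conj_eq_one_iff (a := b) (b := (a * b) ^ n), ← conj_pow, mul_assoc b, mul_inv_cancel_right]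

theorem mul_comm_of_mul_pow_two_eq_one {a b : G} (ha : a * a = 1) (hb : b * b = 1)
    (hab : (a * b) ^ 2 = 1) : a * b = b * a := by
  rw [pow_two] at hab
  rw [← inv_eq_of_mul_eq_one_left hab, mul_inv_rev, inv_eq_of_mul_eq_one_left ha,
    inv_eq_of_mul_eq_one_left hb]

theorem orderOf_eq_of_map_pow_ne_one {K : Type*} [Group K] (f : G →* K) {x : G} {n : ℕ}
    (hx : x ^ (n + 1) = 1) (h : ∀ k < n, f x ^ (k + 1) ≠ 1) : orderOf x = n + 1 := by
  refine (orderOf_eq_iff n.succ_pos).2 ⟨hx, fun k hkn hk hxk => ?_⟩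
  obtain ⟨k, rfl⟩ := Nat.exists_eq_add_one.2 hk
  exact h k (by omega) (by rw [← map_pow, hxk, map_one])

theorem mem_normalizer_of_mul_self {H : Subgroup G} {s : G} (hs : s * s = 1)
    (h : ∀ x ∈ H, s * x * s ∈ H) : s ∈ Subgroup.normalizer (H : Set G) := by
  refine Subgroup.mem_normalizer_iff.2 fun x => ?_
  rw [inv_eq_of_mul_eq_one_left hs]
  refine ⟨h x, fun hx => ?_⟩
  simpa [mul_assoc, hs, ← mul_assoc s s] using h _ hx

theorem mem_normalizer_closure_of_mul_self {X : Set G} {s : G} (hs : s * s = 1)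
    (h : ∀ x ∈ X, s * x * s ∈ Subgroup.closure X) :
    s ∈ Subgroup.normalizer (Subgroup.closure X : Set G) := by
  have hs' : s⁻¹ = s := inv_eq_of_mul_eq_one_left hs
  refine mem_normalizer_of_mul_self hs fun x hx => ?_
  have hX : Subgroup.closure X ≤ (Subgroup.closure X).comap (MulAut.conj s).toMonoidHom :=
    (Subgroup.closure_le _).2 fun y hy => by simpa [hs'] using h y hy
  simpa [hs'] using hX hx

theorem exists_fin_pow_eq_of_mem_zpowers {x y : G} {n : ℕ} [NeZero n] (hx : x ^ n = 1)
    (hy : y ∈ Subgroup.zpowers x) : ∃ i : Fin n, x ^ (i : ℕ) = y := by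
  classical
  have hn : 0 < n := Nat.pos_of_neZero n
  rw [(isOfFinOrder_iff_pow_eq_one.2 ⟨n, hn, hx⟩).mem_zpowers_iff_mem_range_orderOf] at hy
  obtain ⟨i, hi, rfl⟩ := Finset.mem_image.1 hy
  exact ⟨⟨i, (Finset.mem_range.1 hi).trans_le (orderOf_le_of_pow_eq_one hn hx)⟩, rfl⟩

theorem mk_zpowers_le {x : G} {n : ℕ} (hn : 0 < n) (hx : x ^ n = 1) :
    Cardinal.mk (Subgroup.zpowers x) ≤ n := by
  have : Finite (Subgroup.zpowers x) := (isOfFinOrder_iff_pow_eq_one.2 ⟨n, hn, hx⟩).finite_zpowers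
  rw [← Nat.cast_card, Nat.card_zpowers]
  exact_mod_cast orderOf_le_of_pow_eq_one hn hx

/-- The cyclic group homomorphism `i ↦ x ^ i` on `ℤ/n`, for `x` with `x ^ n = 1`. -/
def zmodPowHom {n : ℕ} (x : G) (hx : x ^ n = 1) : Multiplicative (ZMod n) →* G :=
  AddMonoidHom.toMultiplicativeLeft (ZMod.lift n
    ⟨zmultiplesHom (Additive G) (Additive.ofMul x), by simpa using congrArg Additive.ofMul hx⟩)

theorem zmodPowHom_intCast {n : ℕ} {x : G} (hx : x ^ n = 1) (i : ℤ) :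
    zmodPowHom x hx (Multiplicative.ofAdd (i : ZMod n)) = x ^ i := by
  simp [zmodPowHom]

theorem range_zmodPowHom {n : ℕ} {x : G} (hx : x ^ n = 1) :
    (zmodPowHom x hx).range = Subgroup.zpowers x := by
  ext y
  simp only [MonoidHom.mem_range, Subgroup.mem_zpowers_iff, Multiplicative.exists]
  simp only [(ZMod.intCast_surjective (n := n)).exists, zmodPowHom_intCast]

theorem commute_zmodPowHom {n k : ℕ} {x y : G} (hx : x ^ n = 1) (hy : y ^ k = 1)
    (hxy : Commute x y) (i : Multiplicative (ZMod n)) (j : Multiplicative (ZMod k)) :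
    Commute (zmodPowHom x hx i) (zmodPowHom y hy j) := by
  obtain ⟨k, hk⟩ : zmodPowHom x hx i ∈ Subgroup.zpowers x := range_zmodPowHom hx ▸ ⟨i, rfl⟩
  obtain ⟨l, hl⟩ : zmodPowHom y hy j ∈ Subgroup.zpowers y := range_zmodPowHom hy ▸ ⟨j, rfl⟩
  rw [← hk, ← hl]
  exact hxy.zpow_zpow k l

theorem eq_of_le_of_mk_quotient_le_index {H K : Subgroup G} (hHK : H ≤ K)
    (hK : K.index ≠ 0) (hcard : Cardinal.mk (G ⧸ H) ≤ K.index) : H = K := by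
  have : Finite (G ⧸ H) := Cardinal.mk_lt_aleph0_iff.1 (hcard.trans_lt Cardinal.natCast_lt_aleph0)
  have hle : H.index ≤ K.index := by
    rw [← Nat.cast_card] at hcard
    exact_mod_cast hcard
  have heq : H.index = K.index :=
    hle.antisymm (Nat.le_of_dvd Nat.card_pos (Subgroup.index_dvd_of_le hHK))
  refine hHK.antisymm (Subgroup.relIndex_eq_one.1 ?_)
  exact Nat.eq_of_mul_eq_mul_right (Nat.pos_of_ne_zero hK)
    ((Subgroup.relIndex_mul_index hHK).trans (heq.trans (one_mul _).symm))

end Group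

section Dihedral

open scoped Pointwise

variable {G : Type*} [Group G]

theorem exists_eq_of_mem_closure_pair {a b : G} {n : ℕ} [NeZero n]
    (ha : a * a = 1) (hb : b * b = 1) (hab : (a * b) ^ n = 1) {x : G}
    (hx : x ∈ Subgroup.closure {a, b}) : ∃ (i : Fin n) (e : Fin 2),
      x = (a * b) ^ (i : ℕ) * a ^ (e : ℕ) := by
  have hconj : a * (a * b) * a = (a * b)⁻¹ := by
    rw [← mul_assoc a, ha, one_mul, mul_inv_rev, inv_eq_of_mul_eq_one_left ha,
      inv_eq_of_mul_eq_one_left hb]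
  have hnorm : Subgroup.zpowers a ≤ Subgroup.normalizer (Subgroup.zpowers (a * b) : Set G) := by
    rw [Subgroup.zpowers_le, Subgroup.zpowers_eq_closure (a * b)]
    refine mem_normalizer_closure_of_mul_self ha ?_
    rintro _ rfl
    exact hconj ▸ inv_mem (Subgroup.mem_closure_singleton_self _)
  have hle : Subgroup.closure {a, b} ≤ Subgroup.zpowers (a * b) ⊔ Subgroup.zpowers a := by
    have haM : a ∈ Subgroup.zpowers (a * b) ⊔ Subgroup.zpowers a :=
      Subgroup.mem_sup_right (Subgroup.mem_zpowers a)
    have habM : a * b ∈ Subgroup.zpowers (a * b) ⊔ Subgroup.zpowers a :=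
      Subgroup.mem_sup_left (Subgroup.mem_zpowers _)
    rw [Subgroup.closure_le, Set.pair_subset_iff]
    exact ⟨haM, (mul_mem_cancel_left haM).1 habM⟩
  have hmem : x ∈ (Subgroup.zpowers (a * b) : Set G) * (Subgroup.zpowers a : Set G) := by
    rw [← Subgroup.coe_mul_of_right_le_normalizer_left _ _ hnorm]
    exact hle hx
  obtain ⟨y, hy, z, hz, rfl⟩ := hmem
  obtain ⟨i, rfl⟩ := exists_fin_pow_eq_of_mem_zpowers hab hy
  obtain ⟨e, rfl⟩ := exists_fin_pow_eq_of_mem_zpowers (n := 2) (pow_two a ▸ ha) hz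
  exact ⟨i, e, rfl⟩

theorem closure_pair_inf_closure_pair_le {K : Type*} [Group K] (f : G →* K)
    {a b c : G} {n k : ℕ} [NeZero n] [NeZero k] (ha : a * a = 1) (hb : b * b = 1) (hc : c * c = 1)
    (hab : (a * b) ^ n = 1) (hac : (a * c) ^ k = 1)
    (h : ∀ (i : Fin n) (e : Fin 2) (j : Fin k) (e' : Fin 2),
      (f a * f b) ^ (i : ℕ) * f a ^ (e : ℕ) = (f a * f c) ^ (j : ℕ) * f a ^ (e' : ℕ) → i = 0) :
    Subgroup.closure {a, b} ⊓ Subgroup.closure {a, c} ≤ Subgroup.closure {a} := by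
  rintro x ⟨hx, hx'⟩
  obtain ⟨i, e, rfl⟩ := exists_eq_of_mem_closure_pair ha hb hab hx
  obtain ⟨j, e', hj⟩ := exists_eq_of_mem_closure_pair ha hc hac hx'
  obtain rfl := h i e j e' (by simpa using congrArg f hj)
  simpa using pow_mem (Subgroup.mem_closure_singleton_self a) _

theorem closure_singleton_inf_closure_singleton_le {a b : G}
    (ha : a * a = 1) (hb : b * b = 1) (hab : a ≠ b) :
    Subgroup.closure {a} ⊓ Subgroup.closure {b} ≤ ⊥ := by
  rintro x ⟨hxa, hxb⟩
  rw [← Subgroup.zpowers_eq_closure] at hxa hxb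
  obtain ⟨i, rfl⟩ := exists_fin_pow_eq_of_mem_zpowers (n := 2) (pow_two a ▸ ha) hxa
  obtain ⟨j, hj⟩ := exists_fin_pow_eq_of_mem_zpowers (n := 2) (pow_two b ▸ hb) hxb
  fin_cases i <;> fin_cases j <;> simp_all [eq_comm]

end Dihedral

section Solvable

open Equiv

theorem isSolvable_alternatingGroup {α : Type*} [Fintype α] [DecidableEq α]
    (hα : Nat.card α = 4) : Group.IsSolvable (alternatingGroup α) := by
  have := alternatingGroup.normal_kleinFour hα
  have := alternatingGroup.kleinFour_isKleinFour hα
  have hV : Group.IsSolvable (alternatingGroup.kleinFour α) :=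
    Group.isSolvable_of_comm (mul_comm_of_exponent_two IsKleinFour.exponent_two)
  have hA : IsMulCommutative (alternatingGroup α ⧸ alternatingGroup.kleinFour α) :=
    Subgroup.Normal.quotient_commutative_iff_commutator_le.2
      (alternatingGroup.kleinFour_eq_commutator hα).ge
  exact (Group.isSolvable_iff_subgroup_quotient _).2 ⟨hV, Group.isSolvable_of_comm hA.is_comm.comm⟩

theorem isSolvable_perm {α : Type*} [Finite α]
    (hα : Nat.card α = 4) : Group.IsSolvable (Perm α) := by
  classical
  have := Fintype.ofFinite α
  have := isSolvable_alternatingGroup hα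
  exact Group.isSolvable_of_ker_le_range (alternatingGroup α).subtype Perm.sign
    (Subgroup.range_subtype _).ge

end Solvable

section Lattice

variable {ι L : Type*} [DecidableEq ι] [SemilatticeInf L] {φ : Finset ι → L}

theorem map_insert_inf_map_union_le (hφ : Monotone φ)
    (h : ∀ K, ∀ i ∉ K, ∀ j ∉ K, i ≠ j → φ (insert i K) ⊓ φ (insert j K) ≤ φ K)
    {K B : Finset ι} {i : ι} (hK : i ∉ K) (hB : i ∉ B) :
    φ (insert i K) ⊓ φ (K ∪ B) ≤ φ K := by
  induction B using Finset.induction_on with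
  | empty => simp
  | insert j B _ ih =>
    obtain ⟨hij, hB⟩ := not_or.1 (Finset.mem_insert.not.1 hB)
    have hle : φ (insert i K) ≤ φ (insert i (K ∪ B)) := hφ (by gcongr; simp)
    by_cases hj : j ∈ K ∪ B
    · rw [Finset.union_insert, Finset.insert_eq_of_mem hj]
      exact ih hB
    · rw [Finset.union_insert]
      exact (le_inf inf_le_left
        ((inf_le_inf_right _ hle).trans (h _ i (by simp [hK, hB]) j hj hij))).trans (ih hB)

theorem map_inf_map_of_insert (hφ : Monotone φ)
    (h : ∀ K, ∀ i ∉ K, ∀ j ∉ K, i ≠ j → φ (insert i K) ⊓ φ (insert j K) ≤ φ K)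
    (I J : Finset ι) : φ I ⊓ φ J = φ (I ∩ J) := by
  refine le_antisymm ?_ (le_inf (hφ Finset.inter_subset_left) (hφ Finset.inter_subset_right))
  suffices key : ∀ A, Disjoint A J → φ (I ∩ J ∪ A) ⊓ φ J ≤ φ (I ∩ J) by
    have hIJ := key (I \ J) Finset.sdiff_disjoint
    rwa [Finset.union_comm, Finset.sdiff_union_inter] at hIJ
  intro A
  induction A using Finset.induction_on with
  | empty => simp
  | insert i A hi ih =>
    intro hA
    obtain ⟨hiJ, hA⟩ := Finset.disjoint_insert_left.1 hA
    refine le_trans (le_inf ?_ inf_le_right) (ih hA)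
    rw [Finset.union_insert]
    refine (inf_le_inf_left _ (hφ ?_)).trans
      (map_insert_inf_map_union_le hφ h (B := J) (by simp [hiJ, hi]) hiJ)
    exact Finset.subset_union_right

end Lattice

theorem interProp_of_inf_le {G : Type*} [Group G] {ρ : Fin 3 → G}
    (h : ∀ i j, i ≠ j → Subgroup.closure {ρ i} ⊓ Subgroup.closure {ρ j} ≤ ⊥)
    (h0 : Subgroup.closure {ρ 0, ρ 1} ⊓ Subgroup.closure {ρ 0, ρ 2} ≤ Subgroup.closure {ρ 0})
    (h1 : Subgroup.closure {ρ 1, ρ 0} ⊓ Subgroup.closure {ρ 1, ρ 2} ≤ Subgroup.closure {ρ 1})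
    (h2 : Subgroup.closure {ρ 2, ρ 0} ⊓ Subgroup.closure {ρ 2, ρ 1} ≤ Subgroup.closure {ρ 2}) :
    InterProp ρ := by
  classical
  let φ (K : Finset (Fin 3)) : Subgroup G := Subgroup.closure (ρ '' K)
  have hφ : Monotone φ := fun K L hKL => Subgroup.closure_mono (Set.image_mono hKL)
  have hpair (i j k : Fin 3) (hij : i ≠ j) (hik : i ≠ k) (hjk : j ≠ k) :
      Subgroup.closure {ρ i, ρ k} ⊓ Subgroup.closure {ρ j, ρ k} ≤ Subgroup.closure {ρ k} := by
    rw [Set.pair_comm (ρ i), Set.pair_comm (ρ j)]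
    fin_cases k <;> fin_cases i <;> fin_cases j <;> first
      | contradiction
      | assumption
      | rwa [inf_comm]
  have hinsert (K : Finset (Fin 3)) (i : Fin 3) (hi : i ∉ K) (j : Fin 3) (hj : j ∉ K)
      (hij : i ≠ j) : φ (insert i K) ⊓ φ (insert j K) ≤ φ K := by
    have hK : K = ∅ ∨ ∃ k, i ≠ k ∧ j ≠ k ∧ K = {k} := by
      decide +revert
    obtain rfl | ⟨k, hik, hjk, rfl⟩ := hK
    · simpa [φ] using h i j hij
    · simpa [φ, Set.image_pair] using hpair i j k hij hik hjk
  intro I J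
  simpa [φ] using map_inf_map_of_insert hφ hinsert I.toFinset J.toFinset

/-! ### Coxeter relations -/

/-- The Coxeter relations of type `Aₙ` for `s 0, …, s (n - 1)`. -/
structure TypeARelations {G : Type*} [Group G] (s : ℕ → G) (n : ℕ) : Prop where
  mul_self : ∀ i < n, s i * s i = 1
  braid : ∀ i, i + 1 < n → s i * s (i + 1) * s i = s (i + 1) * s i * s (i + 1)
  commute : ∀ i j, i + 1 < j → j < n → Commute (s i) (s j)

/-- The product `s k * s (k + 1) * ⋯ * s (l - 1)`. In a Coxeter group of type `Aₙ`, the products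
`s k * ⋯ * s (n - 1)` with `k ≤ n` represent the cosets of the subgroup of type `Aₙ₋₁`. -/
def ascProd {G : Type*} [Group G] (s : ℕ → G) (k l : ℕ) : G :=
  ((List.Ico k l).map s).prod

section AscProd

variable {G : Type*} [Group G] {s : ℕ → G}

theorem ascProd_self (k : ℕ) : ascProd s k k = 1 := by simp [ascProd]

theorem ascProd_mul_ascProd {k l n : ℕ} (hkl : k ≤ l) (hln : l ≤ n) :
    ascProd s k l * ascProd s l n = ascProd s k n := by
  rw [ascProd, ascProd, ← List.prod_append, ← List.map_append,
    List.Ico.append_consecutive hkl hln, ascProd]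

theorem mul_ascProd {k l : ℕ} (h : k < l) : s k * ascProd s (k + 1) l = ascProd s k l := by
  rw [ascProd, ascProd, List.Ico.eq_cons h, List.map_cons, List.prod_cons]

theorem commute_ascProd {x : G} {k l : ℕ} (h : ∀ i, k ≤ i → i < l → Commute x (s i)) :
    Commute x (ascProd s k l) := by
  refine Commute.list_prod_right _ _ fun y hy => ?_
  obtain ⟨i, hi, rfl⟩ := List.mem_map.1 hy
  exact h i (List.Ico.mem.1 hi).1 (List.Ico.mem.1 hi).2

end AscProd

namespace TypeARelations

variable {G : Type*} [Group G] {s : ℕ → G} {n : ℕ}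

theorem mono (h : TypeARelations s n) {k : ℕ} (hk : k ≤ n) : TypeARelations s k where
  mul_self i hi := h.mul_self i (hi.trans_le hk)
  braid i hi := h.braid i (hi.trans_le hk)
  commute i j hij hj := h.commute i j hij (hj.trans_le hk)

theorem mul_ascProd_eq (h : TypeARelations s n) {i k : ℕ} (hki : k ≤ i) (hin : i + 1 < n) :
    s (i + 1) * ascProd s k n = ascProd s k n * s i := by
  have hsplit : ascProd s k n = ascProd s k i * (s i * (s (i + 1) * ascProd s (i + 2) n)) := by
    rw [mul_ascProd hin, mul_ascProd (by omega), ascProd_mul_ascProd hki (by omega)]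
  have hleft : Commute (s (i + 1)) (ascProd s k i) :=
    commute_ascProd fun j _ hj => (h.commute j (i + 1) (by omega) hin).symm
  have hright : Commute (s i) (ascProd s (i + 2) n) :=
    commute_ascProd fun j hj hjn => h.commute i j (by omega) hjn
  calc s (i + 1) * ascProd s k n
    _ = ascProd s k i * (s (i + 1) * s i * s (i + 1) * ascProd s (i + 2) n) := by
      rw [hsplit, ← mul_assoc, hleft.eq]; simp only [mul_assoc]
    _ = ascProd s k i * (s i * s (i + 1) * (s i * ascProd s (i + 2) n)) := by
      rw [← h.braid i hin]; simp only [mul_assoc]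
    _ = ascProd s k n * s i := by rw [hright.eq, hsplit]; simp only [mul_assoc]

open scoped Pointwise

theorem mul_ascProd_mem (h : TypeARelations s (n + 1)) {i k : ℕ} (hi : i ≤ n) (hk : k ≤ n + 1) :
    ∃ l ≤ n + 1, ∃ y ∈ Subgroup.closure (s '' Set.Iio n),
      s i * ascProd s k (n + 1) = ascProd s l (n + 1) * y := by
  have hmem {j : ℕ} (hj : j < n) : s j ∈ Subgroup.closure (s '' Set.Iio n) :=
    Subgroup.subset_closure ⟨j, hj, rfl⟩
  obtain hlt | rfl | hgt | rfl : i + 1 < k ∨ i + 1 = k ∨ k < i ∨ i = k := by omega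
  · exact ⟨k, hk, s i, hmem (by omega),
      commute_ascProd fun j hj hjn => h.commute i j (by omega) hjn⟩
  · exact ⟨i, by omega, 1, one_mem _, by rw [mul_ascProd hk, mul_one]⟩
  · obtain ⟨i, rfl⟩ := Nat.exists_eq_succ_of_ne_zero (by omega : i ≠ 0)
    exact ⟨k, hk, s i, hmem (by omega), h.mul_ascProd_eq (by omega) (by omega)⟩
  · refine ⟨i + 1, by omega, 1, one_mem _, ?_⟩
    rw [← mul_ascProd (by omega : i < n + 1), ← mul_assoc, h.mul_self i (by omega), one_mul,
      mul_one]

theorem closure_subset_image_mul_closure (h : TypeARelations s (n + 1)) :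
    (Subgroup.closure (s '' Set.Iio (n + 1)) : Set G) ⊆
      (fun k => ascProd s k (n + 1)) '' Set.Iic (n + 1) *
        (Subgroup.closure (s '' Set.Iio n) : Set G) := by
  have hmul (i : ℕ) (hi : i < n + 1) (y : G)
      (hy : y ∈ (fun k => ascProd s k (n + 1)) '' Set.Iic (n + 1) *
        (Subgroup.closure (s '' Set.Iio n) : Set G)) :
      s i * y ∈ (fun k => ascProd s k (n + 1)) '' Set.Iic (n + 1) *
        (Subgroup.closure (s '' Set.Iio n) : Set G) := by
    obtain ⟨_, ⟨k, hk, rfl⟩, y, hy, rfl⟩ := hy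
    obtain ⟨l, hl, z, hz, hlz⟩ := h.mul_ascProd_mem (Nat.lt_succ_iff.1 hi) hk
    exact ⟨_, ⟨l, hl, rfl⟩, z * y, mul_mem hz hy, by
      change ascProd s l (n + 1) * (z * y) = s i * (ascProd s k (n + 1) * y)
      rw [← mul_assoc, ← hlz, mul_assoc]⟩
  intro x hx
  induction hx using Subgroup.closure_induction_left with
  | one => exact ⟨1, ⟨n + 1, Set.mem_Iic.2 le_rfl, ascProd_self _⟩, 1, one_mem _, mul_one 1⟩
  | mul_left x hx y _ hy =>
    obtain ⟨i, hi, rfl⟩ := hx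
    exact hmul i hi y hy
  | inv_mul_cancel x hx y _ hy =>
    obtain ⟨i, hi, rfl⟩ := hx
    rw [inv_eq_of_mul_eq_one_left (h.mul_self i hi)]
    exact hmul i hi y hy

theorem mk_closure_le_factorial (h : TypeARelations s n) :
    Cardinal.mk (Subgroup.closure (s '' Set.Iio n)) ≤ (n + 1).factorial := by
  induction n with
  | zero => simp
  | succ n ih =>
    have himage : Cardinal.mk ((fun k => ascProd s k (n + 1)) '' Set.Iic (n + 1)) ≤
        ((n + 2 : ℕ) : Cardinal) := by
      simpa [add_assoc, one_add_one_eq_two] using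
        Cardinal.mk_image_le_lift (f := fun k => ascProd s k (n + 1)) (s := Set.Iic (n + 1))
    calc Cardinal.mk (Subgroup.closure (s '' Set.Iio (n + 1)))
      _ ≤ _ := Cardinal.mk_le_mk_of_subset h.closure_subset_image_mul_closure
      _ ≤ _ := Cardinal.mk_mul_le
      _ ≤ (n + 2 : ℕ) * (n + 1).factorial := mul_le_mul' himage (ih (h.mono n.le_succ))
      _ = (n + 2).factorial := by rw [Nat.factorial_succ (n + 1), Nat.cast_mul]

end TypeARelations

section Braid

variable {G : Type*} [Group G]

theorem braid_of_mul_pow_three {s t : G} (hs : s * s = 1) (ht : t * t = 1)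
    (hst : (s * t) ^ 3 = 1) : s * t * s = t * s * t := by
  have hmul : s * t * s * (t * s * t) = 1 := by
    simpa only [pow_succ, pow_zero, one_mul, mul_assoc] using hst
  rw [eq_inv_of_mul_eq_one_left hmul, mul_inv_rev, mul_inv_rev, inv_eq_of_mul_eq_one_left hs,
    inv_eq_of_mul_eq_one_left ht, mul_assoc]

theorem commute_of_braid {s t x : G} (hs : s * s = 1) (ht : t * t = 1)
    (hst : s * t * s = t * s * t) (hsx : s * x * s = x * s * x) (htx : t * x * t = x * t * x) :
    Commute (s * t * s * x) (s * t * x * t) := by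
  calc s * t * s * x * (s * t * x * t)
    _ = s * t * s * (x * s * (t * x * t)) := by simp only [mul_assoc]
    _ = t * s * t * (x * s * x) * (t * x) := by rw [hst, htx]; simp only [mul_assoc]
    _ = t * (s * t * s) * (x * s * t * x) := by rw [← hsx]; simp only [mul_assoc]
    _ = (t * t) * (s * t * x * s * t * x) := by rw [hst]; simp only [mul_assoc]
    _ = s * t * x * (s * t * s) * (s * x) := by
      simp only [ht, one_mul, mul_assoc, ← mul_assoc s s, hs]
    _ = s * t * x * (t * s * t) * (s * x) := by rw [hst]
    _ = s * t * x * t * (s * t * s * x) := by simp only [mul_assoc]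

theorem mul_eq_of_braid {s t x : G} (hs : s * s = 1) (hx : x * x = 1)
    (hst : s * t * s = t * s * t) (htx : t * x * t = x * t * x) :
    (t * s * x * s) * (s * t * x * t) = s * t * s * x := by
  calc t * s * x * s * (s * t * x * t)
    _ = t * s * x * (s * s) * (t * x * t) := by simp only [mul_assoc]
    _ = t * s * (x * x) * (t * x) := by rw [hs, mul_one, htx]; simp only [mul_assoc]
    _ = t * s * t * x := by rw [hx, mul_one]; simp only [mul_assoc]
    _ = s * t * s * x := by rw [hst]

-- The hypotheses are the Coxeter relations of the affine type `Ã₃`, whose diagram is the 4-cycle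
-- `a`, `c`, `b`, `s`.
theorem affineA3_relation {a s b c : G} (ha : a * a = 1) (hb : b * b = 1)
    (hc : c * c = 1) (hab : a * b = b * a) (hcs : c * s = s * c) (hac : a * c * a = c * a * c)
    (hbc : b * c * b = c * b * c) (hsb : s * b * s = b * s * b) (hsa : s * a * s = a * s * a) :
    s * b * (c * a * c) * b * a * (s * b * s * (c * a * c)) =
      s * b * s * (c * a * c) * a * (s * b * (c * a * c) * b) := by
  have hx : c * a * c * a = a * c := by rw [← hac, mul_assoc, ha, mul_one]
  have hx' : c * a * c * b * a = a * c * b := by rw [mul_assoc (c * a * c), ← hab, ← mul_assoc, hx]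
  calc s * b * (c * a * c) * b * a * (s * b * s * (c * a * c))
    _ = s * b * (c * a * c * b * a) * (s * b * s) * (c * a * c) := by simp only [mul_assoc]
    _ = s * b * a * c * (b * b) * s * b * (c * a * c) := by rw [hx', hsb]; simp only [mul_assoc]
    _ = s * (b * a) * (c * s) * b * (c * a * c) := by rw [hb, mul_one]; simp only [mul_assoc]
    _ = s * (a * b) * (s * c) * b * (a * c * a) := by rw [hab, hcs, hac]
    _ = s * a * b * s * c * (b * a) * c * a := by simp only [mul_assoc]
    _ = s * a * b * s * (c * a * c) * (c * b * c) * a := by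
      rw [← hab]; simp only [mul_assoc, ← mul_assoc c c, hc, one_mul]
    _ = s * a * b * s * (a * c * a) * (b * c * b) * a := by rw [hac, hbc]
    _ = s * (a * b) * s * a * c * (a * b) * c * (b * a) := by simp only [mul_assoc]
    _ = s * (b * a) * s * a * c * (b * a) * c * (a * b) := by rw [hab]
    _ = s * b * (a * s * a) * c * b * (a * c * a) * b := by simp only [mul_assoc]
    _ = s * b * (s * a * s) * c * b * (c * a * c) * b := by rw [hsa, hac]
    _ = s * b * s * a * (s * c) * (b * (c * a * c) * b) := by simp only [mul_assoc]
    _ = s * b * s * (c * a * c * a) * (s * b * (c * a * c) * b) := by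
      rw [hx, ← hcs]; simp only [mul_assoc]
    _ = s * b * s * (c * a * c) * a * (s * b * (c * a * c) * b) := by simp only [mul_assoc]

theorem braid_conj {s t x : G} (hx : x * x = 1) (hxs : Commute x s) (hst : s * t * s = t * s * t) :
    s * (x * t * x) * s = x * t * x * s * (x * t * x) := by
  have hs : x * s * x = s := by rw [hxs.eq, mul_assoc, hx, mul_one]
  have hx' (y : G) : x * (x * y) = y := by rw [← mul_assoc, hx, one_mul]
  calc s * (x * t * x) * s
    _ = x * s * x * (x * t * x) * (x * s * x) := by rw [hs]
    _ = x * (s * t * s) * x := by simp only [mul_assoc, hx']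
    _ = x * (t * s * t) * x := by rw [hst]
    _ = x * t * x * (x * s * x) * (x * t * x) := by simp only [mul_assoc, hx']
    _ = x * t * x * s * (x * t * x) := by rw [hs]

end Braid

/-! ### The skew polyhedron `{6,6|3}` -/

/-- The relations of the symmetry group of the Petrie–Coxeter skew polyhedron `{6,6|3}`, for the
generating involutions `a = ρ₀`, `r = ρ₁`, `b = ρ₂`. The last one makes the holes triangles. -/
structure IsPetrieCoxeter {G : Type*} [Group G] (a r b : G) : Prop where
  mul_self_a : a * a = 1
  mul_self_r : r * r = 1
  mul_self_b : b * b = 1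
  comm : a * b = b * a
  pow_ar : (a * r) ^ 6 = 1
  pow_rb : (r * b) ^ 6 = 1
  pow_hole : (b * r * a * r) ^ 3 = 1

/-- The basic translation `(ρ₁ρ₂)³(ρ₀ρ₁)³` of the skew polyhedron `{6,6|3}`, the product of two
point reflections. -/
def shift {G : Type*} [Group G] (a r b : G) : G := (r * b) ^ 3 * (a * r) ^ 3

theorem map_shift {G K : Type*} [Group G] [Group K] (f : G →* K) (a r b : G) :
    f (shift a r b) = shift (f a) (f r) (f b) := by
  simp only [shift, map_mul, map_pow]

namespace IsPetrieCoxeter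

variable {G : Type*} [Group G] {a r b : G}

theorem dual (h : IsPetrieCoxeter a r b) : IsPetrieCoxeter b r a where
  mul_self_a := h.mul_self_b
  mul_self_r := h.mul_self_r
  mul_self_b := h.mul_self_a
  comm := h.comm.symm
  pow_ar := mul_pow_eq_one_comm.1 h.pow_rb
  pow_rb := mul_pow_eq_one_comm.1 h.pow_ar
  pow_hole := by
    have := mul_pow_eq_one_comm (a := b * r) (b := a * r) (n := 3)
    simp only [← mul_assoc] at this
    exact this.1 h.pow_hole

theorem map {K : Type*} [Group K] (h : IsPetrieCoxeter a r b) (f : G →* K) :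
    IsPetrieCoxeter (f a) (f r) (f b) := by
  constructor <;> simp only [← map_mul, ← map_pow]
  exacts [by rw [h.mul_self_a, map_one], by rw [h.mul_self_r, map_one],
    by rw [h.mul_self_b, map_one], by rw [h.comm], by rw [h.pow_ar, map_one],
    by rw [h.pow_rb, map_one], by rw [h.pow_hole, map_one]]

theorem inv_a (h : IsPetrieCoxeter a r b) : a⁻¹ = a := inv_eq_of_mul_eq_one_left h.mul_self_a

theorem inv_r (h : IsPetrieCoxeter a r b) : r⁻¹ = r := inv_eq_of_mul_eq_one_left h.mul_self_r

theorem pow_ab (h : IsPetrieCoxeter a r b) : (a * b) ^ 2 = 1 := by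
  rw [pow_two, ← mul_assoc, h.comm, mul_assoc b, h.mul_self_a, mul_one, h.mul_self_b]

theorem pow_three_comm (h : IsPetrieCoxeter a r b) : (r * a) ^ 3 = (a * r) ^ 3 := by
  have hinv : (r * a) ^ 3 = ((a * r) ^ 3)⁻¹ := by
    rw [← inv_pow, mul_inv_rev, h.inv_a, h.inv_r]
  rw [hinv, inv_eq_iff_mul_eq_one, ← pow_add]
  exact h.pow_ar

theorem commute_a_pow_three (h : IsPetrieCoxeter a r b) : Commute a ((a * r) ^ 3) := by
  have hsemi : SemiconjBy a (r * a) (a * r) := (mul_assoc a r a).symm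
  rw [Commute, ← h.pow_three_comm]
  nth_rw 2 [h.pow_three_comm]
  exact hsemi.pow_right 3

theorem commute_r_pow_three (h : IsPetrieCoxeter a r b) : Commute r ((a * r) ^ 3) := by
  have hsemi : SemiconjBy r (a * r) (r * a) := (mul_assoc r a r).symm
  rw [Commute]
  nth_rw 2 [← h.pow_three_comm]
  exact hsemi.pow_right 3

theorem shift_eq_mul_pow_three (h : IsPetrieCoxeter a r b) :
    shift a r b = (b * r) ^ 3 * (a * r) ^ 3 := by
  rw [shift, h.dual.pow_three_comm]

theorem commute_r_shift (h : IsPetrieCoxeter a r b) : Commute r (shift a r b) :=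
  h.shift_eq_mul_pow_three ▸ h.dual.commute_r_pow_three.mul_right h.commute_r_pow_three

theorem shift_dual (h : IsPetrieCoxeter a r b) : shift b r a = (shift a r b)⁻¹ := by
  rw [shift, shift, mul_inv_rev, ← inv_pow, ← inv_pow, mul_inv_rev, mul_inv_rev, h.inv_a, h.inv_r,
    h.dual.inv_a]

theorem mul_self_conj (h : IsPetrieCoxeter a r b) : (r * a * r) * (r * a * r) = 1 := by
  simp [mul_assoc, h.mul_self_r, h.mul_self_a, ← mul_assoc r r, ← mul_assoc a a]

theorem braid_b (h : IsPetrieCoxeter a r b) :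
    (r * b * r) * b * (r * b * r) = b * (r * b * r) * b := by
  refine braid_of_mul_pow_three h.dual.mul_self_conj h.mul_self_b ?_
  rw [← h.pow_rb, pow_mul (r * b) 2 3, pow_two, ← mul_assoc (r * b)]

theorem braid_hole (h : IsPetrieCoxeter a r b) :
    b * (r * a * r) * b = (r * a * r) * b * (r * a * r) := by
  refine braid_of_mul_pow_three h.mul_self_b h.mul_self_conj ?_
  simpa only [mul_assoc] using h.pow_hole

theorem shift_eq (h : IsPetrieCoxeter a r b) :
    shift a r b = (r * b * r) * b * (r * b * r) * ((r * a * r) * a * (r * a * r)) := by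
  simp only [shift, pow_succ, pow_zero, one_mul, mul_assoc]
  simp only [h.mul_self_r, ← mul_assoc r r, one_mul]

theorem commute_conj_conj (h : IsPetrieCoxeter a r b) : Commute (r * a * r) (r * b * r) := by
  have hconj : r * a * r * (r * b * r) = r * (a * b) * r := by
    simp only [mul_assoc, ← mul_assoc r r, h.mul_self_r, one_mul]
  have hconj' : r * b * r * (r * a * r) = r * (b * a) * r := by
    simp only [mul_assoc, ← mul_assoc r r, h.mul_self_r, one_mul]
  rw [Commute, SemiconjBy, hconj, hconj', h.comm]

theorem conj_b_shift (h : IsPetrieCoxeter a r b) :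
    b * shift a r b * b = (r * b * r) * b * (r * a * r * a * (r * a * r)) * b := by
  rw [h.shift_eq, h.braid_b]
  simp only [← mul_assoc, h.mul_self_b, one_mul]

theorem mul_self_conj_conj (h : IsPetrieCoxeter a r b) :
    r * a * r * a * (r * a * r) * (r * a * r * a * (r * a * r)) = 1 := by
  simp only [mul_assoc, ← mul_assoc r r, ← mul_assoc a a, h.mul_self_r, h.mul_self_a, one_mul]

theorem braid_conj_r_b (h : IsPetrieCoxeter a r b) :
    r * b * r * (r * a * r * a * (r * a * r)) * (r * b * r) =
      r * a * r * a * (r * a * r) * (r * b * r) * (r * a * r * a * (r * a * r)) :=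
  braid_conj h.mul_self_conj h.commute_conj_conj h.dual.braid_hole.symm

theorem braid_b_conj (h : IsPetrieCoxeter a r b) :
    b * (r * a * r * a * (r * a * r)) * b =
      r * a * r * a * (r * a * r) * b * (r * a * r * a * (r * a * r)) := by
  rw [h.dual.braid_b]
  exact braid_conj h.mul_self_a h.comm h.braid_hole

theorem commute_shift_conj_b (h : IsPetrieCoxeter a r b) :
    Commute (shift a r b) (b * shift a r b * b) := by
  rw [h.conj_b_shift, h.shift_eq]
  exact commute_of_braid h.dual.mul_self_conj h.mul_self_b h.braid_b h.braid_conj_r_b h.braid_b_conj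

theorem conj_a_shift_inv (h : IsPetrieCoxeter a r b) :
    a * (shift a r b)⁻¹ * a = (a * shift a r b * a)⁻¹ := by
  rw [mul_inv_rev, mul_inv_rev, h.inv_a, mul_assoc]

theorem commute_shift_conj_a (h : IsPetrieCoxeter a r b) :
    Commute (shift a r b) (a * shift a r b * a) := by
  have hcomm := h.dual.commute_shift_conj_b
  rwa [h.shift_dual, h.conj_a_shift_inv, Commute.inv_inv_iff] at hcomm

theorem conj_r_conj_b_shift (h : IsPetrieCoxeter a r b) :
    r * (b * shift a r b * b) * r = shift a r b * (b * shift a r b * b)⁻¹ := by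
  have hconj : r * (b * shift a r b * b) * r =
      b * (r * b * r) * (r * a * r * a * (r * a * r)) * (r * b * r) := by
    have hr (x : G) : r * (r * x) = x := by rw [← mul_assoc, h.mul_self_r, one_mul]
    conv_rhs => rw [h.dual.braid_b]
    rw [h.conj_b_shift]
    simp only [mul_assoc, hr]
  rw [eq_mul_inv_iff_mul_eq, hconj, h.conj_b_shift, h.shift_eq]
  exact mul_eq_of_braid h.dual.mul_self_conj h.mul_self_conj_conj h.braid_b h.braid_b_conj

theorem shift_mul_conj_a_conj_b_shift (h : IsPetrieCoxeter a r b) :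
    shift a r b * (a * (b * shift a r b * b) * a) =
      (b * shift a r b * b) * (a * shift a r b * a) := by
  have := affineA3_relation h.mul_self_a h.mul_self_b h.mul_self_conj h.comm h.commute_conj_conj
    h.dual.braid_b.symm h.braid_hole h.braid_b h.dual.braid_hole.symm
  rw [← h.shift_eq, ← h.conj_b_shift] at this
  simp only [← mul_assoc] at this ⊢
  rw [this]

theorem conj_r_conj_a_shift (h : IsPetrieCoxeter a r b) :
    r * (a * shift a r b * a) * r = shift a r b * (a * shift a r b * a)⁻¹ := by
  have hconj := h.dual.conj_r_conj_b_shift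
  rw [h.shift_dual, h.conj_a_shift_inv, inv_inv] at hconj
  rw [← inv_inj, mul_inv_rev, mul_inv_rev, h.inv_r, ← mul_assoc, hconj, mul_inv_rev, inv_inv]
  exact h.commute_shift_conj_a.inv_left.eq

theorem commute_conj_b_conj_a (h : IsPetrieCoxeter a r b) :
    Commute (b * shift a r b * b) (a * shift a r b * a) := by
  have hconj : Commute (a * shift a r b * a) (a * (b * shift a r b * b) * a) := by
    simpa [h.inv_a] using h.commute_shift_conj_b.conj a
  have hmul := h.commute_shift_conj_a.symm.mul_right hconj
  rw [h.shift_mul_conj_a_conj_b_shift] at hmul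
  simpa only [mul_inv_cancel_right] using (hmul.mul_right (Commute.refl _).inv_right).symm

theorem conj_a_conj_a (h : IsPetrieCoxeter a r b) (x : G) : a * (a * x * a) * a = x := by
  rw [mul_assoc, mul_assoc, h.mul_self_a, mul_one, ← mul_assoc, h.mul_self_a, one_mul]

theorem conj_a_pow (h : IsPetrieCoxeter a r b) {x : G} {n : ℕ} (hx : x ^ n = 1) :
    (a * x * a) ^ n = 1 := by
  have hconj := conj_pow (i := n) (a := a) (b := x)
  rwa [hx, mul_one, mul_inv_cancel, h.inv_a] at hconj

theorem normal_closure_shift (h : IsPetrieCoxeter a r b) (htop : Subgroup.closure {a, r, b} = ⊤) :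
    (Subgroup.closure {shift a r b, b * shift a r b * b, a * shift a r b * a}).Normal := by
  set u := shift a r b
  set v := b * u * b with hv
  set w := a * u * a with hw
  set T := Subgroup.closure {u, v, w}
  have huT : u ∈ T := Subgroup.subset_closure (.inl rfl)
  have hvT : v ∈ T := Subgroup.subset_closure (.inr (.inl rfl))
  have hwT : w ∈ T := Subgroup.subset_closure (.inr (.inr rfl))
  have hab : a * v * a ∈ T :=
    (mul_mem_cancel_left huT).1 (h.shift_mul_conj_a_conj_b_shift ▸ mul_mem hvT hwT)
  have hba : b * w * b = a * v * a := by
    simp only [hv, hw, mul_assoc, h.comm]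
    simp only [← mul_assoc, h.comm]
  have ha : a ∈ Subgroup.normalizer (T : Set G) := by
    refine mem_normalizer_closure_of_mul_self h.mul_self_a ?_
    rintro _ (rfl | rfl | rfl)
    exacts [hwT, hab, (h.conj_a_conj_a u).symm ▸ huT]
  have hr : r ∈ Subgroup.normalizer (T : Set G) := by
    refine mem_normalizer_closure_of_mul_self h.mul_self_r ?_
    rintro _ (rfl | rfl | rfl)
    · rw [h.commute_r_shift.eq, mul_assoc, h.mul_self_r, mul_one]
      exact huT
    · exact h.conj_r_conj_b_shift ▸ mul_mem huT (inv_mem hvT)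
    · exact h.conj_r_conj_a_shift ▸ mul_mem huT (inv_mem hwT)
  have hb : b ∈ Subgroup.normalizer (T : Set G) := by
    refine mem_normalizer_closure_of_mul_self h.mul_self_b ?_
    rintro _ (rfl | rfl | rfl)
    · exact hvT
    · exact (h.dual.conj_a_conj_a u).symm ▸ huT
    · exact hba ▸ hab
  rw [← Subgroup.normalizer_eq_top_iff, ← top_le_iff, ← htop, Subgroup.closure_le]
  simp [Set.insert_subset_iff, ha, hr, hb]

/-- The homomorphism `(i, j, k) ↦ u ^ i * (v ^ j * w ^ k)` from `(ℤ/n)³`, where `u` is the basic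
translation `shift a r b`, assumed to satisfy `u ^ n = 1`, and `v`, `w` are its conjugates by `b`
and by `a`. -/
def translationHom (h : IsPetrieCoxeter a r b) {n : ℕ} (hn : shift a r b ^ n = 1) :
    Multiplicative (ZMod n) × Multiplicative (ZMod n) × Multiplicative (ZMod n) →* G :=
  (zmodPowHom (shift a r b) hn).noncommCoprod
    ((zmodPowHom (b * shift a r b * b) (h.dual.conj_a_pow hn)).noncommCoprod
      (zmodPowHom (a * shift a r b * a) (h.conj_a_pow hn))
      fun _ _ => commute_zmodPowHom _ _ h.commute_conj_b_conj_a _ _)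
    fun _ _ => (commute_zmodPowHom _ _ h.commute_shift_conj_b _ _).mul_right
      (commute_zmodPowHom _ _ h.commute_shift_conj_a _ _)

theorem translationHom_ofAdd_intCast (h : IsPetrieCoxeter a r b) {n : ℕ}
    (hn : shift a r b ^ n = 1) (i j k : ℤ) :
    h.translationHom hn (.ofAdd (i : ZMod n), .ofAdd (j : ZMod n), .ofAdd (k : ZMod n)) =
      shift a r b ^ i * ((b * shift a r b * b) ^ j * (a * shift a r b * a) ^ k) := by
  rw [← zmodPowHom_intCast hn, ← zmodPowHom_intCast (h.conj_a_pow hn),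
    ← zmodPowHom_intCast (h.dual.conj_a_pow hn)]
  rfl

theorem range_translationHom (h : IsPetrieCoxeter a r b) {n : ℕ} (hn : shift a r b ^ n = 1) :
    (h.translationHom hn).range =
      Subgroup.closure {shift a r b, b * shift a r b * b, a * shift a r b * a} := by
  refine (MonoidHom.noncommCoprod_range _ _ _).trans ?_
  refine (congrArg _ (MonoidHom.noncommCoprod_range _ _ _)).trans ?_
  simp only [range_zmodPowHom,
    Subgroup.zpowers_eq_closure, ← Subgroup.closure_union, Set.singleton_union]

theorem pow_three_mem_center (h : IsPetrieCoxeter a r b) (ht : shift a r b = 1)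
    (htop : Subgroup.closure {a, r, b} = ⊤) : (b * r) ^ 3 ∈ Subgroup.center G := by
  have ha : Commute a ((b * r) ^ 3) := by
    rw [h.shift_eq_mul_pow_three, mul_eq_one_iff_eq_inv] at ht
    exact ht ▸ h.commute_a_pow_three.inv_right
  have hle : Subgroup.closure {a, r, b} ≤ Subgroup.centralizer {(b * r) ^ 3} := by
    rw [Subgroup.closure_le]
    rintro _ (rfl | rfl | rfl)
    all_goals rw [SetLike.mem_coe, Subgroup.mem_centralizer_singleton_iff]
    exacts [ha.eq, h.dual.commute_r_pow_three.eq, h.dual.commute_a_pow_three.eq]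
  rw [htop] at hle
  exact Subgroup.mem_center_iff.2 fun x =>
    Subgroup.mem_centralizer_singleton_iff.1 (hle (Subgroup.mem_top x))

theorem typeARelations (h : IsPetrieCoxeter a r b) :
    TypeARelations (fun i => ![r * b * r, b, r * a * r] (Fin.ofNat 3 i)) 3 := by
  constructor
  · intro i hi
    interval_cases i
    exacts [h.dual.mul_self_conj, h.mul_self_b, h.mul_self_conj]
  · intro i hi
    obtain rfl | rfl : i = 0 ∨ i = 1 := by omega
    exacts [h.braid_b, h.braid_hole]
  · intro i j hij hj
    obtain ⟨rfl, rfl⟩ : i = 0 ∧ j = 2 := by omega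
    exact h.commute_conj_conj.symm

theorem mul_pow_three_eq (h : IsPetrieCoxeter a r b) :
    r * b * r * b * (r * b * r) * (b * r) ^ 3 = r := by
  calc r * b * r * b * (r * b * r) * (b * r) ^ 3
    _ = r * ((b * r) ^ 3 * (b * r) ^ 3) := by
      simp only [pow_succ, pow_zero, one_mul, mul_assoc]
    _ = r := by rw [← pow_add, h.dual.pow_ar, mul_one]

theorem mem_closure_sup_zpowers (h : IsPetrieCoxeter a r b)
    (htop : Subgroup.closure {a, r, b} = ⊤) (x : G) :
    x ∈ Subgroup.closure {r * b * r, b, r * a * r} ⊔ Subgroup.zpowers ((b * r) ^ 3) := by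
  set S := Subgroup.closure {r * b * r, b, r * a * r} ⊔ Subgroup.zpowers ((b * r) ^ 3)
  have hconj_b : r * b * r ∈ S :=
    Subgroup.mem_sup_left (Subgroup.subset_closure (.inl rfl))
  have hb : b ∈ S := Subgroup.mem_sup_left (Subgroup.subset_closure (.inr (.inl rfl)))
  have hconj_a : r * a * r ∈ S :=
    Subgroup.mem_sup_left (Subgroup.subset_closure (.inr (.inr rfl)))
  have hr : r ∈ S := by
    nth_rw 1 [← h.mul_pow_three_eq]
    exact mul_mem (mul_mem (mul_mem hconj_b hb) hconj_b)
      (Subgroup.mem_sup_right (Subgroup.mem_zpowers _))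
  have ha : a ∈ S := (mul_mem_cancel_left hr).1 ((mul_mem_cancel_right hr).1 hconj_a)
  have hle : Subgroup.closure {a, r, b} ≤ S := by
    simp [Subgroup.closure_le, Set.insert_subset_iff, ha, hr, hb]
  exact hle (htop ▸ Subgroup.mem_top x)

open scoped Pointwise in
theorem mk_le_of_shift_eq_one (h : IsPetrieCoxeter a r b) (ht : shift a r b = 1)
    (htop : Subgroup.closure {a, r, b} = ⊤) : Cardinal.mk G ≤ 48 := by
  set S := Subgroup.closure {r * b * r, b, r * a * r} with hS
  set P := Subgroup.zpowers ((b * r) ^ 3)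
  have hnormal : P.Normal := ⟨fun x hx y => by
    have hcenter := Subgroup.zpowers_le.2 (h.pow_three_mem_center ht htop) hx
    rwa [Subgroup.mem_center_iff.1 hcenter, mul_inv_cancel_right]⟩
  have hcover : (Set.univ : Set G) ⊆ (S : Set G) * (P : Set G) := fun x _ => by
    rw [← Subgroup.mul_normal]
    exact h.mem_closure_sup_zpowers htop x
  have hcardS : Cardinal.mk S ≤ (24 : ℕ) := by
    have himage : (fun i => ![r * b * r, b, r * a * r] (Fin.ofNat 3 i)) '' Set.Iio 3 =
        {r * b * r, b, r * a * r} := by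
      rw [show Set.Iio 3 = ({0, 1, 2} : Set ℕ) by ext; simp; omega]
      simp only [Set.image_insert_eq, Set.image_singleton]
      rfl
    exact hS ▸ himage ▸ h.typeARelations.mk_closure_le_factorial
  have hcardP : Cardinal.mk P ≤ (2 : ℕ) :=
    mk_zpowers_le two_pos (by rw [← pow_mul]; exact h.dual.pow_ar)
  calc Cardinal.mk G
    _ = Cardinal.mk (Set.univ : Set G) := Cardinal.mk_univ.symm
    _ ≤ Cardinal.mk S * Cardinal.mk P :=
      (Cardinal.mk_le_mk_of_subset hcover).trans Cardinal.mk_mul_le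
    _ ≤ (24 : ℕ) * (2 : ℕ) := mul_le_mul' hcardS hcardP
    _ = 48 := by norm_num

theorem mk_quotient_closure_shift_le (h : IsPetrieCoxeter a r b)
    (htop : Subgroup.closure {a, r, b} = ⊤) :
    Cardinal.mk (G ⧸ Subgroup.closure {shift a r b, b * shift a r b * b, a * shift a r b * a}) ≤
      48 := by
  have := h.normal_closure_shift htop
  set π := QuotientGroup.mk'
    (Subgroup.closure {shift a r b, b * shift a r b * b, a * shift a r b * a})
  refine (h.map π).mk_le_of_shift_eq_one ?_ ?_
  · rw [← map_shift, ← MonoidHom.mem_ker, QuotientGroup.ker_mk']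
    exact Subgroup.subset_closure (.inl rfl)
  · have himage : π '' {a, r, b} = {π a, π r, π b} := by
      rw [Set.image_insert_eq, Set.image_pair]
    rw [← himage, ← MonoidHom.map_closure, htop,
      Subgroup.map_top_of_surjective _ (QuotientGroup.mk'_surjective _)]

end IsPetrieCoxeter

section Representations

open Equiv

/-- The affine reflection `x ↦ (x₃ + 1, x₁, x₂, x₀ - 1)`. -/
def affineRefl (R : Type*) [CommRing R] : Perm (R × R × R × R) :=
  Function.Involutive.toPerm (fun x => (x.2.2.2 + 1, x.2.1, x.2.2.1, x.1 - 1))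
    fun x => by simp

/-- The affine half-turn `x ↦ (-x₂, -x₁, -x₀, -x₃ - 1)`. -/
def affineTurn (R : Type*) [CommRing R] : Perm (R × R × R × R) :=
  Function.Involutive.toPerm (fun x => (-x.2.2.1, -x.2.1, -x.1, -x.2.2.2 - 1))
    fun x => by simp

/-- The linear reflection `x ↦ (x₀, x₂, x₁, x₃)`. -/
def linearRefl (R : Type*) : Perm (R × R × R × R) :=
  Function.Involutive.toPerm (fun x => (x.1, x.2.2.1, x.2.1, x.2.2.2)) fun x => by simp

@[simp]
theorem affineRefl_apply {R : Type*} [CommRing R] (x : R × R × R × R) :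
    affineRefl R x = (x.2.2.2 + 1, x.2.1, x.2.2.1, x.1 - 1) := rfl

@[simp]
theorem affineTurn_apply {R : Type*} [CommRing R] (x : R × R × R × R) :
    affineTurn R x = (-x.2.2.1, -x.2.1, -x.1, -x.2.2.2 - 1) := rfl

@[simp]
theorem linearRefl_apply {R : Type*} (x : R × R × R × R) :
    linearRefl R x = (x.1, x.2.2.1, x.2.1, x.2.2.2) := rfl

theorem isPetrieCoxeter_affine (R : Type*) [CommRing R] :
    IsPetrieCoxeter (affineRefl R) (affineTurn R) (linearRefl R) := by
  constructor <;> ext1 x <;> simp [pow_succ]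

theorem shift_affine (R : Type*) [CommRing R] :
    shift (affineRefl R) (affineTurn R) (linearRefl R) = Equiv.addRight (-1, 0, 1, 0) := by
  ext1 x
  simp [shift, pow_succ, Prod.ext_iff, sub_eq_add_neg, add_comm]

theorem linearRefl_mul_addRight_mul_linearRefl {R : Type*} [AddGroup R] (v : R × R × R × R) :
    linearRefl R * Equiv.addRight v * linearRefl R =
      Equiv.addRight (v.1, v.2.2.1, v.2.1, v.2.2.2) := by
  ext1 x
  simp [Prod.ext_iff]

theorem affineRefl_mul_addRight_mul_affineRefl {R : Type*} [CommRing R] (v : R × R × R × R) :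
    affineRefl R * Equiv.addRight v * affineRefl R =
      Equiv.addRight (v.2.2.2, v.2.1, v.2.2.1, v.1) := by
  ext1 x
  simp [Prod.ext_iff, sub_add_eq_add_sub, add_right_comm]

theorem shift_affine_pow {R : Type*} [CommRing R] {n : ℕ} (hn : (n : R) = 0) :
    shift (affineRefl R) (affineTurn R) (linearRefl R) ^ n = 1 := by
  rw [shift_affine, nsmul_addRight]
  ext1 x
  simp [hn]

theorem isPetrieCoxeter_point : IsPetrieCoxeter (G := Perm (Fin 4) × ℤˣ)
    (swap 0 3, 1) (swap 0 2, -1) (swap 1 2, 1) := by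
  constructor <;> decide +kernel

theorem shift_point :
    shift (G := Perm (Fin 4) × ℤˣ) (swap 0 3, 1) (swap 0 2, -1) (swap 1 2, 1) = 1 := by
  decide +kernel

end Representations

/-! ### The groups `H_m` -/

section PresentedGroup

variable {m : ℕ}

theorem isPetrieCoxeter_g (m : ℕ) : IsPetrieCoxeter (g m 0) (g m 1) (g m 2) := by
  have key : ∀ x ∈ rels m, PresentedGroup.mk (rels m) x = 1 := fun x hx =>
    PresentedGroup.one_of_mem hx
  simp only [rels, Set.mem_insert_iff, Set.mem_singleton_iff, forall_eq_or_imp, forall_eq] at key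
  obtain ⟨h0, h1, h2, h01, h12, h02, hhole, -⟩ := key
  have hsq0 : g m 0 * g m 0 = 1 := pow_two (g m 0) ▸ h0
  have hsq2 : g m 2 * g m 2 = 1 := pow_two (g m 2) ▸ h2
  exact ⟨hsq0, pow_two (g m 1) ▸ h1, hsq2, mul_comm_of_mul_pow_two_eq_one hsq0 hsq2 h02, h01, h12,
    hhole⟩

theorem shift_g_pow (m : ℕ) : shift (g m 0) (g m 1) (g m 2) ^ (2 * m) = 1 := by
  have hmem : r2 * ((r1 * r2) ^ 3 * (r0 * r1) ^ 3) ^ (2 * m) * r2 ∈ rels m := by simp [rels]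
  have hrel : g m 2 * shift (g m 0) (g m 1) (g m 2) ^ (2 * m) * g m 2 = 1 :=
    PresentedGroup.one_of_mem hmem
  rwa [← conj_eq_one_iff (a := g m 2), (isPetrieCoxeter_g m).dual.inv_a]

theorem closure_g (m : ℕ) : Subgroup.closure {g m 0, g m 1, g m 2} = ⊤ := by
  rw [← PresentedGroup.closure_range_of (rels m)]
  congr 1
  ext x
  simp [Fin.exists_fin_succ, g, eq_comm]

variable {G : Type*} [Group G] {a r b : G}

theorem freeGroupLift_eq_one_of_mem_rels (h : IsPetrieCoxeter a r b)
    (ht : shift a r b ^ (2 * m) = 1) : ∀ x ∈ rels m, FreeGroup.lift ![a, r, b] x = 1 := by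
  have hra : r * a * (a * r) = 1 := by
    rw [mul_assoc, ← mul_assoc a, h.mul_self_a, one_mul, h.mul_self_r]
  have hrb : r * b * (b * r) = 1 := by
    rw [mul_assoc, ← mul_assoc b, h.mul_self_b, one_mul, h.mul_self_r]
  rw [shift] at ht
  simp only [rels, r0, r1, r2, Set.mem_insert_iff, Set.mem_singleton_iff, forall_eq_or_imp,
    forall_eq, map_mul, map_pow, FreeGroup.lift_apply_of, Matrix.cons_val, pow_two _, ht, mul_one]
  exact ⟨h.mul_self_a, h.mul_self_r, h.mul_self_b, h.pow_ar, h.pow_rb,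
    pow_two (a * b) ▸ h.pow_ab, h.pow_hole, hra, h.mul_self_b, hrb⟩

/-- The homomorphism `H_m →* G` sending the generators to a triple that satisfies the relations of
the skew polyhedron `{6,6|3}` and whose basic translation has order dividing `2 * m`. -/
def lift (h : IsPetrieCoxeter a r b) (ht : shift a r b ^ (2 * m) = 1) :
    PresentedGroup (rels m) →* G :=
  PresentedGroup.toGroup (freeGroupLift_eq_one_of_mem_rels h ht)

@[simp]
theorem lift_g_zero (h : IsPetrieCoxeter a r b) (ht : shift a r b ^ (2 * m) = 1) :
    lift h ht (g m 0) = a := PresentedGroup.toGroup.of _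

@[simp]
theorem lift_g_one (h : IsPetrieCoxeter a r b) (ht : shift a r b ^ (2 * m) = 1) :
    lift h ht (g m 1) = r := PresentedGroup.toGroup.of _

@[simp]
theorem lift_g_two (h : IsPetrieCoxeter a r b) (ht : shift a r b ^ (2 * m) = 1) :
    lift h ht (g m 2) = b := PresentedGroup.toGroup.of _

end PresentedGroup

section Structure

open Equiv

/-- The projection of `H_m` onto its point group `S₄ × {±1}`, where `-1` stands for the central
inversion. -/
def pointHom (m : ℕ) : PresentedGroup (rels m) →* Perm (Fin 4) × ℤˣ :=
  lift isPetrieCoxeter_point (by rw [shift_point, one_pow])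

theorem pointHom_surjective (m : ℕ) : Function.Surjective (pointHom m) := by
  have hneg : (1, -1) ∈ (pointHom m).range :=
    ⟨(g m 1 * g m 2) ^ 3, by
      simp only [pointHom, map_mul, map_pow, lift_g_one, lift_g_two]; decide +kernel⟩
  have hswap : ∀ i : Fin 3, MonoidHom.inl _ ℤˣ (swap i.castSucc i.succ) ∈ (pointHom m).range := by
    rw [Fin.forall_fin_succ, Fin.forall_fin_two]
    refine ⟨⟨g m 1 * g m 2 * g m 1, ?_⟩, ⟨g m 2, ?_⟩, ⟨g m 1 * g m 0 * g m 1, ?_⟩⟩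
    all_goals
      simp only [pointHom, map_mul, lift_g_zero, lift_g_one, lift_g_two]
      decide +kernel
  have hperm : (pointHom m).range.comap (MonoidHom.inl _ ℤˣ) = ⊤ := by
    rw [← top_le_iff, ← Subgroup.closure_eq_top_of_mclosure_eq_top
      (Perm.mclosure_swap_castSucc_succ 3), Subgroup.closure_le]
    exact Set.range_subset_iff.2 hswap
  have hinl (σ : Perm (Fin 4)) : (σ, 1) ∈ (pointHom m).range :=
    Subgroup.mem_comap.1 (hperm ▸ Subgroup.mem_top σ)
  rintro ⟨σ, ε⟩
  obtain rfl | rfl := Int.units_eq_one_or ε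
  · exact hinl σ
  · have hmul := mul_mem (hinl σ) hneg
    rwa [Prod.mk_mul_mk, mul_one, one_mul] at hmul

theorem index_ker_pointHom (m : ℕ) : (pointHom m).ker.index = 48 := by
  rw [Subgroup.index_ker, MonoidHom.range_eq_top.2 (pointHom_surjective m), Subgroup.card_top,
    Nat.card_prod, Nat.card_perm, Nat.card_fin, Nat.card_eq_fintype_card]
  rfl

theorem closure_shift_le_ker_pointHom (m : ℕ) :
    Subgroup.closure {shift (g m 0) (g m 1) (g m 2),
      g m 2 * shift (g m 0) (g m 1) (g m 2) * g m 2,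
      g m 0 * shift (g m 0) (g m 1) (g m 2) * g m 0} ≤ (pointHom m).ker := by
  have hshift : pointHom m (shift (g m 0) (g m 1) (g m 2)) = 1 := by
    simp only [pointHom, map_shift, lift_g_zero, lift_g_one, lift_g_two, shift_point]
  have hconj (x : PresentedGroup (rels m)) (hx : x * x = 1) :
      pointHom m (x * shift (g m 0) (g m 1) (g m 2) * x) = 1 := by
    rw [map_mul, map_mul, hshift, mul_one, ← map_mul, hx, map_one]
  rw [Subgroup.closure_le]
  rintro _ (rfl | rfl | rfl)
  exacts [hshift, hconj _ (isPetrieCoxeter_g m).mul_self_b,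
    hconj _ (isPetrieCoxeter_g m).mul_self_a]

theorem range_translationHom_eq_ker (m : ℕ) :
    ((isPetrieCoxeter_g m).translationHom (shift_g_pow m)).range = (pointHom m).ker := by
  rw [(isPetrieCoxeter_g m).range_translationHom]
  refine eq_of_le_of_mk_quotient_le_index (closure_shift_le_ker_pointHom m) ?_ ?_ <;>
    rw [index_ker_pointHom]
  · norm_num
  · exact (isPetrieCoxeter_g m).mk_quotient_closure_shift_le (closure_g m)

theorem lift_affine_translationHom (m : ℕ) (i j k : ZMod (2 * m)) :
    lift (isPetrieCoxeter_affine (ZMod (2 * m))) (shift_affine_pow (ZMod.natCast_self _))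
      ((isPetrieCoxeter_g m).translationHom (shift_g_pow m) (.ofAdd i, .ofAdd j, .ofAdd k)) =
      Equiv.addRight (-i - j, j, i + k, -k) := by
  obtain ⟨i, rfl⟩ := ZMod.intCast_surjective i
  obtain ⟨j, rfl⟩ := ZMod.intCast_surjective j
  obtain ⟨k, rfl⟩ := ZMod.intCast_surjective k
  have hsum : k • (0, 0, 1, -1) + (j • (-1, 1, 0, 0) + i • (-1, 0, 1, 0)) =
      ((-i - j, j, i + k, -k) : ZMod (2 * m) × ZMod (2 * m) × ZMod (2 * m) × ZMod (2 * m)) := by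
    simp [sub_eq_neg_add, add_comm]
  rw [(isPetrieCoxeter_g m).translationHom_ofAdd_intCast, ← hsum]
  simp only [map_mul, map_zpow, map_shift, lift_g_zero, lift_g_one, lift_g_two,
    shift_affine, linearRefl_mul_addRight_mul_linearRefl, affineRefl_mul_addRight_mul_affineRefl,
    zsmul_addRight]
  simp only [addRight_add, mul_assoc]

theorem translationHom_injective (m : ℕ) :
    Function.Injective ((isPetrieCoxeter_g m).translationHom (shift_g_pow m)) := by
  rw [injective_iff_map_eq_one]
  rintro ⟨i, j, k⟩ hijk
  obtain ⟨i, rfl⟩ := Multiplicative.ofAdd.surjective i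
  obtain ⟨j, rfl⟩ := Multiplicative.ofAdd.surjective j
  obtain ⟨k, rfl⟩ := Multiplicative.ofAdd.surjective k
  have haff := lift_affine_translationHom m i j k
  rw [hijk, map_one] at haff
  have horigin : 0 = -i - j ∧ 0 = j ∧ 0 = i + k ∧ k = 0 := by
    simpa [Prod.ext_iff] using DFunLike.congr_fun haff 0
  obtain ⟨-, hj, hik, rfl⟩ := horigin
  obtain rfl : i = 0 := by rw [hik, add_zero]
  rw [← hj]
  rfl

theorem isSolvable_presentedGroup (m : ℕ) : Group.IsSolvable (PresentedGroup (rels m)) := by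
  have := isSolvable_perm (α := Fin 4) (by simp)
  exact Group.isSolvable_of_ker_le_range _ (pointHom m) (range_translationHom_eq_ker m).ge

theorem card_presentedGroup (m : ℕ) : Nat.card (PresentedGroup (rels m)) = 384 * m ^ 3 := by
  set τ := (isPetrieCoxeter_g m).translationHom (shift_g_pow m)
  calc Nat.card (PresentedGroup (rels m))
    _ = Nat.card τ.range * τ.range.index := τ.range.card_mul_index.symm
    _ = 2 * m * (2 * m * (2 * m)) * 48 := by
      rw [Nat.card_congr (MonoidHom.ofInjective (translationHom_injective m)).toEquiv.symm,
        range_translationHom_eq_ker, index_ker_pointHom, Nat.card_prod, Nat.card_prod,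
        Nat.card_congr Multiplicative.toAdd, Nat.card_zmod]
    _ = 384 * m ^ 3 := by ring

end Structure

section Orders

open Equiv

/-- The affine action of `H_m` on `(ℤ/2)⁴`. -/
def affineHom (m : ℕ) : PresentedGroup (rels m) →* Perm (ZMod 2 × ZMod 2 × ZMod 2 × ZMod 2) :=
  lift (isPetrieCoxeter_affine (ZMod 2))
    (shift_affine_pow ((ZMod.natCast_eq_zero_iff _ _).2 (dvd_mul_right 2 m)))

theorem orderOf_g_zero (m : ℕ) : orderOf (g m 0) = 2 := by
  refine orderOf_eq_of_map_pow_ne_one (affineHom m)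
    (pow_two (g m 0) ▸ (isPetrieCoxeter_g m).mul_self_a) ?_
  simp only [affineHom, lift_g_zero]
  decide +kernel

theorem orderOf_g_one (m : ℕ) : orderOf (g m 1) = 2 := by
  refine orderOf_eq_of_map_pow_ne_one (affineHom m)
    (pow_two (g m 1) ▸ (isPetrieCoxeter_g m).mul_self_r) ?_
  simp only [affineHom, lift_g_one]
  decide +kernel

theorem orderOf_g_two (m : ℕ) : orderOf (g m 2) = 2 := by
  refine orderOf_eq_of_map_pow_ne_one (affineHom m)
    (pow_two (g m 2) ▸ (isPetrieCoxeter_g m).mul_self_b) ?_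
  simp only [affineHom, lift_g_two]
  decide +kernel

theorem orderOf_g_zero_mul_g_two (m : ℕ) : orderOf (g m 0 * g m 2) = 2 := by
  refine orderOf_eq_of_map_pow_ne_one (affineHom m) (isPetrieCoxeter_g m).pow_ab ?_
  simp only [affineHom, map_mul, lift_g_zero, lift_g_two]
  decide +kernel

theorem orderOf_g_zero_mul_g_one (m : ℕ) : orderOf (g m 0 * g m 1) = 6 := by
  refine orderOf_eq_of_map_pow_ne_one (affineHom m) (isPetrieCoxeter_g m).pow_ar ?_
  simp only [affineHom, map_mul, lift_g_zero, lift_g_one]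
  decide +kernel

theorem orderOf_g_one_mul_g_two (m : ℕ) : orderOf (g m 1 * g m 2) = 6 := by
  refine orderOf_eq_of_map_pow_ne_one (affineHom m) (isPetrieCoxeter_g m).pow_rb ?_
  simp only [affineHom, map_mul, lift_g_one, lift_g_two]
  decide +kernel

theorem g_injective (m : ℕ) : Function.Injective (g m) := by
  have hcomp : affineHom m ∘ g m =
      ![affineRefl (ZMod 2), affineTurn (ZMod 2), linearRefl (ZMod 2)] := by
    ext1 i
    fin_cases i
    exacts [lift_g_zero _ _, lift_g_one _ _, lift_g_two _ _]
  refine Function.Injective.of_comp (f := affineHom m) ?_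
  rw [hcomp]
  decide +kernel

theorem interProp_g (m : ℕ) : InterProp ![g m 0, g m 1, g m 2] := by
  have h := isPetrieCoxeter_g m
  have hg : ![g m 0, g m 1, g m 2] = g m := FinVec.etaExpand_eq (g m)
  have hsq (i : Fin 3) : g m i * g m i = 1 := by
    fin_cases i
    exacts [h.mul_self_a, h.mul_self_r, h.mul_self_b]
  rw [hg]
  refine interProp_of_inf_le ?_ ?_ ?_ ?_
  · exact fun i j hij => closure_singleton_inf_closure_singleton_le (hsq i) (hsq j)
      ((g_injective m).ne hij)
  · refine closure_pair_inf_closure_pair_le (n := 6) (k := 2) (affineHom m) h.mul_self_a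
      h.mul_self_r h.mul_self_b h.pow_ar h.pow_ab ?_
    simp only [affineHom, lift_g_zero, lift_g_one, lift_g_two]
    decide +kernel
  · refine closure_pair_inf_closure_pair_le (n := 6) (k := 6) (affineHom m) h.mul_self_r
      h.mul_self_a h.mul_self_b (mul_pow_eq_one_comm.1 h.pow_ar) h.pow_rb ?_
    simp only [affineHom, lift_g_zero, lift_g_one, lift_g_two]
    decide +kernel
  · refine closure_pair_inf_closure_pair_le (n := 2) (k := 6) (affineHom m) h.mul_self_b
      h.mul_self_a h.mul_self_r h.dual.pow_ab (mul_pow_eq_one_comm.1 h.pow_rb) ?_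
    simp only [affineHom, lift_g_zero, lift_g_one, lift_g_two]
    decide +kernel

end Orders

/-- Theorem 5.1, family `H_m`: a solvable string C-group of type `{6,6}`
of order `384 m^3`. -/
theorem stmt_13 (m : ℕ) (hm : 0 < m) :
    Nat.card (PresentedGroup (rels m)) = 384 * m ^ 3 ∧
    IsSolvable (PresentedGroup (rels m)) ∧
    orderOf (g m 0) = 2 ∧ orderOf (g m 1) = 2 ∧ orderOf (g m 2) = 2 ∧
    orderOf (g m 0 * g m 2) = 2 ∧
    orderOf (g m 0 * g m 1) = 6 ∧ orderOf (g m 1 * g m 2) = 6 ∧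
    InterProp ![g m 0, g m 1, g m 2] :=
  ⟨card_presentedGroup m, isSolvable_presentedGroup m, orderOf_g_zero m, orderOf_g_one m,
    orderOf_g_two m, orderOf_g_zero_mul_g_two m, orderOf_g_zero_mul_g_one m,
    orderOf_g_one_mul_g_two m, interProp_g m⟩

end Stmt13
end

section
/- For every positive integer m, let I_m be the presented group on generators ρ0, ρ1, ρ2 with relation set {ρ0^2, ρ1^2, ρ2^2, (ρ0ρ1)^6, (ρ1ρ2)^6, (ρ0ρ2)^2, (ρ2ρ1ρ0ρ1)^3, ρ0((ρ0ρ1)^2(ρ2ρ1)^2)^{3m}ρ0, ((ρ1ρ2)^2(ρ1ρ0)^2)^{3m}, ρ2((ρ1ρ0)^2(ρ1ρ2)^2)^{3m}ρ2}. Then I_m has order 768·m^3, I_m is solvable, in I_m the images of ρ0, ρ1, ρ2 and ρ0ρ2 have order exactly 2, the images of ρ0ρ1 and ρ1ρ2 have order exactly 6, and the triple of images of (ρ0, ρ1, ρ2) satisfies the intersection property in I_m. -/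
namespace Stmt14

def r0 : FreeGroup (Fin 3) := FreeGroup.of 0
def r1 : FreeGroup (Fin 3) := FreeGroup.of 1
def r2 : FreeGroup (Fin 3) := FreeGroup.of 2

/-- The relations of the presented group `I_m` of Theorem 5.1. -/
def rels (m : ℕ) : Set (FreeGroup (Fin 3)) :=
  {r0 ^ 2, r1 ^ 2, r2 ^ 2, (r0 * r1) ^ 6, (r1 * r2) ^ 6, (r0 * r2) ^ 2,
   (r2 * r1 * r0 * r1) ^ 3,
   r0 * ((r0 * r1) ^ 2 * (r2 * r1) ^ 2) ^ (3 * m) * r0,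
   ((r1 * r2) ^ 2 * (r1 * r0) ^ 2) ^ (3 * m),
   r2 * ((r1 * r0) ^ 2 * (r1 * r2) ^ 2) ^ (3 * m) * r2}

/-- The image of the `i`-th generator in `I_m`. -/
def g (m : ℕ) (i : Fin 3) : PresentedGroup (rels m) := PresentedGroup.of i

/-- The intersection property for a triple of elements. -/
def InterProp {G : Type*} [Group G] (ρ : Fin 3 → G) : Prop :=
  ∀ I J : Set (Fin 3),
    Subgroup.closure (ρ '' I) ⊓ Subgroup.closure (ρ '' J) =
      Subgroup.closure (ρ '' (I ∩ J))

/-!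
`I_m` is a crystallographic group reduced modulo a sublattice of its translations. The three
half-turns conjugate to `ρ₀ρ₂` under the rotation `(ρ₀ρ₁)²` and their conjugates by `ρ₁` have
parallel axes in pairs, and the product of two half-turns about parallel axes is a translation.
The three translations `T₀`, `T₁`, `T₂` obtained in this way commute, and the relators involving
`m` all say that `D = T₀ T₁ T₂` satisfies `D ^ m = 1`, which also forces `Tᵢ ^ (4 * m) = 1`.

Adjoining `D`, `T₁`, `T₀`, the half-turns, `ρ₀ρ₁` and `ρ₀` one at a time gives a polycyclic series,
hence solvability and the bound `m * (4 * m)² * 2² * 6 * 2 = 768 * m ^ 3` on the order. It is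
attained: the linear part maps `I_m` onto `S₄ × {±1}`, of order 48, and the `(4 * m)² * m` products
of powers of `T₀`, `T₁` and `D` in the kernel move the origin of affine space over `ZMod (8 * m)` to
distinct points. Since the subgroups generated by two of the generators are dihedral of order 12 or
4, the intersection property can be checked in a single finite quotient, the affine action over
`ZMod 4`.
-/

section GroupTheory

variable {G : Type*} [Group G]

theorem mul_mul_pow_three {u : G} (hu : u ^ 3 = 1) (x y : G) :
    (x * u * y) ^ 3 = x * MulAut.conj u (y * x) * MulAut.conj (u ^ 2) (y * x) * y := by
  have hu' : (u ^ 2)⁻¹ = u := inv_eq_of_mul_eq_one_right (by rw [← pow_succ, hu])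
  rw [MulAut.conj_apply, MulAut.conj_apply, hu']
  simp only [pow_succ, pow_zero, one_mul, mul_assoc, inv_mul_cancel_left]

theorem map_mem_closure {H : Type*} [Group H] {S : Set G} {T : Set H} (f : G →* H)
    (hf : ∀ s ∈ S, f s ∈ Subgroup.closure T) {x : G} (hx : x ∈ Subgroup.closure S) :
    f x ∈ Subgroup.closure T :=
  (Subgroup.closure_le ((Subgroup.closure T).comap f)).2 hf hx

theorem orderOf_eq_of_map_pow_ne_one {H : Type*} [Group H] (f : G →* H) {x : G} {n : ℕ}
    (hn : 0 < n) (hx : x ^ n = 1) (hf : ∀ k < n, 0 < k → f x ^ k ≠ 1) : orderOf x = n :=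
  (orderOf_eq_iff hn).2 ⟨hx, fun k hkn hk h => hf k hkn hk (by rw [← map_pow, h, map_one])⟩

/-- The conjunction of finiteness, solvability and a bound on the order, the three properties
that are carried along a polycyclic series. -/
structure IsSolvableOfCardLE (H : Subgroup G) (k : ℕ) : Prop where
  finite : Finite H
  isSolvable : Group.IsSolvable H
  card_le : Nat.card H ≤ k

theorem isSolvable_sup_of_le_normalizer {H K : Subgroup G} (hHK : H ≤ Subgroup.normalizer K)
    [Group.IsSolvable H] [Group.IsSolvable K] : Group.IsSolvable (H ⊔ K : Subgroup G) := by
  have := Subgroup.normal_subgroupOf_sup_of_le_normalizer hHK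
  have := Subgroup.normal_subgroupOf_of_le_normalizer hHK
  let e := QuotientGroup.quotientInfEquivProdNormalizerQuotient H K hHK
  have : Group.IsSolvable (K.subgroupOf (H ⊔ K)) :=
    Group.isSolvable_of_isSolvable_injective
      (f := (Subgroup.subgroupOfEquivOfLe (le_sup_right : K ≤ H ⊔ K)).toMonoidHom)
      (Subgroup.subgroupOfEquivOfLe le_sup_right).injective
  rw [Group.isSolvable_iff_subgroup_quotient (K.subgroupOf (H ⊔ K))]
  exact ⟨this, Group.isSolvable_of_surjective (f := e.toMonoidHom) e.surjective⟩

theorem IsSolvableOfCardLE.closure_insert {S : Set G} {k n : ℕ} {x : G}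
    (hS : IsSolvableOfCardLE (Subgroup.closure S) k) (hn : 0 < n) (hx : x ^ n = 1)
    (hconj : ∀ s ∈ S, MulAut.conj x s ∈ Subgroup.closure S) :
    IsSolvableOfCardLE (Subgroup.closure (insert x S)) (n * k) := by
  obtain ⟨_, _, h_card⟩ := hS
  have h_normalizes : Subgroup.zpowers x ≤ Subgroup.normalizer (Subgroup.closure S) := by
    rw [Subgroup.zpowers_le]
    have h_le : Subgroup.closure S ≤ (Subgroup.closure S).comap (MulAut.conj x).toMonoidHom :=
      (Subgroup.closure_le _).2 hconj
    exact Subgroup.mem_normalizer_fintype fun y hy => h_le hy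
  have h_prod := Subgroup.coe_mul_of_left_le_normalizer_right _ _ h_normalizes
  have h_order : Nat.card (Subgroup.zpowers x) ≤ n := by
    rw [Nat.card_zpowers]
    exact orderOf_le_of_pow_eq_one hn hx
  have : Finite (Subgroup.zpowers x) := (isOfFinOrder_iff_pow_eq_one.2 ⟨n, hn, hx⟩).finite_zpowers
  rw [Set.insert_eq, Subgroup.closure_union, ← Subgroup.zpowers_eq_closure]
  refine ⟨?_, isSolvable_sup_of_le_normalizer h_normalizes, ?_⟩
  · rw [← SetLike.coe_sort_coe, h_prod]
    exact Set.Finite.mul (Set.toFinite _) (Set.toFinite _)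
  · rw [← SetLike.coe_sort_coe, h_prod]
    exact Set.natCard_mul_le.trans (Nat.mul_le_mul h_order h_card)

theorem exists_zpow_eq_pow_fin {x : G} {n : ℕ} (hn : 0 < n) (hx : x ^ n = 1) (k : ℤ) :
    ∃ i : Fin n, x ^ k = x ^ i.val := by
  have hn' : (n : ℤ) ≠ 0 := by exact_mod_cast hn.ne'
  obtain ⟨i, hi⟩ := Int.eq_ofNat_of_zero_le (Int.emod_nonneg k hn')
  have hin : i < n := by exact_mod_cast hi ▸ Int.emod_lt_of_pos k (by exact_mod_cast hn)
  exact ⟨⟨i, hin⟩, by rw [zpow_eq_zpow_emod' k hx, hi, zpow_natCast]⟩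

theorem exists_zpow_of_mem_closure_pair {x y z : G} (hx : x ^ 2 = 1) (hy : y ^ 2 = 1)
    (hz : z ∈ Subgroup.closure {x, y}) : ∃ k : ℤ, z = (x * y) ^ k ∨ z = (x * y) ^ k * x := by
  rw [sq] at hx hy
  have h_mul {w : G} (hw : ∃ k : ℤ, w = (x * y) ^ k ∨ w = (x * y) ^ k * x) {s : G}
      (hs : s ∈ ({x, y} : Set G)) : ∃ k : ℤ, w * s = (x * y) ^ k ∨ w * s = (x * y) ^ k * x := by
    obtain ⟨k, rfl | rfl⟩ := hw <;> obtain rfl | rfl := hs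
    · exact ⟨k, .inr rfl⟩
    · exact ⟨k - 1, .inr (by rw [zpow_sub_one, mul_inv_rev, inv_eq_of_mul_eq_one_left hy,
        inv_eq_of_mul_eq_one_left hx, mul_assoc, mul_assoc, hx, mul_one])⟩
    · exact ⟨k, .inl (by rw [mul_assoc, hx, mul_one])⟩
    · exact ⟨k + 1, .inl (by rw [zpow_add_one, mul_assoc])⟩
  have h_inv {s : G} (hs : s ∈ ({x, y} : Set G)) : s⁻¹ = s := by
    obtain rfl | rfl := hs
    exacts [inv_eq_of_mul_eq_one_left hx, inv_eq_of_mul_eq_one_left hy]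
  induction hz using Subgroup.closure_induction_right with
  | one => exact ⟨0, .inl (zpow_zero _).symm⟩
  | mul_right w _ s hs ih => exact h_mul ih hs
  | mul_inv_cancel w _ s hs ih => exact (h_inv hs).symm ▸ h_mul ih hs

theorem exists_pow_of_mem_closure_pair {x y z : G} {n : ℕ} (hx : x ^ 2 = 1) (hy : y ^ 2 = 1)
    (hn : 0 < n) (hxy : (x * y) ^ n = 1) (hz : z ∈ Subgroup.closure {x, y}) :
    ∃ (i : Fin n) (s : Fin 2), z = (x * y) ^ i.val * x ^ s.val := by
  obtain ⟨k, hk⟩ := exists_zpow_of_mem_closure_pair hx hy hz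
  obtain ⟨i, hi⟩ := exists_zpow_eq_pow_fin hn hxy k
  obtain rfl | rfl := hk
  · exact ⟨i, 0, by rw [hi, Fin.val_zero, pow_zero, mul_one]⟩
  · exact ⟨i, 1, by rw [hi, Fin.val_one, pow_one]⟩

/-- It suffices to separate the nontrivial rotations of one dihedral group from the other dihedral
group in a quotient. -/
theorem closure_pair_inf_closure_pair_le {H : Type*} [Group H] (f : G →* H) {x y z : G} {p q : ℕ}
    (hx : x ^ 2 = 1) (hy : y ^ 2 = 1) (hz : z ^ 2 = 1) (hp : 0 < p) (hq : 0 < q)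
    (hxy : (x * y) ^ p = 1) (hxz : (x * z) ^ q = 1)
    (hf : ∀ (i : Fin p) (j : Fin q) (s t : Fin 2),
      (f x * f y) ^ i.val * f x ^ s.val = (f x * f z) ^ j.val * f x ^ t.val → i.val = 0) :
    Subgroup.closure {x, y} ⊓ Subgroup.closure {x, z} ≤ Subgroup.zpowers x := by
  rintro w ⟨hwy, hwz⟩
  obtain ⟨i, s, rfl⟩ := exists_pow_of_mem_closure_pair hx hy hp hxy hwy
  obtain ⟨j, t, h_eq⟩ := exists_pow_of_mem_closure_pair hx hz hq hxz hwz
  have hi : i.val = 0 := hf i j s t (by simpa only [map_mul, map_pow] using congrArg f h_eq)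
  rw [hi, pow_zero, one_mul]
  exact Subgroup.npow_mem_zpowers x s

theorem zpowers_inf_zpowers_eq_bot {x y : G} (hx : orderOf x = 2) (hy : orderOf y = 2)
    (hxy : x ≠ y) : Subgroup.zpowers x ⊓ Subgroup.zpowers y = ⊥ := by
  have h_mem {x z : G} (hx : orderOf x = 2) (hz : z ∈ Subgroup.zpowers x) : z = 1 ∨ z = x := by
    obtain ⟨k, rfl⟩ := hz
    obtain ⟨i, hi⟩ := exists_zpow_eq_pow_fin two_pos (hx ▸ pow_orderOf_eq_one x) k
    fin_cases i
    · exact .inl (hi.trans (pow_zero x))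
    · exact .inr (hi.trans (pow_one x))
  rw [eq_bot_iff]
  rintro z ⟨hzx, hzy⟩
  obtain rfl | rfl := h_mem hx hzx
  · exact one_mem _
  · exact (h_mem hy hzy).resolve_right hxy

theorem closure_image_inf_closure_image_le {ι : Type*} {ρ : ι → G} {i j k : ι} {I J : Set ι}
    (hI : I ⊆ {k, i}) (hJ : J ⊆ {k, j})
    (h_ki : Subgroup.zpowers (ρ k) ⊓ Subgroup.zpowers (ρ i) = ⊥)
    (h_kj : Subgroup.zpowers (ρ k) ⊓ Subgroup.zpowers (ρ j) = ⊥)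
    (h_pair : Subgroup.closure {ρ k, ρ i} ⊓ Subgroup.closure {ρ k, ρ j} ≤ Subgroup.zpowers (ρ k)) :
    Subgroup.closure (ρ '' I) ⊓ Subgroup.closure (ρ '' J) ≤ Subgroup.closure (ρ '' (I ∩ J)) := by
  have h_le : Subgroup.closure (ρ '' I) ⊓ Subgroup.closure (ρ '' J) ≤ Subgroup.zpowers (ρ k) := by
    refine le_trans (inf_le_inf ?_ ?_) h_pair
    · exact Subgroup.closure_mono (Set.image_pair ρ k i ▸ Set.image_mono hI)
    · exact Subgroup.closure_mono (Set.image_pair ρ k j ▸ Set.image_mono hJ)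
  have h_singleton {K : Set ι} {l : ι} (hkK : k ∉ K) (hK : K ⊆ {k, l}) :
      Subgroup.closure (ρ '' K) ≤ Subgroup.zpowers (ρ l) := by
    rw [Subgroup.zpowers_eq_closure, ← Set.image_singleton]
    exact Subgroup.closure_mono (Set.image_mono ((Set.subset_insert_iff_of_notMem hkK).1 hK))
  by_cases hkI : k ∈ I
  · by_cases hkJ : k ∈ J
    · exact h_le.trans (Subgroup.zpowers_le.2 (Subgroup.subset_closure ⟨k, ⟨hkI, hkJ⟩, rfl⟩))
    · exact (le_inf h_le (inf_le_right.trans (h_singleton hkJ hJ))).trans (h_kj.le.trans bot_le)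
  · exact (le_inf h_le (inf_le_left.trans (h_singleton hkI hI))).trans (h_ki.le.trans bot_le)

theorem interProp_of_closure_pair_inf_le {ρ : Fin 3 → G}
    (h_single : ∀ i j, i ≠ j → Subgroup.zpowers (ρ i) ⊓ Subgroup.zpowers (ρ j) = ⊥)
    (h_pair : ∀ i j k, i ≠ j → i ≠ k → j ≠ k →
      Subgroup.closure {ρ i, ρ j} ⊓ Subgroup.closure {ρ i, ρ k} ≤ Subgroup.zpowers (ρ i)) :
    InterProp ρ := by
  intro I J
  refine le_antisymm ?_ (le_inf (Subgroup.closure_mono (Set.image_mono Set.inter_subset_left))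
    (Subgroup.closure_mono (Set.image_mono Set.inter_subset_right)))
  by_cases hIJ : I ⊆ J
  · rw [Set.inter_eq_left.2 hIJ]
    exact inf_le_left
  by_cases hJI : J ⊆ I
  · rw [Set.inter_eq_right.2 hJI]
    exact inf_le_right
  obtain ⟨i, hiI, hiJ⟩ := Set.not_subset.1 hIJ
  obtain ⟨j, _, hjI⟩ := Set.not_subset.1 hJI
  have hij : i ≠ j := fun h => hjI (h ▸ hiI)
  obtain ⟨k, hki, hkj, h_cases⟩ : ∃ k, k ≠ i ∧ k ≠ j ∧ ∀ l, l = i ∨ l = j ∨ l = k := by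
    clear * - hij
    revert i j
    decide
  have hI : I ⊆ {k, i} := fun l hl =>
    (h_cases l).elim .inr fun h => h.elim (fun hlj => (hjI (hlj ▸ hl)).elim) .inl
  have hJ : J ⊆ {k, j} := fun l hl =>
    (h_cases l).elim (fun hli => (hiJ (hli ▸ hl)).elim) fun h => h.elim .inr .inl
  exact closure_image_inf_closure_image_le hI hJ (h_single k i hki) (h_single k j hkj)
    (h_pair k i j hki hkj hij)

end GroupTheory

section Relations

variable {G : Type*} [Group G]

/-- The relators of `I_m` in which `m` does not occur. They hold among the generators
`a = ρ₀`, `b = ρ₁`, `c = ρ₂` of an infinite crystallographic group, of which every `I_m` is a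
quotient. -/
structure CrystalRelations (a b c : G) : Prop where
  aa : a ^ 2 = 1
  bb : b ^ 2 = 1
  cc : c ^ 2 = 1
  ab : (a * b) ^ 6 = 1
  bc : (b * c) ^ 6 = 1
  ac : (a * c) ^ 2 = 1
  cbab : (c * b * a * b) ^ 3 = 1

/-- The rotation of order three generating the stabilizer of the diagonal direction. -/
def rot (a b : G) : G := (a * b) ^ 2

/-- Conjugation by the `i`-th power of `rot a b`. The index lives in `ZMod 3` because
`rot a b` has order three in all groups considered. -/
def spin (a b : G) (i : ZMod 3) : MulAut G := MulAut.conj (rot a b ^ i.val)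

/-- The three conjugates of the half-turn `a * c` under the rotation `rot a b`. -/
def halfTurn (a b c : G) (i : ZMod 3) : G := spin a b i (a * c)

/-- The three conjugates of `b * (a * c) * b`, half-turns about axes that are parallel to, but
disjoint from, those of `halfTurn a b c`. -/
def halfTurn' (a b c : G) (i : ZMod 3) : G := spin a b i (b * (a * c) * b)

/-- The translations obtained as products of two half-turns with parallel axes. -/
def translation (a b c : G) (i : ZMod 3) : G := halfTurn a b c i * halfTurn' a b c (i - 1)

/-- The translation along the axis of `rot a b`. -/
def diagonal (a b c : G) : G :=
  translation a b c 0 * translation a b c 1 * translation a b c 2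

theorem spin_zero (a b x : G) : spin a b 0 x = x := by simp [spin]

theorem halfTurn_zero (a b c : G) : halfTurn a b c 0 = a * c := spin_zero a b _

theorem halfTurn'_zero (a b c : G) : halfTurn' a b c 0 = b * (a * c) * b := spin_zero a b _

end Relations

namespace CrystalRelations

variable {G : Type*} [Group G] {a b c : G}

theorem a_mul_a (h : CrystalRelations a b c) : a * a = 1 := by rw [← sq, h.aa]
theorem b_mul_b (h : CrystalRelations a b c) : b * b = 1 := by rw [← sq, h.bb]
theorem c_mul_c (h : CrystalRelations a b c) : c * c = 1 := by rw [← sq, h.cc]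
theorem a_inv (h : CrystalRelations a b c) : a⁻¹ = a := inv_eq_of_mul_eq_one_left h.a_mul_a
theorem b_inv (h : CrystalRelations a b c) : b⁻¹ = b := inv_eq_of_mul_eq_one_left h.b_mul_b
theorem c_inv (h : CrystalRelations a b c) : c⁻¹ = c := inv_eq_of_mul_eq_one_left h.c_mul_c

theorem a_mul_a_mul (h : CrystalRelations a b c) (x : G) : a * (a * x) = x := by
  rw [← mul_assoc, h.a_mul_a, one_mul]

theorem b_mul_b_mul (h : CrystalRelations a b c) (x : G) : b * (b * x) = x := by
  rw [← mul_assoc, h.b_mul_b, one_mul]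

theorem a_mul_c (h : CrystalRelations a b c) : a * c = c * a := by
  have h_inv : a * c = (a * c)⁻¹ := eq_inv_of_mul_eq_one_left (by rw [← sq, h.ac])
  rw [h_inv, mul_inv_rev, h.a_inv, h.c_inv]

theorem c_mul_a_mul (h : CrystalRelations a b c) (x : G) : c * (a * x) = a * (c * x) := by
  rw [← mul_assoc, ← h.a_mul_c, mul_assoc]

theorem rot_pow_three (h : CrystalRelations a b c) : rot a b ^ 3 = 1 := by
  rw [rot, ← pow_mul, h.ab]

theorem rot_inv (h : CrystalRelations a b c) : (rot a b)⁻¹ = (b * a) ^ 2 := by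
  rw [rot, ← inv_pow, mul_inv_rev, h.a_inv, h.b_inv]

theorem rot_pow_val_add (h : CrystalRelations a b c) (i j : ZMod 3) :
    rot a b ^ (i + j).val = rot a b ^ i.val * rot a b ^ j.val := by
  rw [ZMod.val_add, ← pow_eq_pow_mod _ h.rot_pow_three, pow_add]

theorem rot_pow_val_neg (h : CrystalRelations a b c) (i : ZMod 3) :
    rot a b ^ (-i).val = (rot a b)⁻¹ ^ i.val := by
  rw [inv_pow, eq_inv_iff_mul_eq_one, ← h.rot_pow_val_add, neg_add_cancel, ZMod.val_zero, pow_zero]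

theorem conj_a_rot (h : CrystalRelations a b c) : MulAut.conj a (rot a b) = (rot a b)⁻¹ := by
  rw [h.rot_inv, rot, map_pow, MulAut.conj_apply, h.a_inv, h.a_mul_a_mul]

theorem conj_b_rot (h : CrystalRelations a b c) : MulAut.conj b (rot a b) = (rot a b)⁻¹ := by
  rw [h.rot_inv, rot, map_pow, MulAut.conj_apply, h.b_inv, ← mul_assoc, mul_assoc _ b, h.b_mul_b,
    mul_one]

theorem spin_add (h : CrystalRelations a b c) (i j : ZMod 3) (x : G) :
    spin a b (i + j) x = spin a b i (spin a b j x) := by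
  rw [spin, h.rot_pow_val_add, map_mul, MulAut.mul_apply, spin, spin]

theorem conj_spin_of_conj_rot (h : CrystalRelations a b c) {u : G}
    (hu : MulAut.conj u (rot a b) = (rot a b)⁻¹) (i : ZMod 3) (x : G) :
    MulAut.conj u (spin a b i x) = spin a b (-i) (MulAut.conj u x) := by
  have hpow : MulAut.conj u (rot a b ^ i.val) = rot a b ^ (-i).val := by
    rw [map_pow, hu, h.rot_pow_val_neg]
  rw [spin, MulAut.conj_apply (rot a b ^ i.val), map_mul, map_mul, map_inv, hpow, spin,
    MulAut.conj_apply (rot a b ^ (-i).val)]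

theorem mul_rot_mul_pow_three (h : CrystalRelations a b c) (x y : G) :
    (x * rot a b * y) ^ 3 = x * spin a b 1 (y * x) * spin a b 2 (y * x) * y := by
  rw [mul_mul_pow_three h.rot_pow_three, spin, spin, ZMod.val_one, pow_one,
    ZMod.val_ofNat_of_lt (by decide)]

theorem spin_halfTurn (h : CrystalRelations a b c) (i j : ZMod 3) :
    spin a b i (halfTurn a b c j) = halfTurn a b c (i + j) := by
  rw [halfTurn, halfTurn, h.spin_add]

theorem spin_halfTurn' (h : CrystalRelations a b c) (i j : ZMod 3) :
    spin a b i (halfTurn' a b c j) = halfTurn' a b c (i + j) := by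
  rw [halfTurn', halfTurn', h.spin_add]

theorem conj_a_halfTurn (h : CrystalRelations a b c) (i : ZMod 3) :
    MulAut.conj a (halfTurn a b c i) = halfTurn a b c (-i) := by
  rw [halfTurn, h.conj_spin_of_conj_rot h.conj_a_rot, halfTurn, MulAut.conj_apply, h.a_inv,
    h.a_mul_a_mul, ← h.a_mul_c]

theorem conj_b_halfTurn (h : CrystalRelations a b c) (i : ZMod 3) :
    MulAut.conj b (halfTurn a b c i) = halfTurn' a b c (-i) := by
  rw [halfTurn, h.conj_spin_of_conj_rot h.conj_b_rot, halfTurn', MulAut.conj_apply, h.b_inv]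

theorem conj_b_halfTurn' (h : CrystalRelations a b c) (i : ZMod 3) :
    MulAut.conj b (halfTurn' a b c i) = halfTurn a b c (-i) := by
  rw [← neg_neg i, ← h.conj_b_halfTurn, neg_neg, MulAut.conj_apply, MulAut.conj_apply, h.b_inv,
    ← mul_assoc, mul_assoc _ b b, h.b_mul_b, mul_one, h.b_mul_b_mul]

theorem conj_a_halfTurn' (h : CrystalRelations a b c) (i : ZMod 3) :
    MulAut.conj a (halfTurn' a b c i) = halfTurn' a b c (1 - i) := by
  have h_zero : MulAut.conj a (b * (a * c) * b) = halfTurn' a b c 1 := by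
    rw [halfTurn', spin, ZMod.val_one, pow_one, MulAut.conj_apply (rot a b), h.rot_inv, rot]
    simp only [MulAut.conj_apply, h.a_inv, h.c_mul_a_mul, sq, mul_assoc, h.a_mul_a_mul,
      h.b_mul_b_mul]
  rw [halfTurn', h.conj_spin_of_conj_rot h.conj_a_rot, h_zero, h.spin_halfTurn', neg_add_eq_sub]

theorem halfTurn_mul_self (h : CrystalRelations a b c) (i : ZMod 3) :
    halfTurn a b c i * halfTurn a b c i = 1 := by
  rw [halfTurn, ← map_mul, ← sq, h.ac, map_one]

theorem halfTurn_inv (h : CrystalRelations a b c) (i : ZMod 3) :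
    (halfTurn a b c i)⁻¹ = halfTurn a b c i :=
  inv_eq_of_mul_eq_one_left (h.halfTurn_mul_self i)

theorem halfTurn'_inv (h : CrystalRelations a b c) (i : ZMod 3) :
    (halfTurn' a b c i)⁻¹ = halfTurn' a b c i := by
  rw [← neg_neg i, ← h.conj_b_halfTurn, ← map_inv, h.halfTurn_inv]

theorem halfTurn_mul_halfTurn_add_one (h : CrystalRelations a b c) (i : ZMod 3) :
    halfTurn a b c i * halfTurn a b c (i + 1) = halfTurn a b c (i + 2) := by
  have h_cbab : c * b * a * b = a * c * rot a b := by
    rw [rot, h.a_mul_c]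
    simp only [sq, mul_assoc, h.a_mul_a_mul]
  have h_prod : halfTurn a b c 0 * halfTurn a b c 1 * halfTurn a b c 2 = 1 := by
    have h_pow := h.mul_rot_mul_pow_three (a * c) 1
    rwa [mul_one, ← h_cbab, h.cbab, mul_one, one_mul, ← halfTurn_zero a b c, h.spin_halfTurn,
      h.spin_halfTurn, add_zero, add_zero, eq_comm] at h_pow
  rw [← add_zero i, add_assoc, ← h.spin_halfTurn i 0, ← h.spin_halfTurn, ← map_mul, zero_add,
    mul_eq_one_iff_eq_inv.1 h_prod, h.halfTurn_inv, h.spin_halfTurn, add_zero]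

/-- For distinct indices `i` and `j` modulo three, `-(i + j)` is the remaining one. -/
theorem halfTurn_mul_halfTurn (h : CrystalRelations a b c) {i j : ZMod 3} (hij : i ≠ j) :
    halfTurn a b c i * halfTurn a b c j = halfTurn a b c (-(i + j)) := by
  have h_cases : ∀ i j : ZMod 3, i ≠ j →
      j = i + 1 ∧ -(i + j) = i + 2 ∨ i = j + 1 ∧ -(i + j) = j + 2 := by decide
  obtain ⟨rfl, h_third⟩ | ⟨rfl, h_third⟩ := h_cases i j hij
  · rw [h_third, h.halfTurn_mul_halfTurn_add_one]
  · rw [h_third, ← h.halfTurn_inv (j + 2), ← h.halfTurn_mul_halfTurn_add_one, mul_inv_rev,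
      h.halfTurn_inv, h.halfTurn_inv]

theorem halfTurn'_mul_halfTurn' (h : CrystalRelations a b c) {i j : ZMod 3} (hij : i ≠ j) :
    halfTurn' a b c i * halfTurn' a b c j = halfTurn' a b c (-(i + j)) := by
  rw [← neg_neg i, ← neg_neg j, ← h.conj_b_halfTurn, ← h.conj_b_halfTurn, ← map_mul,
    h.halfTurn_mul_halfTurn (neg_injective.ne hij), h.conj_b_halfTurn, neg_add]

theorem conj_halfTurn_halfTurn (h : CrystalRelations a b c) (i j : ZMod 3) :
    MulAut.conj (halfTurn a b c i) (halfTurn a b c j) = halfTurn a b c j := by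
  obtain rfl | hij := eq_or_ne i j
  · rw [MulAut.conj_apply, mul_inv_cancel_right]
  · rw [MulAut.conj_apply, h.halfTurn_mul_halfTurn hij, add_comm,
      ← h.halfTurn_mul_halfTurn hij.symm, mul_inv_cancel_right]

theorem translation_inv (h : CrystalRelations a b c) (i : ZMod 3) :
    (translation a b c i)⁻¹ = halfTurn' a b c (i - 1) * halfTurn a b c i := by
  rw [translation, mul_inv_rev, h.halfTurn_inv, h.halfTurn'_inv]

theorem spin_translation (h : CrystalRelations a b c) (i j : ZMod 3) :
    spin a b i (translation a b c j) = translation a b c (i + j) := by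
  rw [translation, map_mul, h.spin_halfTurn, h.spin_halfTurn', translation, add_sub_assoc]

theorem conj_a_translation (h : CrystalRelations a b c) (i : ZMod 3) :
    MulAut.conj a (translation a b c i) = translation a b c (-i) := by
  have h_index : 1 - (i - 1) = -i - 1 := by revert i; decide
  rw [translation, map_mul, h.conj_a_halfTurn, h.conj_a_halfTurn', h_index, translation]

theorem conj_b_translation (h : CrystalRelations a b c) (i : ZMod 3) :
    MulAut.conj b (translation a b c i) = (translation a b c (1 - i))⁻¹ := by
  rw [translation, map_mul, h.conj_b_halfTurn, h.conj_b_halfTurn', h.translation_inv, neg_sub,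
    sub_right_comm, sub_self, zero_sub]

theorem conj_halfTurn_translation_self (h : CrystalRelations a b c) (i : ZMod 3) :
    MulAut.conj (halfTurn a b c i) (translation a b c i) = (translation a b c i)⁻¹ := by
  rw [MulAut.conj_apply, h.halfTurn_inv, h.translation_inv, translation, ← mul_assoc,
    h.halfTurn_mul_self, one_mul]

theorem conj_halfTurn_translation (h : CrystalRelations a b c) {i j : ZMod 3} (hij : i ≠ j) :
    MulAut.conj (halfTurn a b c i) (translation a b c j) =
      translation a b c (-(i + j)) * (translation a b c i)⁻¹ := by
  have h_index : -(i + j) - 1 ≠ i - 1 ∧ -((-(i + j) - 1) + (i - 1)) = j - 1 := by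
    revert i j; decide
  rw [MulAut.conj_apply, h.halfTurn_inv, h.translation_inv, translation, translation, ← mul_assoc,
    h.halfTurn_mul_halfTurn hij, ← h_index.2, ← h.halfTurn'_mul_halfTurn' h_index.1]
  simp only [mul_assoc]

theorem c_mul_b_sq (h : CrystalRelations a b c) :
    (c * b) ^ 2 = halfTurn a b c 0 * rot a b * halfTurn' a b c 0 := by
  rw [halfTurn_zero, halfTurn'_zero, h.a_mul_c, rot]
  simp only [sq, mul_assoc, h.a_mul_a_mul, h.b_mul_b_mul, h.c_mul_a_mul]

theorem translation_commute_translation_add_one (h : CrystalRelations a b c) (i : ZMod 3) :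
    Commute (translation a b c i) (translation a b c (i + 1)) := by
  suffices h_zero : Commute (translation a b c 0) (translation a b c 1) by
    simpa only [h.spin_translation, add_zero] using h_zero.map (spin a b i)
  have h_six : (halfTurn a b c 0 * rot a b * halfTurn' a b c 0) ^ 3 = 1 := by
    rw [← h.c_mul_b_sq, ← pow_mul, ← h.b_inv, ← h.c_inv, ← mul_inv_rev, inv_pow, h.bc, inv_one]
  have h_left : halfTurn a b c 0 * halfTurn' a b c 1 * halfTurn a b c 1 =
      translation a b c 0 * (translation a b c 1)⁻¹ := by
    rw [h.translation_inv, translation, show (1 : ZMod 3) = -((0 - 1) + (1 - 1)) by decide,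
      ← h.halfTurn'_mul_halfTurn' (by decide)]
    simp only [mul_assoc]
    rfl
  have h_right : halfTurn' a b c 2 * halfTurn a b c 2 * halfTurn' a b c 0 =
      (translation a b c 0)⁻¹ * translation a b c 1 := by
    rw [h.translation_inv, translation, show halfTurn a b c 2 = halfTurn a b c (-(0 + 1)) from rfl,
      ← h.halfTurn_mul_halfTurn (by decide)]
    simp only [mul_assoc]
    rfl
  have h_prod : translation a b c 0 * (translation a b c 1)⁻¹ *
      ((translation a b c 0)⁻¹ * translation a b c 1) = 1 := by
    rw [← h_left, ← h_right, ← h_six, h.mul_rot_mul_pow_three, map_mul, map_mul, h.spin_halfTurn,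
      h.spin_halfTurn, h.spin_halfTurn', h.spin_halfTurn', add_zero, add_zero]
    simp only [mul_assoc]
  refine Commute.inv_right_iff.1 ?_
  rw [Commute, SemiconjBy, mul_eq_one_iff_eq_inv.1 h_prod, mul_inv_rev, inv_inv]

theorem translation_commute_translation (h : CrystalRelations a b c) (i j : ZMod 3) :
    Commute (translation a b c i) (translation a b c j) := by
  have h_cases : ∀ i j : ZMod 3, i = j ∨ j = i + 1 ∨ i = j + 1 := by decide
  obtain rfl | rfl | rfl := h_cases i j
  · exact .refl _
  · exact h.translation_commute_translation_add_one i
  · exact (h.translation_commute_translation_add_one j).symm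

theorem diagonal_eq (h : CrystalRelations a b c) (i : ZMod 3) :
    diagonal a b c =
      translation a b c i * translation a b c (i + 1) * translation a b c (i + 2) := by
  have h_cycle :
      diagonal a b c = translation a b c 1 * translation a b c 2 * translation a b c 0 := by
    rw [diagonal, mul_assoc,
      ((h.translation_commute_translation 0 1).mul_right
        (h.translation_commute_translation 0 2)).eq]
  have h_cases : ∀ i : ZMod 3, i = 0 ∨ i = 1 ∨ i = 2 := by decide
  obtain rfl | rfl | rfl := h_cases i
  · rfl
  · exact h_cycle
  · rw [h_cycle, mul_assoc,
      ((h.translation_commute_translation 1 2).mul_right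
        (h.translation_commute_translation 1 0)).eq]
    rfl

theorem translation_commute_diagonal (h : CrystalRelations a b c) (i : ZMod 3) :
    Commute (translation a b c i) (diagonal a b c) :=
  ((h.translation_commute_translation i 0).mul_right
    (h.translation_commute_translation i 1)).mul_right (h.translation_commute_translation i 2)

theorem spin_diagonal (h : CrystalRelations a b c) (i : ZMod 3) :
    spin a b i (diagonal a b c) = diagonal a b c := by
  rw [diagonal, map_mul, map_mul, h.spin_translation, h.spin_translation, h.spin_translation,
    add_zero]
  exact (h.diagonal_eq i).symm

theorem conj_a_diagonal (h : CrystalRelations a b c) :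
    MulAut.conj a (diagonal a b c) = diagonal a b c := by
  rw [diagonal, map_mul, map_mul, h.conj_a_translation, h.conj_a_translation, h.conj_a_translation,
    mul_assoc, mul_assoc, (h.translation_commute_translation (-1) (-2)).eq]
  rfl

theorem conj_b_diagonal (h : CrystalRelations a b c) :
    MulAut.conj b (diagonal a b c) = (diagonal a b c)⁻¹ := by
  rw [diagonal, map_mul, map_mul, h.conj_b_translation, h.conj_b_translation, h.conj_b_translation,
    ← mul_inv_rev, ← mul_inv_rev, ← mul_assoc]
  exact congrArg (·⁻¹) (h.diagonal_eq 2).symm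

theorem conj_halfTurn_diagonal (h : CrystalRelations a b c) (i : ZMod 3) :
    MulAut.conj (halfTurn a b c i) (diagonal a b c) =
      diagonal a b c * (translation a b c i)⁻¹ ^ 4 := by
  suffices h_zero : MulAut.conj (halfTurn a b c 0) (diagonal a b c) =
      diagonal a b c * (translation a b c 0)⁻¹ ^ 4 by
    simpa only [MulAut.conj_apply, map_mul, map_inv, map_pow, h.spin_halfTurn, h.spin_diagonal,
      h.spin_translation, add_zero] using congrArg (spin a b i) h_zero
  have h₁ := (h.translation_commute_translation 0 1).inv_left
  have h₂ := (h.translation_commute_translation 0 2).inv_left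
  calc MulAut.conj (halfTurn a b c 0) (diagonal a b c)
      = (translation a b c 0)⁻¹ * (translation a b c 2 * (translation a b c 0)⁻¹) *
          (translation a b c 1 * (translation a b c 0)⁻¹) := by
        rw [diagonal, map_mul, map_mul, h.conj_halfTurn_translation_self,
          h.conj_halfTurn_translation (by decide), h.conj_halfTurn_translation (by decide)]
        rfl
    _ = translation a b c 1 * translation a b c 2 * (translation a b c 0)⁻¹ ^ 3 := by
        rw [(h.translation_commute_translation 1 2).eq]
        simp only [pow_succ, pow_zero, one_mul, mul_assoc, h₁.left_comm, h₂.left_comm]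
    _ = diagonal a b c * (translation a b c 0)⁻¹ ^ 4 := by
        rw [h.diagonal_eq 1, pow_succ' _ 3, ← mul_assoc]
        exact congrArg (· * _) (mul_inv_cancel_right _ _).symm

theorem b_mul_a_sq_mul_b_mul_c_sq (h : CrystalRelations a b c) :
    (b * a) ^ 2 * (b * c) ^ 2 = halfTurn' a b c 2 * rot a b * halfTurn a b c 0 := by
  have h_rot : rot a b * rot a b = (b * a) ^ 2 := by
    rw [← h.rot_inv, eq_inv_iff_mul_eq_one, ← pow_two, ← pow_succ, h.rot_pow_three]
  have h_turn : halfTurn' a b c 2 = (b * a) ^ 2 * (b * (a * c) * b) * rot a b := by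
    rw [show (2 : ZMod 3) = -1 from rfl, halfTurn', spin, h.rot_pow_val_neg, ZMod.val_one, pow_one,
      MulAut.conj_apply, inv_inv, h.rot_inv]
  rw [h_turn, mul_assoc _ (rot a b) (rot a b), h_rot, halfTurn_zero]
  simp only [sq, mul_assoc, h.a_mul_a_mul, h.b_mul_b_mul, h.c_mul_a_mul]

theorem b_mul_a_sq_mul_b_mul_c_sq_pow_three (h : CrystalRelations a b c) :
    ((b * a) ^ 2 * (b * c) ^ 2) ^ 3 = MulAut.conj (halfTurn a b c 0) (diagonal a b c) := by
  have h_turn : halfTurn' a b c 2 = halfTurn a b c 0 * translation a b c 0 := by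
    rw [translation, ← mul_assoc, h.halfTurn_mul_self, one_mul]
    rfl
  rw [h.b_mul_a_sq_mul_b_mul_c_sq, h.mul_rot_mul_pow_three, h_turn, ← mul_assoc (halfTurn a b c 0),
    h.halfTurn_mul_self, one_mul, h.spin_translation, h.spin_translation, MulAut.conj_apply,
    h.halfTurn_inv, diagonal]
  simp only [mul_assoc, add_zero]

theorem pow_three_mul_eq_one_iff (h : CrystalRelations a b c) (m : ℕ) :
    ((b * a) ^ 2 * (b * c) ^ 2) ^ (3 * m) = 1 ↔ diagonal a b c ^ m = 1 := by
  rw [pow_mul, h.b_mul_a_sq_mul_b_mul_c_sq_pow_three, ← map_pow,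
    map_eq_one_iff _ (MulEquiv.injective _)]

theorem translation_pow_eq_one (h : CrystalRelations a b c) {m : ℕ} (hm : diagonal a b c ^ m = 1)
    (i : ZMod 3) : translation a b c i ^ (4 * m) = 1 := by
  have h_conj := congrArg (· ^ m) (h.conj_halfTurn_diagonal i)
  rwa [← map_pow, hm, map_one,
    ((h.translation_commute_diagonal i).symm.inv_right.pow_right 4).mul_pow, hm, one_mul, ← pow_mul,
    inv_pow, eq_comm, inv_eq_one] at h_conj

end CrystalRelations

section Presentation

variable {G : Type*} [Group G] {m : ℕ} {a b c : G}

theorem map_translation {H : Type*} [Group H] (f : G →* H) (a b c : G) (i : ZMod 3) :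
    f (translation a b c i) = translation (f a) (f b) (f c) i := by
  simp only [translation, halfTurn, halfTurn', spin, MulAut.conj_apply]
  simp only [rot, map_mul, map_inv, map_pow]

theorem map_diagonal {H : Type*} [Group H] (f : G →* H) (a b c : G) :
    f (diagonal a b c) = diagonal (f a) (f b) (f c) := by
  simp only [diagonal, map_mul, map_translation]

theorem crystalRelations_g (m : ℕ) : CrystalRelations (g m 0) (g m 1) (g m 2) := by
  constructor <;> exact PresentedGroup.one_of_mem (by simp [rels, r0, r1, r2])

theorem diagonal_g_pow (m : ℕ) : diagonal (g m 0) (g m 1) (g m 2) ^ m = 1 := by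
  have h := crystalRelations_g m
  have h_rel : g m 2 * ((g m 1 * g m 0) ^ 2 * (g m 1 * g m 2) ^ 2) ^ (3 * m) * g m 2 = 1 :=
    PresentedGroup.one_of_mem (by simp [rels, r0, r1, r2])
  rw [← h.pow_three_mul_eq_one_iff, ← conj_eq_one_iff (a := g m 2), h.c_inv, h_rel]

theorem closure_g (m : ℕ) : Subgroup.closure {g m 0, g m 1, g m 2} = ⊤ := by
  rw [← PresentedGroup.closure_range_of (rels m)]
  congr 1
  ext x
  simp [g, Fin.exists_fin_succ, eq_comm]

namespace CrystalRelations

theorem lift_eq_one_of_mem_rels (h : CrystalRelations a b c) (hm : diagonal a b c ^ m = 1) :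
    ∀ r ∈ rels m, FreeGroup.lift ![a, b, c] r = 1 := by
  have h_q := (h.pow_three_mul_eq_one_iff m).2 hm
  have h_bcba : ((b * c) ^ 2 * (b * a) ^ 2) ^ (3 * m) = 1 := by
    rw [← conj_eq_one_iff (a := (b * a) ^ 2), ← conj_pow, mul_assoc, mul_inv_cancel_right, h_q]
  have h_abcb : ((a * b) ^ 2 * (c * b) ^ 2) ^ (3 * m) = 1 := by
    rw [← inv_eq_one, ← inv_pow, mul_inv_rev, ← inv_pow, ← inv_pow, mul_inv_rev, mul_inv_rev,
      h.a_inv, h.b_inv, h.c_inv, h_bcba]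
  rintro r (rfl | rfl | rfl | rfl | rfl | rfl | rfl | rfl | rfl | rfl) <;>
    simp only [r0, r1, r2, map_mul, map_pow, FreeGroup.lift_apply_of, Matrix.cons_val, h.aa, h.bb,
      h.cc, h.ab, h.bc, h.ac, h.cbab, h_abcb, h_bcba, h_q, mul_one, h.a_mul_a, h.c_mul_c]

/-- The homomorphism from `I_m` onto the group generated by a triple satisfying its relations. -/
def hom (h : CrystalRelations a b c) (hm : diagonal a b c ^ m = 1) : PresentedGroup (rels m) →* G :=
  PresentedGroup.toGroup (h.lift_eq_one_of_mem_rels hm)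

theorem hom_g_zero (h : CrystalRelations a b c) (hm : diagonal a b c ^ m = 1) :
    h.hom hm (g m 0) = a :=
  PresentedGroup.toGroup.of _

theorem hom_g_one (h : CrystalRelations a b c) (hm : diagonal a b c ^ m = 1) :
    h.hom hm (g m 1) = b :=
  PresentedGroup.toGroup.of _

theorem hom_g_two (h : CrystalRelations a b c) (hm : diagonal a b c ^ m = 1) :
    h.hom hm (g m 2) = c :=
  PresentedGroup.toGroup.of _

end CrystalRelations

end Presentation

section Series

variable {G : Type*} [Group G]

/-- Generators of the subgroup of translations; `translation a b c 2` is redundant. -/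
def translationGens (a b c : G) : Set G :=
  {translation a b c 0, translation a b c 1, diagonal a b c}

/-- Generators of the subgroup of all translations and half-turns. -/
def halfTurnGens (a b c : G) : Set G :=
  insert (halfTurn a b c 1) (insert (halfTurn a b c 0) (translationGens a b c))

end Series

namespace CrystalRelations

variable {G : Type*} [Group G] {a b c : G} {m : ℕ}

theorem isSolvableOfCardLE_translations (h : CrystalRelations a b c) (hpos : 0 < m)
    (hm : diagonal a b c ^ m = 1) :
    IsSolvableOfCardLE (Subgroup.closure (translationGens a b c)) (4 * m * (4 * m * m)) := by
  have h_commute {x y : G} (hxy : Commute x y) {S : Set G} (hy : y ∈ S) :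
      MulAut.conj x y ∈ Subgroup.closure S := by
    rw [MulAut.conj_apply, hxy.eq, mul_inv_cancel_right]
    exact Subgroup.subset_closure hy
  have h_bot : IsSolvableOfCardLE (Subgroup.closure (∅ : Set G)) 1 := by
    rw [Subgroup.closure_empty]
    exact ⟨inferInstance, inferInstance, Subgroup.card_bot.le⟩
  have h_diagonal : IsSolvableOfCardLE (Subgroup.closure {diagonal a b c}) m := by
    simpa using h_bot.closure_insert hpos hm (by simp)
  have h_plane :
      IsSolvableOfCardLE (Subgroup.closure {translation a b c 1, diagonal a b c}) (4 * m * m) := by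
    refine h_diagonal.closure_insert (by positivity) (h.translation_pow_eq_one hm 1) ?_
    rintro s rfl
    exact h_commute (h.translation_commute_diagonal 1) rfl
  refine h_plane.closure_insert (by positivity) (h.translation_pow_eq_one hm 0) ?_
  rintro s (rfl | rfl)
  · exact h_commute (h.translation_commute_translation 0 1) (by simp)
  · exact h_commute (h.translation_commute_diagonal 0) (by simp)

theorem translation_mem_closure (a b c : G) (i : ZMod 3) :
    translation a b c i ∈ Subgroup.closure (translationGens a b c) := by
  have h_zero : translation a b c 0 ∈ Subgroup.closure (translationGens a b c) :=
    Subgroup.subset_closure (by simp [translationGens])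
  have h_one : translation a b c 1 ∈ Subgroup.closure (translationGens a b c) :=
    Subgroup.subset_closure (by simp [translationGens])
  have h_diagonal : diagonal a b c ∈ Subgroup.closure (translationGens a b c) :=
    Subgroup.subset_closure (by simp [translationGens])
  have h_two : translation a b c 2 =
      (translation a b c 0 * translation a b c 1)⁻¹ * diagonal a b c := by
    rw [diagonal, inv_mul_cancel_left]
  have h_cases : ∀ i : ZMod 3, i = 0 ∨ i = 1 ∨ i = 2 := by decide
  obtain rfl | rfl | rfl := h_cases i
  · exact h_zero
  · exact h_one
  · rw [h_two]
    exact mul_mem (inv_mem (mul_mem h_zero h_one)) h_diagonal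

theorem conj_halfTurn_mem_closure (h : CrystalRelations a b c) (i : ZMod 3) :
    ∀ s ∈ translationGens a b c,
      MulAut.conj (halfTurn a b c i) s ∈ Subgroup.closure (translationGens a b c) := by
  have h_mem := translation_mem_closure a b c
  have h_diagonal : diagonal a b c ∈ Subgroup.closure (translationGens a b c) :=
    Subgroup.subset_closure (by simp [translationGens])
  have h_translation (j : ZMod 3) :
      MulAut.conj (halfTurn a b c i) (translation a b c j) ∈
        Subgroup.closure (translationGens a b c) := by
    obtain rfl | hij := eq_or_ne i j
    · exact h.conj_halfTurn_translation_self i ▸ inv_mem (h_mem i)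
    · exact h.conj_halfTurn_translation hij ▸ mul_mem (h_mem _) (inv_mem (h_mem i))
  rintro s (rfl | rfl | rfl)
  · exact h_translation 0
  · exact h_translation 1
  · exact h.conj_halfTurn_diagonal i ▸ mul_mem h_diagonal (pow_mem (inv_mem (h_mem i)) 4)

theorem isSolvableOfCardLE_halfTurns (h : CrystalRelations a b c) (hpos : 0 < m)
    (hm : diagonal a b c ^ m = 1) :
    IsSolvableOfCardLE (Subgroup.closure (halfTurnGens a b c))
      (2 * (2 * (4 * m * (4 * m * m)))) := by
  have h_sq (i : ZMod 3) : halfTurn a b c i ^ 2 = 1 := by rw [sq, h.halfTurn_mul_self]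
  have h_zero := (h.isSolvableOfCardLE_translations hpos hm).closure_insert two_pos (h_sq 0)
    (h.conj_halfTurn_mem_closure 0)
  refine h_zero.closure_insert two_pos (h_sq 1) ?_
  rintro s (rfl | hs)
  · rw [h.conj_halfTurn_halfTurn]
    exact Subgroup.subset_closure (Set.mem_insert _ _)
  · exact Subgroup.closure_mono (Set.subset_insert _ _) (h.conj_halfTurn_mem_closure 1 s hs)

theorem closure_translationGens_le (a b c : G) :
    Subgroup.closure (translationGens a b c) ≤ Subgroup.closure (halfTurnGens a b c) :=
  Subgroup.closure_mono ((Set.subset_insert _ _).trans (Set.subset_insert _ _))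

theorem halfTurn_mem_closure (h : CrystalRelations a b c) (i : ZMod 3) :
    halfTurn a b c i ∈ Subgroup.closure (halfTurnGens a b c) := by
  have h_zero : halfTurn a b c 0 ∈ Subgroup.closure (halfTurnGens a b c) :=
    Subgroup.subset_closure (by simp [halfTurnGens])
  have h_one : halfTurn a b c 1 ∈ Subgroup.closure (halfTurnGens a b c) :=
    Subgroup.subset_closure (by simp [halfTurnGens])
  have h_cases : ∀ i : ZMod 3, i = 0 ∨ i = 1 ∨ i = -(0 + 1) := by decide
  obtain rfl | rfl | rfl := h_cases i
  · exact h_zero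
  · exact h_one
  · exact h.halfTurn_mul_halfTurn zero_ne_one ▸ mul_mem h_zero h_one

theorem halfTurn'_mem_closure (h : CrystalRelations a b c) (i : ZMod 3) :
    halfTurn' a b c i ∈ Subgroup.closure (halfTurnGens a b c) := by
  have h_eq : halfTurn' a b c i = halfTurn a b c (i + 1) * translation a b c (i + 1) := by
    rw [translation, ← mul_assoc, h.halfTurn_mul_self, one_mul, add_sub_cancel_right]
  rw [h_eq]
  exact mul_mem (h.halfTurn_mem_closure _)
    (closure_translationGens_le a b c (translation_mem_closure a b c _))

theorem diagonal_mem_closure (a b c : G) :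
    diagonal a b c ∈ Subgroup.closure (halfTurnGens a b c) :=
  Subgroup.subset_closure (by simp [halfTurnGens, translationGens])

theorem conj_a_mem_closure (h : CrystalRelations a b c) :
    ∀ s ∈ halfTurnGens a b c, MulAut.conj a s ∈ Subgroup.closure (halfTurnGens a b c) := by
  have h_translation := fun i => closure_translationGens_le a b c (translation_mem_closure a b c i)
  rintro s (rfl | rfl | rfl | rfl | rfl)
  · exact (h.conj_a_halfTurn 1).symm ▸ h.halfTurn_mem_closure _
  · exact (h.conj_a_halfTurn 0).symm ▸ h.halfTurn_mem_closure _
  · exact (h.conj_a_translation 0).symm ▸ h_translation _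
  · exact (h.conj_a_translation 1).symm ▸ h_translation _
  · exact h.conj_a_diagonal.symm ▸ diagonal_mem_closure a b c

theorem conj_b_mem_closure (h : CrystalRelations a b c) :
    ∀ s ∈ halfTurnGens a b c, MulAut.conj b s ∈ Subgroup.closure (halfTurnGens a b c) := by
  have h_translation := fun i => closure_translationGens_le a b c (translation_mem_closure a b c i)
  rintro s (rfl | rfl | rfl | rfl | rfl)
  · exact (h.conj_b_halfTurn 1).symm ▸ h.halfTurn'_mem_closure _
  · exact (h.conj_b_halfTurn 0).symm ▸ h.halfTurn'_mem_closure _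
  · exact (h.conj_b_translation 0).symm ▸ inv_mem (h_translation _)
  · exact (h.conj_b_translation 1).symm ▸ inv_mem (h_translation _)
  · exact h.conj_b_diagonal.symm ▸ inv_mem (diagonal_mem_closure a b c)

theorem conj_ab_mem_closure (h : CrystalRelations a b c) :
    ∀ s ∈ halfTurnGens a b c, MulAut.conj (a * b) s ∈ Subgroup.closure (halfTurnGens a b c) := by
  intro s hs
  rw [map_mul, MulAut.mul_apply]
  exact map_mem_closure (MulAut.conj a).toMonoidHom h.conj_a_mem_closure (h.conj_b_mem_closure s hs)

theorem closure_le_closure_insert_halfTurnGens (h : CrystalRelations a b c) :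
    Subgroup.closure {a, b, c} ≤
      Subgroup.closure (insert a (insert (a * b) (halfTurnGens a b c))) := by
  have h_subset := Subgroup.subset_closure (k := insert a (insert (a * b) (halfTurnGens a b c)))
  have h_a := h_subset (Set.mem_insert _ _)
  have h_ab := h_subset (.inr (Set.mem_insert _ _))
  have h_ac : a * c ∈ _ := h_subset (.inr (.inr (.inr (.inl (halfTurn_zero a b c).symm))))
  rw [Subgroup.closure_le]
  rintro s (rfl | rfl | rfl)
  · exact h_a
  · exact (Subgroup.mul_mem_cancel_left _ h_a).1 h_ab
  · exact (Subgroup.mul_mem_cancel_left _ h_a).1 h_ac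

theorem isSolvableOfCardLE_top (h : CrystalRelations a b c)
    (hgen : Subgroup.closure {a, b, c} = ⊤) (hpos : 0 < m) (hm : diagonal a b c ^ m = 1) :
    IsSolvableOfCardLE (⊤ : Subgroup G) (768 * m ^ 3) := by
  have h_ab := (h.isSolvableOfCardLE_halfTurns hpos hm).closure_insert (by decide) h.ab
    h.conj_ab_mem_closure
  have h_a : IsSolvableOfCardLE
      (Subgroup.closure (insert a (insert (a * b) (halfTurnGens a b c))))
      (2 * (6 * (2 * (2 * (4 * m * (4 * m * m)))))) := by
    refine h_ab.closure_insert two_pos h.aa ?_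
    rintro s (rfl | hs)
    · have h_inv : MulAut.conj a (a * b) = (a * b)⁻¹ := by
        rw [MulAut.conj_apply, h.a_mul_a_mul, mul_inv_rev, h.b_inv]
      exact h_inv ▸ inv_mem (Subgroup.subset_closure (Set.mem_insert _ _))
    · exact Subgroup.closure_mono (Set.subset_insert _ _) (h.conj_a_mem_closure s hs)
  rw [eq_top_iff.2 (hgen.ge.trans h.closure_le_closure_insert_halfTurnGens)] at h_a
  convert h_a using 1
  ring

end CrystalRelations

section PointGroup

open Equiv

/-- The point group `S₄ × {±1}` of `I_m`: the first factor permutes the four diagonals of a cube,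
the second one records whether the central inversion is involved. -/
abbrev PointGroup : Type := Perm (Fin 4) × ℤˣ

theorem crystalRelations_pointGroup :
    CrystalRelations (G := PointGroup) (swap 0 1, -1) (swap 1 2, 1) (swap 2 3, -1) := by
  constructor <;> decide

theorem translation_pointGroup (i : ZMod 3) :
    translation (G := PointGroup) (swap 0 1, -1) (swap 1 2, 1) (swap 2 3, -1) i = 1 := by
  revert i; decide +kernel

theorem diagonal_pointGroup :
    diagonal (G := PointGroup) (swap 0 1, -1) (swap 1 2, 1) (swap 2 3, -1) = 1 := by
  simp only [diagonal, translation_pointGroup, mul_one]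

/-- The homomorphism that takes an element of `I_m` to its linear part. -/
abbrev toPointGroup (m : ℕ) : PresentedGroup (rels m) →* PointGroup :=
  crystalRelations_pointGroup.hom (by rw [diagonal_pointGroup, one_pow])

theorem range_toPointGroup (m : ℕ) : (toPointGroup m).range = ⊤ := by
  have h_swap₀ : (swap 0 1, -1) ∈ (toPointGroup m).range :=
    ⟨g m 0, CrystalRelations.hom_g_zero _ _⟩
  have h_swap₁ : (swap 1 2, 1) ∈ (toPointGroup m).range := ⟨g m 1, CrystalRelations.hom_g_one _ _⟩
  have h_swap₂ : (swap 2 3, -1) ∈ (toPointGroup m).range :=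
    ⟨g m 2, CrystalRelations.hom_g_two _ _⟩
  have h_neg : (1, -1) ∈ (toPointGroup m).range := by
    convert pow_mem (mul_mem h_swap₀ h_swap₁) 3 using 1
    decide
  have h_inl : (toPointGroup m).range.comap (MonoidHom.inl (Perm (Fin 4)) ℤˣ) = ⊤ := by
    rw [← Subgroup.toSubmonoid_inj, Subgroup.top_toSubmonoid, eq_top_iff,
      ← Perm.mclosure_swap_castSucc_succ 3, Submonoid.closure_le]
    rintro _ ⟨i, rfl⟩
    fin_cases i
    · simpa using mul_mem h_swap₀ h_neg
    · exact h_swap₁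
    · simpa using mul_mem h_swap₂ h_neg
  have h_perm (σ : Perm (Fin 4)) : (σ, 1) ∈ (toPointGroup m).range :=
    h_inl.ge (Subgroup.mem_top σ)
  refine (Subgroup.eq_top_iff' _).2 fun ⟨σ, u⟩ => ?_
  obtain rfl | rfl := Int.units_eq_one_or u
  · exact h_perm σ
  · simpa using mul_mem (h_perm σ) h_neg

theorem card_eq_card_ker_toPointGroup_mul (m : ℕ) :
    Nat.card (PresentedGroup (rels m)) = Nat.card (toPointGroup m).ker * 48 := by
  rw [← Subgroup.card_mul_index (toPointGroup m).ker, Subgroup.index_ker, range_toPointGroup,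
    Subgroup.card_top, Nat.card_prod, Nat.card_perm, Nat.card_eq_fintype_card (α := ℤˣ),
    Fintype.card_units_int, Nat.card_fin]
  rfl

end PointGroup

section Affine

open Equiv

theorem perm_pow_three_apply {X : Type*} (f : Perm X) (x : X) : (f ^ 3) x = f (f (f x)) := rfl

theorem eq_of_natCast_mul_eq {d n i j : ℕ} (hd : 0 < d) (hi : i < n) (hj : j < n)
    (h : (d * i : ZMod (d * n)) = d * j) : i = j := by
  rw [← Nat.cast_mul, ← Nat.cast_mul, ZMod.natCast_eq_natCast_iff', Nat.mul_mod_mul_left,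
    Nat.mul_mod_mul_left, Nat.mod_eq_of_lt hi, Nat.mod_eq_of_lt hj] at h
  exact Nat.eq_of_mul_eq_mul_left hd h

variable (R : Type*)

/-- The isometry `(x, y, z) ↦ (y, x, z)` in the coordinates `(x + y, y + z, z + x)`. -/
def isometryA : Perm (R × R × R) :=
  Function.Involutive.toPerm (fun v => (v.1, v.2.2, v.2.1)) fun _ => rfl

theorem isometryA_apply (v : R × R × R) : isometryA R v = (v.1, v.2.2, v.2.1) := rfl

variable [CommRing R]

/-- The isometry `(x, y, z) ↦ (-x, z, y)` in the coordinates `(x + y, y + z, z + x)`. -/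
def isometryB : Perm (R × R × R) :=
  Function.Involutive.toPerm (fun v => (v.2.1 - v.1, v.2.1, v.2.1 - v.2.2)) fun v => by simp

/-- The isometry `(x, y, z) ↦ (1 - y, 1 - x, z)` in the coordinates `(x + y, y + z, z + x)`. -/
def isometryC : Perm (R × R × R) :=
  Function.Involutive.toPerm (fun v => (2 - v.1, v.2.1 - v.1 + 1, v.2.2 - v.1 + 1)) fun v => by
    ext <;> simp <;> ring

theorem isometryB_apply (v : R × R × R) :
    isometryB R v = (v.2.1 - v.1, v.2.1, v.2.1 - v.2.2) := rfl

theorem isometryC_apply (v : R × R × R) :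
    isometryC R v = (2 - v.1, v.2.1 - v.1 + 1, v.2.2 - v.1 + 1) := rfl

theorem rot_isometry_apply (v : R × R × R) :
    rot (isometryA R) (isometryB R) v = (v.1 - v.2.2, -v.2.2, v.2.1 - v.2.2) := by
  ext <;> simp only [rot, sq, Perm.mul_apply, isometryA_apply, isometryB_apply] <;> ring

theorem crystalRelations_isometry :
    CrystalRelations (isometryA R) (isometryB R) (isometryC R) := by
  have h_bc (v : R × R × R) : ((isometryB R * isometryC R) ^ 2) v =
      (v.2.1 - v.1, 3 - v.1, v.2.2 - v.1 + 1) := by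
    ext <;> simp only [sq, Perm.mul_apply, isometryB_apply, isometryC_apply] <;> ring
  constructor
  case ab =>
    rw [show 6 = 2 * 3 from rfl, pow_mul, ← rot]
    ext v <;> simp only [perm_pow_three_apply, rot_isometry_apply, Perm.one_apply] <;> ring
  case bc =>
    rw [show 6 = 2 * 3 from rfl, pow_mul]
    ext v <;> simp only [perm_pow_three_apply, h_bc, Perm.one_apply] <;> ring
  all_goals
    ext v <;> simp only [sq, perm_pow_three_apply, Perm.mul_apply, isometryA_apply,
      isometryB_apply, isometryC_apply, Perm.one_apply] <;> ring

theorem spin_one_addRight (x : R × R × R) :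
    spin (isometryA R) (isometryB R) 1 (Equiv.addRight x) =
      Equiv.addRight (rot (isometryA R) (isometryB R) x) := by
  rw [spin, ZMod.val_one, pow_one, MulAut.conj_apply, mul_inv_eq_iff_eq_mul]
  ext v <;> simp only [Perm.mul_apply, Equiv.coe_addRight, rot_isometry_apply, Prod.fst_add,
    Prod.snd_add] <;> ring

theorem translation_isometry_one :
    translation (isometryA R) (isometryB R) (isometryC R) 1 = Equiv.addRight (2, -2, 0) := by
  rw [translation, sub_self, halfTurn'_zero, halfTurn, spin, ZMod.val_one, pow_one,
    MulAut.conj_apply, (crystalRelations_isometry R).rot_inv]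
  ext v <;> simp only [sq, Perm.mul_apply, rot_isometry_apply, isometryA_apply, isometryB_apply,
    isometryC_apply, Equiv.coe_addRight, Prod.fst_add, Prod.snd_add] <;> ring

theorem translation_isometry_two :
    translation (isometryA R) (isometryB R) (isometryC R) 2 = Equiv.addRight (2, 0, -2) := by
  rw [← one_add_one_eq_two, ← (crystalRelations_isometry R).spin_translation,
    translation_isometry_one, spin_one_addRight, rot_isometry_apply]
  norm_num

theorem translation_isometry_zero :
    translation (isometryA R) (isometryB R) (isometryC R) 0 = Equiv.addRight (4, 2, 2) := by
  rw [show (0 : ZMod 3) = 1 + 2 from rfl, ← (crystalRelations_isometry R).spin_translation,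
    translation_isometry_two, spin_one_addRight, rot_isometry_apply]
  norm_num

theorem diagonal_isometry :
    diagonal (isometryA R) (isometryB R) (isometryC R) = Equiv.addRight (8, 0, 0) := by
  rw [diagonal, translation_isometry_zero, translation_isometry_one, translation_isometry_two,
    ← Equiv.addRight_add, ← Equiv.addRight_add]
  norm_num

variable {R}

/-- The action of `I_m` on affine three-space over a ring in which `8 * m` vanishes. -/
abbrev toAffine {m : ℕ} (hm : (m : R) * 8 = 0) : PresentedGroup (rels m) →* Perm (R × R × R) :=
  (crystalRelations_isometry R).hom <| by
    rw [diagonal_isometry, Equiv.nsmul_addRight, ← Equiv.addRight_zero]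
    simp only [Prod.smul_mk, smul_zero, nsmul_eq_mul, hm]
    rfl

/-- The translation `T₀ ^ i * T₁ ^ j * D ^ k` in `I_m`, where `Tᵢ` is the `i`-th translation and `D`
the diagonal one. Counting these elements bounds the order of `I_m` from below. -/
def latticeElement (m i j k : ℕ) : PresentedGroup (rels m) :=
  translation (g m 0) (g m 1) (g m 2) 0 ^ i * translation (g m 0) (g m 1) (g m 2) 1 ^ j *
    diagonal (g m 0) (g m 1) (g m 2) ^ k

theorem latticeElement_mem_ker (m i j k : ℕ) : latticeElement m i j k ∈ (toPointGroup m).ker := by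
  rw [MonoidHom.mem_ker, latticeElement, map_mul, map_mul, map_pow, map_pow, map_pow,
    map_translation, map_translation, map_diagonal, CrystalRelations.hom_g_zero,
    CrystalRelations.hom_g_one, CrystalRelations.hom_g_two, translation_pointGroup,
    translation_pointGroup, diagonal_pointGroup, one_pow, one_pow, one_pow, one_mul, one_mul]

theorem toAffine_latticeElement_apply_zero {m : ℕ} (hm : (m : R) * 8 = 0) (i j k : ℕ) :
    toAffine hm (latticeElement m i j k) 0 =
      ((4 * i + 2 * j + 8 * k, 2 * i - 2 * j, 2 * i) : R × R × R) := by
  rw [latticeElement, map_mul, map_mul, map_pow, map_pow, map_pow, map_translation,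
    map_translation, map_diagonal, CrystalRelations.hom_g_zero,
    CrystalRelations.hom_g_one, CrystalRelations.hom_g_two, translation_isometry_zero,
    translation_isometry_one, diagonal_isometry]
  simp only [Equiv.nsmul_addRight, Perm.mul_apply, Equiv.coe_addRight, zero_add, Prod.smul_mk,
    nsmul_eq_mul, Prod.mk_add_mk]
  ext <;> ring

theorem latticeElement_injective (m : ℕ) :
    Function.Injective fun p : Fin (4 * m) × Fin (4 * m) × Fin m =>
      latticeElement m p.1 p.2.1 p.2.2 := by
  have hm : (m : ZMod (8 * m)) * 8 = 0 := by
    rw [mul_comm (m : ZMod (8 * m))]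
    exact_mod_cast ZMod.natCast_self (8 * m)
  have h_double {i i' : Fin (4 * m)} (h : (2 * i.val : ZMod (8 * m)) = 2 * i'.val) : i = i' := by
    refine Fin.ext (eq_of_natCast_mul_eq two_pos i.isLt i'.isLt ?_)
    rw [← mul_assoc]
    exact_mod_cast h
  rintro ⟨i, j, k⟩ ⟨i', j', k'⟩ h
  have h_apply := congrArg (toAffine hm · 0) h
  simp only [toAffine_latticeElement_apply_zero, Prod.mk.injEq] at h_apply
  obtain ⟨h_first, h_second, h_third⟩ := h_apply
  obtain rfl := h_double h_third
  obtain rfl := h_double (sub_right_injective h_second)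
  have hk : k = k' :=
    Fin.ext (eq_of_natCast_mul_eq (d := 8) (by decide) k.isLt k'.isLt
      (by exact_mod_cast add_left_cancel h_first))
  rw [hk]

theorem le_card_presentedGroup (m : ℕ) [Finite (PresentedGroup (rels m))] :
    768 * m ^ 3 ≤ Nat.card (PresentedGroup (rels m)) := by
  have h_ker : Nat.card (Fin (4 * m) × Fin (4 * m) × Fin m) ≤ Nat.card (toPointGroup m).ker :=
    Nat.card_le_card_of_injective (fun p => ⟨_, latticeElement_mem_ker m p.1 p.2.1 p.2.2⟩)
      fun _ _ h => latticeElement_injective m (congrArg Subtype.val h)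
  rw [Nat.card_prod, Nat.card_prod, Nat.card_fin, Nat.card_fin] at h_ker
  rw [card_eq_card_ker_toPointGroup_mul]
  linarith

end Affine

section Orders

theorem orderOf_g_zero (m : ℕ) : orderOf (g m 0) = 2 := by
  refine orderOf_eq_of_map_pow_ne_one (toPointGroup m) two_pos (crystalRelations_g m).aa ?_
  rw [CrystalRelations.hom_g_zero]
  decide

theorem orderOf_g_one (m : ℕ) : orderOf (g m 1) = 2 := by
  refine orderOf_eq_of_map_pow_ne_one (toPointGroup m) two_pos (crystalRelations_g m).bb ?_
  rw [CrystalRelations.hom_g_one]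
  decide

theorem orderOf_g_two (m : ℕ) : orderOf (g m 2) = 2 := by
  refine orderOf_eq_of_map_pow_ne_one (toPointGroup m) two_pos (crystalRelations_g m).cc ?_
  rw [CrystalRelations.hom_g_two]
  decide

theorem orderOf_g_zero_mul_g_two (m : ℕ) : orderOf (g m 0 * g m 2) = 2 := by
  refine orderOf_eq_of_map_pow_ne_one (toPointGroup m) two_pos (crystalRelations_g m).ac ?_
  rw [map_mul, CrystalRelations.hom_g_zero, CrystalRelations.hom_g_two]
  decide

theorem orderOf_g_zero_mul_g_one (m : ℕ) : orderOf (g m 0 * g m 1) = 6 := by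
  refine orderOf_eq_of_map_pow_ne_one (toPointGroup m) (by decide) (crystalRelations_g m).ab ?_
  rw [map_mul, CrystalRelations.hom_g_zero, CrystalRelations.hom_g_one]
  decide

theorem orderOf_g_one_mul_g_two (m : ℕ) : orderOf (g m 1 * g m 2) = 6 := by
  refine orderOf_eq_of_map_pow_ne_one (toPointGroup m) (by decide) (crystalRelations_g m).bc ?_
  rw [map_mul, CrystalRelations.hom_g_one, CrystalRelations.hom_g_two]
  decide

end Orders

section StringCGroup

/-- The action of `I_m` on affine three-space over `ZMod 4`, an action on only 64 points. -/
abbrev toAffineZMod (m : ℕ) : PresentedGroup (rels m) →* Equiv.Perm (ZMod 4 × ZMod 4 × ZMod 4) :=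
  toAffine (by rw [show (8 : ZMod 4) = 0 from rfl, mul_zero])

theorem closure_g_zero_one_inf_closure_g_zero_two_le (m : ℕ) :
    Subgroup.closure {g m 0, g m 1} ⊓ Subgroup.closure {g m 0, g m 2} ≤
      Subgroup.zpowers (g m 0) := by
  have h := crystalRelations_g m
  refine closure_pair_inf_closure_pair_le (toAffineZMod m) h.aa h.bb h.cc (by decide) two_pos h.ab
    h.ac ?_
  simp only [CrystalRelations.hom_g_zero, CrystalRelations.hom_g_one, CrystalRelations.hom_g_two]
  decide +kernel

theorem closure_g_one_zero_inf_closure_g_one_two_le (m : ℕ) :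
    Subgroup.closure {g m 1, g m 0} ⊓ Subgroup.closure {g m 1, g m 2} ≤
      Subgroup.zpowers (g m 1) := by
  have h := crystalRelations_g m
  have h_ba : (g m 1 * g m 0) ^ 6 = 1 := by
    rw [← h.b_inv, ← h.a_inv, ← mul_inv_rev, inv_pow, h.ab, inv_one]
  refine closure_pair_inf_closure_pair_le (toAffineZMod m) h.bb h.aa h.cc (by decide) (by decide)
    h_ba h.bc ?_
  simp only [CrystalRelations.hom_g_zero, CrystalRelations.hom_g_one, CrystalRelations.hom_g_two]
  decide +kernel

theorem closure_g_two_one_inf_closure_g_two_zero_le (m : ℕ) :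
    Subgroup.closure {g m 2, g m 1} ⊓ Subgroup.closure {g m 2, g m 0} ≤
      Subgroup.zpowers (g m 2) := by
  have h := crystalRelations_g m
  have h_cb : (g m 2 * g m 1) ^ 6 = 1 := by
    rw [← h.c_inv, ← h.b_inv, ← mul_inv_rev, inv_pow, h.bc, inv_one]
  refine closure_pair_inf_closure_pair_le (toAffineZMod m) h.cc h.bb h.aa (by decide) two_pos
    h_cb (h.a_mul_c ▸ h.ac) ?_
  simp only [CrystalRelations.hom_g_zero, CrystalRelations.hom_g_one, CrystalRelations.hom_g_two]
  decide +kernel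

theorem interProp_g (m : ℕ) : InterProp ![g m 0, g m 1, g m 2] := by
  have h_ne {x y : PresentedGroup (rels m)} (hx : x ^ 2 = 1) (hxy : orderOf (x * y) ≠ 1) : x ≠ y :=
    fun h => hxy (by rw [← h, ← sq, hx, orderOf_one])
  have h := crystalRelations_g m
  have h₀₁ := zpowers_inf_zpowers_eq_bot (orderOf_g_zero m) (orderOf_g_one m)
    (h_ne h.aa (by simp [orderOf_g_zero_mul_g_one]))
  have h₀₂ := zpowers_inf_zpowers_eq_bot (orderOf_g_zero m) (orderOf_g_two m)
    (h_ne h.aa (by simp [orderOf_g_zero_mul_g_two]))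
  have h₁₂ := zpowers_inf_zpowers_eq_bot (orderOf_g_one m) (orderOf_g_two m)
    (h_ne h.bb (by simp [orderOf_g_one_mul_g_two]))
  have h₀ := closure_g_zero_one_inf_closure_g_zero_two_le m
  have h₁ := closure_g_one_zero_inf_closure_g_one_two_le m
  have h₂ := closure_g_two_one_inf_closure_g_two_zero_le m
  refine interProp_of_closure_pair_inf_le (fun i j hij => ?_) fun i j k hij hik hjk => ?_
  · fin_cases i <;> fin_cases j <;>
      first | exact (hij rfl).elim | assumption | rw [inf_comm]; assumption
  · fin_cases i <;> fin_cases j <;> fin_cases k <;>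
      first
        | exact (hij rfl).elim | exact (hik rfl).elim | exact (hjk rfl).elim | assumption
        | rw [inf_comm]; assumption

end StringCGroup

/-- Theorem 5.1, family `I_m`: a solvable string C-group of type `{6,6}`
of order `768 m^3`. -/
theorem stmt_14 (m : ℕ) (hm : 0 < m) :
    Nat.card (PresentedGroup (rels m)) = 768 * m ^ 3 ∧
    IsSolvable (PresentedGroup (rels m)) ∧
    orderOf (g m 0) = 2 ∧ orderOf (g m 1) = 2 ∧ orderOf (g m 2) = 2 ∧
    orderOf (g m 0 * g m 2) = 2 ∧
    orderOf (g m 0 * g m 1) = 6 ∧ orderOf (g m 1 * g m 2) = 6 ∧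
    InterProp ![g m 0, g m 1, g m 2] := by
  obtain ⟨_, _, h_card_le⟩ :=
    (crystalRelations_g m).isSolvableOfCardLE_top (closure_g m) hm (diagonal_g_pow m)
  have : Finite (PresentedGroup (rels m)) := .of_equiv _ Subgroup.topEquiv.toEquiv
  rw [Subgroup.card_top] at h_card_le
  exact ⟨h_card_le.antisymm (le_card_presentedGroup m),
    Group.isSolvable_of_surjective (f := (⊤ : Subgroup (PresentedGroup (rels m))).subtype)
      Subgroup.topEquiv.surjective,
    orderOf_g_zero m, orderOf_g_one m, orderOf_g_two m, orderOf_g_zero_mul_g_two m,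
    orderOf_g_zero_mul_g_one m, orderOf_g_one_mul_g_two m, interProp_g m⟩

end Stmt14
end
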